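/- arXiv:1304.2649 — 2 statements merged into one kernel-verified Lean document; each statement's English description precedes it below -/
import Mathlib

section
/- Let K be a field equipped with two commuting ring endomorphisms φ and σ, set k := K^φ = {a ∈ K | φ(a) = a} (a subfield stable under σ), and assume k is σ-closed: for every commutative k-algebra B equipped with a ring endomorphism σ_B satisfying σ_B(algebraMap k B c) = algebraMap k B (σ(c)) for all c ∈ k, which is an integral domain with σ_B injective and which is finitely σ-generated over k (B is generated as a k-algebra by the σ_B-orbits of a finite set), there exists a k-algebra homomorphism B → k commuting with the σ's. Let R be a σ-PV ring over K for some equation φ(y) = A y with A ∈ GL_n(K). Then R has no new Φ-constants: every r ∈ R with Φ(r) = r lies in the image of k under the algebra map K → R. -/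
/-- A `φ`-ring `R` is `φ`-simple if the zero ideal and the whole ring are its only
`φ`-ideals (ideals `I` with `φ(I) ⊆ I`). -/
def DiffSimple {R : Type*} [CommRing R] (φ : R →+* R) : Prop :=
  (⊥ : Ideal R) ≠ ⊤ ∧ ∀ I : Ideal R, (∀ x ∈ I, φ x ∈ I) → I = ⊥ ∨ I = ⊤

/-- An ideal `p` of a ring with endomorphism `σ` is `σ`-pseudo prime if
`p = q ∩ σ⁻¹(q) ∩ … ∩ σ^{-(d-1)}(q)` for some `d ≥ 1` and some `σ^d`-prime ideal `q`. -/
def PseudoPrime {R : Type*} [CommRing R] (σ : R →+* R) (p : Ideal R) : Prop :=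
  ∃ d : ℕ, 1 ≤ d ∧ ∃ q : Ideal R, q.IsPrime ∧ Ideal.comap (σ ^ d) q = q ∧
    p = ⨅ i ∈ Finset.range d, Ideal.comap (σ ^ i) q

/-- A ring with endomorphism `φ` is a `φ`-pseudo domain if its zero ideal is
`φ`-pseudo prime. -/
def PseudoDomain {R : Type*} [CommRing R] (φ : R →+* R) : Prop :=
  PseudoPrime φ (⊥ : Ideal R)

/-- The subfield of `φ`-constants of a field `K` with endomorphism `φ`. -/
def constSubfield (K : Type*) [Field K] (φ : K →+* K) : Subfield K where
  carrier := {a : K | φ a = a}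
  mul_mem' := by intro a b ha hb; simp only [Set.mem_setOf_eq, map_mul] at *; rw [ha, hb]
  one_mem' := by simp
  add_mem' := by intro a b ha hb; simp only [Set.mem_setOf_eq, map_add] at *; rw [ha, hb]
  zero_mem' := by simp
  neg_mem' := by intro a ha; simp only [Set.mem_setOf_eq, map_neg] at *; rw [ha]
  inv_mem' := by intro a ha; simp only [Set.mem_setOf_eq, map_inv₀] at *; rw [ha]

theorem mem_constSubfield {K : Type*} [Field K] (φ : K →+* K) (a : K) :
    a ∈ constSubfield K φ ↔ φ a = a := Iff.rfl

/-- The restriction of `σ` to the subfield of `φ`-constants, for commuting `φ`, `σ`. -/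
def sigmaRes {K : Type*} [Field K] (φ σ : K →+* K)
    (hcomm : ∀ a : K, φ (σ a) = σ (φ a)) :
    ↥(constSubfield K φ) →+* ↥(constSubfield K φ) where
  toFun a := ⟨σ ↑a, (hcomm ↑a).trans (congrArg σ a.2)⟩
  map_one' := by ext; simp
  map_mul' a b := by ext; simp
  map_zero' := by ext; simp
  map_add' a b := by ext; simp

section

open Module MvPolynomial

namespace DiffSimple

variable {R : Type*} [CommRing R] {Φ : R →+* R}

theorem nontrivial (h : DiffSimple Φ) : Nontrivial R := by
  by_contra hn
  rw [not_nontrivial_iff_subsingleton] at hn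
  exact h.1 (Subsingleton.elim _ _)

theorem isUnit_of_fixed (h : DiffSimple Φ) {c : R} (hc : Φ c = c) (h0 : c ≠ 0) : IsUnit c := by
  rcases h.2 (Ideal.span {c}) (fun x hx => by
    obtain ⟨a, rfl⟩ := Ideal.mem_span_singleton'.1 hx
    rw [map_mul, hc]
    exact Ideal.mul_mem_left _ _ (Ideal.mem_span_singleton_self c)) with hI | hI
  · exact absurd (Ideal.span_singleton_eq_bot.1 hI) h0
  · exact Ideal.span_singleton_eq_top.1 hI

/-- Submodules of a free module which are stable under a semilinear map fixing a basis are
spanned by fixed vectors. -/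
theorem mem_span_fixed_support (h : DiffSimple Φ) {M κ : Type*} [AddCommGroup M] [Module R M]
    (b : Basis κ R M) (f : M → M) (hf : ∀ x i, b.repr (f x) i = Φ (b.repr x i))
    (N : Submodule R M) (hN : ∀ x ∈ N, f x ∈ N) (n : ℕ) :
    ∀ x ∈ N, (b.repr x).support.card = n →
      x ∈ Submodule.span R {y | (y ∈ N ∧ f y = y) ∧ (b.repr y).support ⊆ (b.repr x).support} := by
  classical
  induction n using Nat.strong_induction_on with
  | _ n ih =>
  intro x hx hn
  have f0 : ∀ y, f y = y ↔ ∀ i, Φ (b.repr y i) = b.repr y i := fun y => by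
    rw [← b.repr.injective.eq_iff, Finsupp.ext_iff]
    simp only [hf]
  by_cases hx0 : x = 0
  · simp [hx0]
  by_cases hz : ∃ z ∈ N, z ≠ 0 ∧ (b.repr z).support ⊂ (b.repr x).support
  · obtain ⟨z, hzN, hz0, hzs⟩ := hz
    have := ih _ (hn ▸ Finset.card_lt_card hzs) z hzN rfl
    obtain ⟨y, ⟨⟨hyN, hyf⟩, hys⟩, hy0⟩ : ∃ y ∈ {y | (y ∈ N ∧ f y = y) ∧
        (b.repr y).support ⊆ (b.repr z).support}, y ≠ 0 := by
      by_contra! hcon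
      exact hz0 (by simpa [Submodule.span_eq_bot.2 hcon] using this)
    have hyx : (b.repr y).support ⊂ (b.repr x).support := lt_of_le_of_lt hys hzs
    obtain ⟨i, hi⟩ : ∃ i, b.repr y i ≠ 0 := by
      by_contra! hcon
      exact hy0 (b.repr.injective (by ext i; simpa using hcon i))
    obtain ⟨u, hu⟩ := (h.isUnit_of_fixed ((f0 y).1 hyf i) hi).exists_left_inv
    set x' := x - (b.repr x i * u) • y with hx'
    have hx'N : x' ∈ N := N.sub_mem hx (N.smul_mem _ hyN)
    have hx's : (b.repr x').support ⊂ (b.repr x).support := by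
      rw [Finset.ssubset_iff_of_subset]
      · exact ⟨i, hyx.1 (Finsupp.mem_support_iff.2 hi), by simp [hx', mul_assoc, hu]⟩
      · intro j hj
        by_contra hjx
        have h1 : b.repr x j = 0 := Finsupp.notMem_support_iff.1 hjx
        have h2 : b.repr y j = 0 := Finsupp.notMem_support_iff.1 fun h => hjx (hyx.1 h)
        exact Finsupp.mem_support_iff.1 hj (by simp [hx', h1, h2])
    have h3 := ih _ (hn ▸ Finset.card_lt_card hx's) x' hx'N rfl
    have h4 : x = x' + (b.repr x i * u) • y := by simp [hx']
    rw [h4]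
    refine Submodule.add_mem _ (Submodule.span_mono ?_ h3) (Submodule.smul_mem _ _
      (Submodule.subset_span ⟨⟨hyN, hyf⟩, ?_⟩))
    · rintro y' ⟨hy', hs⟩
      exact ⟨hy', by rw [← h4]; exact hs.trans hx's.1⟩
    · rw [← h4]; exact hyx.1
  · push Not at hz
    obtain ⟨i, hi⟩ : ∃ i, b.repr x i ≠ 0 := by
      by_contra! hcon
      exact hx0 (b.repr.injective (by ext i; simpa using hcon i))
    let I : Ideal R :=
      (N ⊓ (Finsupp.supported R R ((b.repr x).support : Set κ)).comap b.repr.toLinearMap).map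
        (Finsupp.lapply i ∘ₗ b.repr.toLinearMap)
    have hI : ∀ r, r ∈ I ↔ ∃ y ∈ N, (b.repr y).support ⊆ (b.repr x).support ∧ b.repr y i = r := by
      intro r
      simp [I, Submodule.mem_map, Finsupp.mem_supported, and_assoc]
    have htop : I = ⊤ := by
      rcases h.2 I (fun r hr => by
        obtain ⟨y, hyN, hys, rfl⟩ := (hI r).1 hr
        refine (hI _).2 ⟨f y, hN y hyN, ?_, hf y i⟩
        intro j hj
        apply hys
        rw [Finsupp.mem_support_iff] at hj ⊢
        contrapose! hj
        rw [hf, hj, map_zero]) with h1 | h1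
      · have : b.repr x i ∈ I := (hI _).2 ⟨x, hx, subset_rfl, rfl⟩
        rw [h1] at this
        exact absurd this hi
      · exact h1
    obtain ⟨y, hyN, hys, hyi⟩ := (hI 1).1 (htop ▸ Submodule.mem_top)
    have key : ∀ z ∈ N, (b.repr z).support ⊆ (b.repr x).support → b.repr z i = 0 → z = 0 := by
      intro z hzN hzs hzi
      by_contra hz0
      refine hz z hzN hz0 ((Finset.ssubset_iff_of_subset hzs).2
        ⟨i, Finsupp.mem_support_iff.2 hi, by simpa using hzi⟩)
    have hyf : f y = y := by
      rw [← sub_eq_zero]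
      refine key _ (N.sub_mem (hN y hyN) hyN) ?_ (by simp [hf, hyi])
      intro j hj
      apply hys
      rw [Finsupp.mem_support_iff] at hj ⊢
      contrapose! hj
      simp [hf, hj]
    have hxy : x = b.repr x i • y := by
      rw [← sub_eq_zero]
      refine key _ (N.sub_mem hx (N.smul_mem _ hyN)) ?_ (by simp [hyi])
      intro j hj
      by_contra hjx
      have h1 : b.repr x j = 0 := Finsupp.notMem_support_iff.1 hjx
      have h2 : b.repr y j = 0 := Finsupp.notMem_support_iff.1 fun h => hjx (hys h)
      exact Finsupp.mem_support_iff.1 hj (by simp [h1, h2])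
    rw [hxy]
    refine Submodule.smul_mem _ _ (Submodule.subset_span ⟨⟨hyN, hyf⟩, ?_⟩)
    rw [← hxy]; exact hys

theorem le_span_fixed (h : DiffSimple Φ) {M κ : Type*} [AddCommGroup M] [Module R M]
    (b : Basis κ R M) (f : M → M) (hf : ∀ x i, b.repr (f x) i = Φ (b.repr x i))
    (N : Submodule R M) (hN : ∀ x ∈ N, f x ∈ N) :
    N ≤ Submodule.span R {y | y ∈ N ∧ f y = y} := fun x hx =>
  Submodule.span_mono (fun _ hy => hy.1) (h.mem_span_fixed_support b f hf N hN _ x hx rfl)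

/-- Linear relations between constants are spanned by relations with constant coefficients. -/
theorem relation_mem_span_fixed (h : DiffSimple Φ) {S κ : Type*} [CommRing S] [Algebra R S]
    (F : S →+* S) (hF : ∀ r, F (algebraMap R S r) = algebraMap R S (Φ r))
    (c : κ → S) (hc : ∀ i, F (c i) = c i) (x : κ →₀ R)
    (hx : x.sum (fun i r => algebraMap R S r * c i) = 0) :
    x ∈ Submodule.span R {y : κ →₀ R | y.sum (fun i r => algebraMap R S r * c i) = 0 ∧
      ∀ i, Φ (y i) = y i} := by
  let N : Submodule R (κ →₀ R) := LinearMap.ker (Finsupp.linearCombination R c)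
  have hN : ∀ y, y ∈ N ↔ y.sum (fun i r => algebraMap R S r * c i) = 0 := fun y => by
    simp [N, LinearMap.mem_ker, Finsupp.linearCombination_apply, Algebra.smul_def]
  refine Submodule.span_mono ?_ (h.le_span_fixed Finsupp.basisSingleOne
    (Finsupp.mapRange Φ (map_zero Φ)) (by simp [Finsupp.basisSingleOne]) N ?_ ((hN x).2 hx))
  · rintro y ⟨hy, hf⟩
    exact ⟨(hN y).1 hy, fun i => by simpa using DFunLike.congr_fun hf i⟩
  · intro y hy
    rw [hN] at hy ⊢
    rw [Finsupp.sum_mapRange_index (by simp)]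
    have := congrArg F hy
    rw [map_zero, map_finsuppSum] at this
    simpa [hF, hc] using this

end DiffSimple

/-- Maximal elements among the proper ideals stable under `τ`. -/
def IsDiffMaximal {A : Type*} [CommRing A] (τ : A →+* A) (M : Ideal A) : Prop :=
  M ≠ ⊤ ∧ (∀ x ∈ M, τ x ∈ M) ∧ ∀ I : Ideal A, M ≤ I → (∀ x ∈ I, τ x ∈ I) → I = M ∨ I = ⊤

theorem exists_le_isDiffMaximal {A : Type*} [CommRing A] (τ : A →+* A) (I : Ideal A) (hI : I ≠ ⊤)
    (hst : ∀ x ∈ I, τ x ∈ I) : ∃ M, I ≤ M ∧ IsDiffMaximal τ M := by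
  obtain ⟨M, hIM, hM⟩ := zorn_le_nonempty₀ {J : Ideal A | J ≠ ⊤ ∧ ∀ x ∈ J, τ x ∈ J} (by
    intro c hc hchain J hJ
    have hdir : DirectedOn (· ≤ ·) c := hchain.directedOn
    have hne : c.Nonempty := ⟨J, hJ⟩
    refine ⟨sSup c, ⟨?_, ?_⟩, fun z hz => le_sSup hz⟩
    · rw [Ne, Ideal.eq_top_iff_one, Submodule.mem_sSup_of_directed hne hdir]
      rintro ⟨L, hL, h1⟩
      exact (hc hL).1 ((Ideal.eq_top_iff_one _).2 h1)
    · intro x hx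
      rw [Submodule.mem_sSup_of_directed hne hdir] at hx ⊢
      obtain ⟨L, hL, h1⟩ := hx
      exact ⟨L, hL, (hc hL).2 x h1⟩) I ⟨hI, hst⟩
  refine ⟨M, hIM, hM.prop.1, hM.prop.2, fun J hMJ hJ => ?_⟩
  by_cases h : J = ⊤
  · exact Or.inr h
  · exact Or.inl (le_antisymm (hM.le_of_ge ⟨h, hJ⟩ hMJ) hMJ)

theorem IsDiffMaximal.comap_eq {A B : Type*} [CommRing A] [CommRing B] {τ : A →+* A}
    {τ' : B →+* B} {f : A →+* B} (hf : ∀ a, f (τ a) = τ' (f a)) {M : Ideal A}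
    (hM : IsDiffMaximal τ M) {M' : Ideal B} (hM' : IsDiffMaximal τ' M')
    (h : ∀ x ∈ M, f x ∈ M') : Ideal.comap f M' = M := by
  refine (hM.2.2 (Ideal.comap f M') h fun x hx => ?_).resolve_right (Ideal.comap_ne_top _ hM'.1)
  rw [Ideal.mem_comap, hf]
  exact hM'.2.1 _ hx

theorem DiffSimple.isDiffMaximal_ker {A B : Type*} [CommRing A] [CommRing B] {τ : A →+* A}
    {τ' : B →+* B} {f : A →+* B} (hf : ∀ a, f (τ a) = τ' (f a)) (hsurj : Function.Surjective f)
    (h : DiffSimple τ') : IsDiffMaximal τ (RingHom.ker f) := by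
  have := h.nontrivial
  refine ⟨RingHom.ker_ne_top f, fun x hx => ?_, fun I hI hst => ?_⟩
  · rw [RingHom.mem_ker] at hx ⊢
    rw [hf, hx, map_zero]
  · have hc : Ideal.comap f (I.map f) = I := by
      rw [Ideal.comap_map_of_surjective f hsurj, sup_eq_left]
      exact hI
    rcases h.2 (I.map f) (fun x hx => by
      obtain ⟨a, ha, rfl⟩ := (Ideal.mem_map_iff_of_surjective f hsurj).1 hx
      rw [← hf]
      exact Ideal.mem_map_of_mem f (hst a ha)) with h1 | h1
    · left; rw [← hc, h1]; rfl
    · right; rw [← hc, h1]; rfl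

theorem IsDiffMaximal.diffSimple {A B : Type*} [CommRing A] [CommRing B] {τ : A →+* A}
    {τ' : B →+* B} {f : A →+* B} (hf : ∀ a, f (τ a) = τ' (f a)) (hsurj : Function.Surjective f)
    (h : IsDiffMaximal τ (RingHom.ker f)) : DiffSimple τ' := by
  refine ⟨fun hbot => h.1 ?_, fun I hst => ?_⟩
  · rw [Ideal.eq_top_iff_one, RingHom.mem_ker, ← Ideal.mem_bot, hbot]
    trivial
  · rcases h.2.2 (I.comap f) (fun x hx => by
      rw [RingHom.mem_ker] at hx; rw [Ideal.mem_comap, hx]; exact I.zero_mem) (fun x hx => by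
      rw [Ideal.mem_comap, hf]; exact hst _ hx) with h1 | h1
    · left
      rw [← Ideal.map_comap_of_surjective f hsurj I, h1, Ideal.map_eq_bot_iff_le_ker]
    · right
      rw [← Ideal.map_comap_of_surjective f hsurj I, h1, Ideal.map_top]

section Matrices

variable {ι m : Type*}

/-- The generic matrices over a polynomial ring. -/
noncomputable def genMat (ι m S : Type*) [CommRing S] (j : ι) : Matrix m m (MvPolynomial (ι × m × m) S) :=
  Matrix.of fun p q => X (j, p, q)

/-- Evaluation of polynomials in matrix entries. -/
noncomputable def evalMat {S B : Type*} [CommRing S] [CommRing B] (f : S →+* B)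
    (W : ι → Matrix m m B) : MvPolynomial (ι × m × m) S →+* B :=
  eval₂Hom f fun x => W x.1 x.2.1 x.2.2

variable {S B D : Type*} [CommRing S] [CommRing B] [CommRing D]

@[simp] theorem evalMat_C (f : S →+* B) (W : ι → Matrix m m B) (s : S) :
    evalMat f W (C s) = f s := by simp [evalMat]

@[simp] theorem evalMat_X (f : S →+* B) (W : ι → Matrix m m B) (x : ι × m × m) :
    evalMat f W (X x) = W x.1 x.2.1 x.2.2 := by simp [evalMat]

@[simp] theorem genMat_map_evalMat (f : S →+* B) (W : ι → Matrix m m B) (j : ι) :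
    (genMat ι m S j).map (evalMat f W) = W j := by
  ext p q; simp [genMat]

theorem ringHom_eq_evalMat (g : MvPolynomial (ι × m × m) S →+* B) :
    g = evalMat (g.comp C) fun j => (genMat ι m S j).map g :=
  MvPolynomial.ringHom_ext (by simp) (by simp [genMat])

theorem comp_evalMat (g : B →+* D) (f : S →+* B) (W : ι → Matrix m m B) :
    g.comp (evalMat f W) = evalMat (g.comp f) fun j => (W j).map g :=
  MvPolynomial.ringHom_ext (by simp) (by simp)

@[simp] theorem genMat_map_map (g : D →+* S) (j : ι) :
    (genMat ι m D j).map (MvPolynomial.map g) = genMat ι m S j := by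
  ext p q; simp [genMat]

variable [Fintype m]

/-- The endomorphism of a polynomial ring with `X_j ↦ A_j X_j`, acting on coefficients by `φ`. -/
noncomputable def twist {K : Type*} [CommRing K] (φ : K →+* K) (A : ι → Matrix m m K) :
    MvPolynomial (ι × m × m) K →+* MvPolynomial (ι × m × m) K :=
  evalMat (C.comp φ) fun j => (A j).map C * genMat ι m K j

theorem evalMat_twist {K : Type*} [CommRing K] (φ : K →+* K) (A : ι → Matrix m m K)
    (f : K →+* B) (F : B →+* B) (hF : ∀ a, F (f a) = f (φ a)) (U : ι → Matrix m m B)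
    (hU : ∀ j, (U j).map F = (A j).map f * U j) :
    (evalMat f U).comp (twist φ A) = F.comp (evalMat f U) := by
  rw [twist, comp_evalMat, comp_evalMat]
  congr 1
  · ext a; simp [hF]
  · funext j
    rw [Matrix.map_mul, genMat_map_evalMat, hU, Matrix.map_map]
    congr 2
    ext; simp

end Matrices

theorem MvPolynomial.exists_eval_eq_zero {V Ω : Type*} [Finite V] [Field Ω] [IsAlgClosed Ω]
    (I : Ideal (MvPolynomial V Ω)) (hI : I ≠ ⊤) : ∃ z : V → Ω, ∀ p ∈ I, eval z p = 0 := by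
  obtain ⟨M, hM, hIM⟩ := Ideal.exists_le_maximal I hI
  obtain ⟨z, hz⟩ := MvPolynomial.isMaximal_iff_eq_vanishingIdeal_singleton.1 hM
  refine ⟨z, fun p hp => ?_⟩
  have := hIM hp
  rw [hz] at this
  simpa [MvPolynomial.mem_vanishingIdeal_singleton_iff] using this

theorem RingHom.exists_amalgam.{v₁, v₂, v₃} {K : Type v₁} {T : Type v₂} {Q : Type v₃} [Field K] [CommRing T] [CommRing Q] [Nontrivial T]
    [Nontrivial Q] (f : K →+* T) (g : K →+* Q) :
    ∃ (W : Type (max v₂ v₃)) (_ : CommRing W) (_ : Nontrivial W) (l : T →+* W) (r : Q →+* W),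
      l.comp f = r.comp g := by
  let _ := f.toAlgebra
  let _ := g.toAlgebra
  have hr : Function.Injective (Algebra.TensorProduct.includeRight : Q →ₐ[K] TensorProduct K T Q) :=
    Algebra.TensorProduct.includeRight_injective f.injective
  refine ⟨TensorProduct K T Q, inferInstance, hr.nontrivial,
    Algebra.TensorProduct.includeLeftRingHom,
    (Algebra.TensorProduct.includeRight : Q →ₐ[K] TensorProduct K T Q).toRingHom, ?_⟩
  ext x
  exact ((Algebra.TensorProduct.includeRight : Q →ₐ[K] TensorProduct K T Q).commutes x).symm

theorem exists_zero_of_stable {K T Ω ι m : Type*} [Field K] [CommRing T] [Field Ω] [IsAlgClosed Ω]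
    [Algebra K T] [Algebra Ω T] [Finite ι] [Fintype m] [DecidableEq m] (φ : K →+* K)
    (F : T →+* T) (hF : ∀ a, F (algebraMap K T a) = algebraMap K T (φ a)) (hs : DiffSimple F)
    (hconst : ∀ t, F t = t → t ∈ (algebraMap Ω T).range)
    (A : ι → Matrix m m K) (U : ι → Matrix m m T) (hU : ∀ j, (U j).det = 1)
    (hFU : ∀ j, (U j).map F = (A j).map (algebraMap K T) * U j)
    (I : Ideal (MvPolynomial (ι × m × m) K)) (hI : I ≠ ⊤) (hst : ∀ p ∈ I, twist φ A p ∈ I) :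
    ∃ z : ι → Matrix m m Ω, ∀ p ∈ I,
      evalMat (algebraMap K T) (fun j => U j * (z j).map (algebraMap Ω T)) p = 0 := by
  have := hs.nontrivial
  let θ : MvPolynomial (ι × m × m) K →+* MvPolynomial (ι × m × m) T :=
    evalMat (C.comp (algebraMap K T)) fun j => (U j).map C * genMat ι m T j
  have hθ : (MvPolynomial.map F).comp θ = θ.comp (twist φ A) := by
    refine (evalMat_twist φ A _ _ (fun a => by simp [hF]) _ fun j => ?_).symm
    rw [Matrix.map_mul, Matrix.map_map, ← Matrix.mul_assoc, genMat_map_map]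
    congr 1
    have : (fun x => MvPolynomial.map F (C x)) = fun x => (C (σ := ι × m × m) (F x)) := by
      ext; simp
    change (U j).map (fun x => MvPolynomial.map F (C x)) = _
    rw [this]
    change ((U j).map F).map C = _
    rw [hFU, Matrix.map_mul, Matrix.map_map]
    rfl
  let a := I.map θ
  have ha : ∀ x ∈ a, MvPolynomial.map F x ∈ a := by
    have : a ≤ a.comap (MvPolynomial.map F) := by
      rw [Ideal.map_le_iff_le_comap]
      intro p hp
      rw [Ideal.mem_comap, Ideal.mem_comap, ← RingHom.comp_apply, hθ]
      exact Ideal.mem_map_of_mem θ (hst p hp)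
    exact this
  have hatop : a ≠ ⊤ := by
    intro htop
    let Q := MvPolynomial (ι × m × m) K ⧸ I
    have : Nontrivial Q := Ideal.Quotient.nontrivial_iff.2 hI
    obtain ⟨W, _, _, l, r, hlr⟩ := RingHom.exists_amalgam (algebraMap K T)
      ((Ideal.Quotient.mk I).comp C)
    let ψ : MvPolynomial (ι × m × m) T →+* W :=
      evalMat l fun j => ((U j).adjugate.map l) * ((genMat ι m K j).map (Ideal.Quotient.mk I)).map r
    have hψ : ψ.comp θ = r.comp (Ideal.Quotient.mk I) := by
      rw [ringHom_eq_evalMat (r.comp (Ideal.Quotient.mk I)), comp_evalMat ψ]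
      congr 1
      · rw [RingHom.comp_assoc, ← hlr]
        ext x
        change ψ (C (algebraMap K T x)) = l (algebraMap K T x)
        simp [ψ]
      · funext j
        rw [Matrix.map_mul, genMat_map_evalMat, Matrix.map_map]
        have : (ψ ∘ C : T → _) = l := by ext x; exact evalMat_C _ _ _
        rw [this, ← Matrix.mul_assoc, ← Matrix.map_mul, Matrix.mul_adjugate, hU, one_smul,
          Matrix.map_one _ (map_zero _) (map_one _), one_mul, Matrix.map_map]
        rfl
    have h1 : a ≤ RingHom.ker ψ := by
      rw [Ideal.map_le_iff_le_comap]
      intro p hp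
      rw [Ideal.mem_comap, RingHom.mem_ker, ← RingHom.comp_apply, hψ, RingHom.comp_apply,
        Ideal.Quotient.eq_zero_iff_mem.2 hp, map_zero]
    exact RingHom.ker_ne_top ψ (top_le_iff.1 (htop ▸ h1))
  let b := a.comap (MvPolynomial.map (algebraMap Ω T))
  obtain ⟨z, hz⟩ := MvPolynomial.exists_eval_eq_zero b (Ideal.comap_ne_top _ hatop)
  let Z : ι → Matrix m m Ω := fun j => Matrix.of fun p q => z (j, p, q)
  let ev : MvPolynomial (ι × m × m) T →+* T :=
    evalMat (RingHom.id T) fun j => (Z j).map (algebraMap Ω T)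
  have hev : ∀ x ∈ a, ev x = 0 := by
    have hle := hs.le_span_fixed (MvPolynomial.basisMonomials (ι × m × m) T) (MvPolynomial.map F)
      (fun x i => MvPolynomial.coeff_map F x i) (a.restrictScalars T) ha
    intro x hx
    refine Submodule.span_induction (p := fun x _ => ev x = 0) ?_ (map_zero _)
      (fun x y _ _ hx hy => by rw [map_add, hx, hy, add_zero])
      (fun t x _ hx => by rw [MvPolynomial.smul_eq_C_mul, map_mul, hx, mul_zero]) (hle hx)
    rintro y ⟨hy, hfix⟩
    obtain ⟨y, rfl⟩ : ∃ y', MvPolynomial.map (algebraMap Ω T) y' = y := by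
      rw [← Set.mem_range, MvPolynomial.mem_range_map_iff_coeffs_subset]
      intro c hc
      obtain ⟨i, -, rfl⟩ := MvPolynomial.mem_coeffs_iff.1 hc
      refine hconst _ ?_
      rw [← MvPolynomial.coeff_map, hfix]
    have h0 := hz y hy
    have : ev.comp (MvPolynomial.map (algebraMap Ω T)) =
        (algebraMap Ω T).comp (eval z) := by
      refine MvPolynomial.ringHom_ext (by simp [ev]) (by simp [ev, Z])
    rw [← RingHom.comp_apply, this, RingHom.comp_apply, h0, map_zero]
  refine ⟨Z, fun p hp => ?_⟩
  rw [← hev (θ p) (Ideal.mem_map_of_mem θ hp), ← RingHom.comp_apply, comp_evalMat]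
  congr 2
  · ext x; simp [ev]
  · funext j
    rw [Matrix.map_mul, genMat_map_evalMat, Matrix.map_map]
    congr 1
    ext; simp [ev]

theorem diffSimple_of_field {K : Type*} [Field K] (φ : K →+* K) : DiffSimple φ :=
  ⟨bot_ne_top, fun I _ => Ideal.eq_bot_or_top I⟩

theorem exists_ringHom_extension {k E Ω : Type*} [Field k] [Field E] [Field Ω] [Algebra k E]
    [Algebra.IsAlgebraic k E] [IsAlgClosed Ω] (h : k →+* Ω) :
    ∃ g : E →+* Ω, ∀ a, g (algebraMap k E a) = h a := by
  let _ := h.toAlgebra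
  exact ⟨(IsAlgClosed.lift : E →ₐ[k] Ω).toRingHom, (IsAlgClosed.lift : E →ₐ[k] Ω).commutes⟩

/-- A `σ`-field `k` is `σ`-closed if every finitely `σ`-generated `σ`-domain over `k` has a
`k`-rational `σ`-point. -/
def SigmaClosed {k : Type u} [Field k] (σ : k →+* k) : Prop :=
  ∀ (B : Type u) (_ : CommRing B) (_ : IsDomain B) (_ : Algebra k B) (σB : B →+* B),
    (∀ c : k, σB (algebraMap k B c) = algebraMap k B (σ c)) → Function.Injective σB →
    (∃ T : Finset B, Algebra.adjoin k {x : B | ∃ t ∈ T, ∃ m : ℕ, (⇑σB)^[m] t = x} = ⊤) →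
    ∃ g : B →ₐ[k] k, ∀ x : B, g (σB x) = σ (g x)

theorem map_mem_adjoin_orbits {k Ω : Type*} [CommRing k] [CommRing Ω] [Algebra k Ω] (σ : k →+* k)
    (τ : Ω →+* Ω) (hτ : ∀ c, τ (algebraMap k Ω c) = algebraMap k Ω (σ c)) (T : Set Ω) :
    ∀ x ∈ Algebra.adjoin k {x : Ω | ∃ t ∈ T, ∃ m : ℕ, (⇑τ)^[m] t = x},
      τ x ∈ Algebra.adjoin k {x : Ω | ∃ t ∈ T, ∃ m : ℕ, (⇑τ)^[m] t = x} := by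
  intro x hx
  induction hx using Algebra.adjoin_induction with
  | mem x hx =>
    obtain ⟨t, ht, m, rfl⟩ := hx
    exact Algebra.subset_adjoin ⟨t, ht, m + 1, Function.iterate_succ_apply' _ _ _⟩
  | algebraMap r => rw [hτ]; exact Subalgebra.algebraMap_mem _ _
  | add x y _ _ hx hy => rw [map_add]; exact add_mem hx hy
  | mul x y _ _ hx hy => rw [map_mul]; exact mul_mem hx hy

theorem SigmaClosed.exists_point {k : Type u} [Field k] {σ : k →+* k} (h : SigmaClosed σ)
    {Ω : Type u} [Field Ω] [Algebra k Ω] (τ : Ω →+* Ω)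
    (hτ : ∀ c, τ (algebraMap k Ω c) = algebraMap k Ω (σ c)) (T : Finset Ω) :
    ∃ (B : Subalgebra k Ω) (hB : ∀ x ∈ B, τ x ∈ B) (g : B →ₐ[k] k), (T : Set Ω) ⊆ B ∧
      ∀ x : B, g ⟨τ x, hB x x.2⟩ = σ (g x) := by
  classical
  let O : Set Ω := {x : Ω | ∃ t ∈ (T : Set Ω), ∃ m : ℕ, (⇑τ)^[m] t = x}
  let B := Algebra.adjoin k O
  have hB : ∀ x ∈ B, τ x ∈ B := map_mem_adjoin_orbits σ τ hτ T
  have hTB : (T : Set Ω) ⊆ B := fun t ht => Algebra.subset_adjoin ⟨t, ht, 0, rfl⟩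
  let τB : B →+* B := τ.restrict B B hB
  have hit : ∀ (m : ℕ) (x : B), ((⇑τB)^[m] x : Ω) = (⇑τ)^[m] x := by
    intro m
    induction m with
    | zero => intro x; rfl
    | succ m ih => intro x; rw [Function.iterate_succ_apply, Function.iterate_succ_apply, ih]; rfl
  obtain ⟨g, hg⟩ := h B inferInstance inferInstance inferInstance τB
    (fun c => Subtype.ext (hτ c)) (fun x y hxy => Subtype.ext (τ.injective (congrArg Subtype.val hxy)))
    ⟨T.attach.image fun t => ⟨t.1, hTB t.2⟩, by
      rw [eq_top_iff]
      rintro ⟨x, hx⟩ -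
      have hval : B.val '' {x : B | ∃ t ∈ T.attach.image fun t => (⟨t.1, hTB t.2⟩ : B),
          ∃ m : ℕ, (⇑τB)^[m] t = x} = O := by
        ext y
        constructor
        · rintro ⟨x, ⟨t, ht, m, rfl⟩, rfl⟩
          obtain ⟨t', -, rfl⟩ := Finset.mem_image.1 ht
          exact ⟨t', t'.2, m, (hit m ⟨t', hTB t'.2⟩).symm⟩
        · rintro ⟨t, ht, m, rfl⟩
          exact ⟨(⇑τB)^[m] ⟨t, hTB ht⟩, ⟨_, Finset.mem_image.2 ⟨⟨t, ht⟩, Finset.mem_attach _ _, rfl⟩,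
            m, rfl⟩, hit m _⟩
      have h1 : x ∈ (Algebra.adjoin k {x : B | ∃ t ∈ T.attach.image fun t =>
          (⟨t.1, hTB t.2⟩ : B), ∃ m : ℕ, (⇑τB)^[m] t = x}).map B.val := by
        rw [AlgHom.map_adjoin, hval]
        exact hx
      obtain ⟨y, hy, hyx⟩ := h1
      have : y = ⟨x, hx⟩ := Subtype.ext hyx
      exact this ▸ hy⟩
  exact ⟨B, hB, g, hTB, hg⟩

theorem SigmaClosed.isAlgClosed {k : Type u} [Field k] {σ : k →+* k} (h : SigmaClosed σ) :
    IsAlgClosed k := by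
  obtain ⟨τ, hτ⟩ := exists_ringHom_extension (E := AlgebraicClosure k)
    ((algebraMap k (AlgebraicClosure k)).comp σ)
  refine IsAlgClosed.of_exists_root _ fun p _ hp => ?_
  obtain ⟨x, hx⟩ := IsAlgClosed.exists_aeval_eq_zero (AlgebraicClosure k) p
    (Polynomial.degree_pos_of_irreducible hp).ne'
  obtain ⟨B, hB, g, hTB, -⟩ := h.exists_point τ hτ {x}
  have hxB : x ∈ B := hTB (by simp)
  refine ⟨g ⟨x, hxB⟩, ?_⟩
  have h1 : Polynomial.aeval (⟨x, hxB⟩ : B) p = 0 :=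
    Subtype.ext (by simpa [Polynomial.aeval_def, Polynomial.eval₂_eq_sum, Polynomial.sum] using hx)
  have h2 := congrArg g h1
  rw [map_zero, ← Polynomial.aeval_algHom_apply] at h2
  simpa [Polynomial.aeval_def] using h2

theorem PrimeSpectrum.exists_basicOpen_of_isConstructible {A : Type*} [CommRing A] [IsDomain A]
    {s : Set (PrimeSpectrum A)} (hs : Topology.IsConstructible s) (hbot : (⊥ : PrimeSpectrum A) ∈ s) :
    ∃ f : A, f ≠ 0 ∧ ∀ x : PrimeSpectrum A, f ∉ x.asIdeal → x ∈ s := by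
  obtain ⟨D, rfl⟩ := PrimeSpectrum.exists_constructibleSetData_iff.2 hs
  simp only [ConstructibleSetData.toSet, BasicConstructibleSetData.toSet, Set.mem_iUnion,
    Set.mem_sdiff, PrimeSpectrum.mem_zeroLocus, Set.singleton_subset_iff] at hbot ⊢
  obtain ⟨C, hC, hg, hf⟩ := hbot
  refine ⟨C.f, by simpa using hf, fun x hx => ⟨C, hC, fun a ha => ?_, hx⟩⟩
  have : a = 0 := by simpa using hg ha
  rw [this]
  exact x.asIdeal.zero_mem

theorem DiffSimple.fixed_mem_of_finiteType {K P : Type*} [Field K] [CommRing P] [Algebra K P]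
    (φ : K →+* K) [IsAlgClosed (constSubfield K φ)] [Algebra.FiniteType K P] {F : P →+* P}
    (hF : ∀ a, F (algebraMap K P a) = algebraMap K P (φ a)) (hs : DiffSimple F) (c : P)
    (hc : F c = c) : ∃ a : K, φ a = a ∧ algebraMap K P a = c := by
  by_contra! hcon
  have := hs.nontrivial
  have hunit : ∀ a : constSubfield K φ, IsUnit (c - algebraMap K P a) := by
    intro a
    refine hs.isUnit_of_fixed (by rw [map_sub, hc, hF, a.2]) ?_
    rw [sub_ne_zero]
    exact (hcon a a.2).symm
  have hk : ∀ q : Polynomial (constSubfield K φ), q ≠ 0 → IsUnit (Polynomial.aeval c q) := by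
    intro q hq
    have hsplit := IsAlgClosed.splits q
    rw [hsplit.eq_prod_roots, map_mul, Polynomial.aeval_C]
    refine IsUnit.mul ((IsUnit.mk0 _ (Polynomial.leadingCoeff_ne_zero.2 hq)).map _) ?_
    rw [map_multiset_prod]
    refine Multiset.prod_induction IsUnit _ (fun _ _ => IsUnit.mul) isUnit_one ?_
    intro x hx
    simp only [Multiset.map_map, Multiset.mem_map] at hx
    obtain ⟨a, -, rfl⟩ := hx
    have h1 : algebraMap (constSubfield K φ) P a = algebraMap K P a := rfl
    simpa [h1] using hunit a
  have hinj : Function.Injective (Polynomial.aeval (R := K) c) := by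
    rw [injective_iff_map_eq_zero]
    intro p hp
    by_contra hp0
    let x : ℕ →₀ K := Finsupp.onFinset p.support p.coeff (by simp)
    have hx : x.sum (fun i r => algebraMap K P r * c ^ i) = 0 := by
      rw [← hp, Finsupp.onFinset_sum _ (by simp), Polynomial.aeval_def, Polynomial.eval₂_eq_sum]
      rfl
    have hx0 : x ≠ 0 := fun h0 => hp0 (by ext i; exact DFunLike.congr_fun h0 i)
    have := (diffSimple_of_field φ).relation_mem_span_fixed F hF (fun i => c ^ i)
      (fun i => by rw [map_pow, hc]) x hx
    obtain ⟨y, ⟨hy, hfix⟩, hy0⟩ : ∃ y ∈ {y : ℕ →₀ K | y.sum (fun i r => algebraMap K P r * c ^ i) = 0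
        ∧ ∀ i, φ (y i) = y i}, y ≠ 0 := by
      by_contra! hc'
      exact hx0 (by simpa [Submodule.span_eq_bot.2 hc'] using this)
    let q : Polynomial (constSubfield K φ) :=
      ∑ i ∈ y.support, Polynomial.monomial i ⟨y i, hfix i⟩
    have hqc : ∀ i, (q.coeff i : K) = y i := by
      intro i
      simp only [q, Polynomial.finsetSum_coeff, Polynomial.coeff_monomial]
      rw [Finset.sum_ite_eq']
      split_ifs with h
      · rfl
      · exact (Finsupp.notMem_support_iff.1 h).symm
    have hq0 : q ≠ 0 := by
      rintro h0
      apply hy0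
      ext i
      rw [← hqc, h0]
      simp
    have hqz : Polynomial.aeval c q = 0 := by
      rw [map_sum, ← hy, Finsupp.sum]
      refine Finset.sum_congr rfl fun i _ => ?_
      rw [Polynomial.aeval_monomial]
      rfl
    exact (hk q hq0).ne_zero hqz
  have hfin : (Polynomial.aeval (R := K) c).toRingHom.FinitePresentation := by
    refine RingHom.FinitePresentation.of_finiteType.1 ?_
    refine RingHom.FiniteType.of_comp_finiteType (f := Polynomial.C) ?_
    have : (Polynomial.aeval (R := K) c).toRingHom.comp Polynomial.C = algebraMap K P := by
      ext x; simp
    rw [this]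
    exact RingHom.finiteType_algebraMap.2 inferInstance
  obtain ⟨f, hf0, hf⟩ := PrimeSpectrum.exists_basicOpen_of_isConstructible
    (PrimeSpectrum.isConstructible_range_comap hfin) (by
      obtain ⟨p, hp, hpc⟩ := Ideal.exists_comap_eq_of_mem_minimalPrimes_of_injective
        (f := (Polynomial.aeval (R := K) c).toRingHom) hinj ⊥ (by
          rw [IsDomain.minimalPrimes_eq_singleton_bot]; rfl)
      exact ⟨⟨p, hp⟩, PrimeSpectrum.ext hpc⟩)
  obtain ⟨a, ha⟩ : ∃ a : constSubfield K φ, f.eval (a : K) ≠ 0 := by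
    by_contra! h
    refine hf0 (Polynomial.eq_zero_of_infinite_isRoot f ?_)
    refine Set.Infinite.mono (s := Set.range (Subtype.val : constSubfield K φ → K)) ?_
      (Set.infinite_range_of_injective Subtype.val_injective)
    rintro _ ⟨a, rfl⟩
    exact h a
  have hprime : (Ideal.span {Polynomial.X - Polynomial.C (a : K)}).IsPrime :=
    (Ideal.span_singleton_prime (Polynomial.X_sub_C_ne_zero _)).2 (Polynomial.prime_X_sub_C _)
  obtain ⟨⟨p, hp⟩, hpa⟩ := hf ⟨_, hprime⟩ (by
    rw [Ideal.mem_span_singleton, Polynomial.dvd_iff_isRoot]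
    exact ha)
  have hmem : Polynomial.X - Polynomial.C (a : K) ∈
      Ideal.comap (Polynomial.aeval (R := K) c).toRingHom p := by
    have := congrArg PrimeSpectrum.asIdeal hpa
    change Ideal.comap _ p = _ at this
    rw [this]
    exact Ideal.mem_span_singleton_self _
  rw [Ideal.mem_comap] at hmem
  refine hp.ne_top (Ideal.eq_top_of_isUnit_mem _ hmem ?_)
  simpa using hunit a

theorem Matrix.det_mul_eq_zero_of_card_lt {A m n : Type*} [CommRing A] [Fintype m] [Fintype n]
    [DecidableEq m] [DecidableEq n] (L : Matrix m n A) (R : Matrix n m A)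
    (h : Fintype.card n < Fintype.card m) : (L * R).det = 0 := by
  have h1 := Matrix.charpoly_mul_comm_of_le L R h.le
  have h2 := congrArg (Polynomial.eval 0) h1
  rw [Matrix.det_eq_sign_charpoly_coeff, Polynomial.coeff_zero_eq_eval_zero, h2]
  simp [(Nat.sub_pos_of_lt h).ne']

theorem Matrix.det_sq_smul_eq_of_minors_eq_zero {A M : Type*} [CommRing A] [AddCommGroup M]
    [Module A M] (hsep : ∀ x : M, (∀ l : M →ₗ[A] A, l x = 0) → x = 0) (N : Submodule A M) {r : ℕ}
    (h : ∀ (l : Fin (r + 1) → M →ₗ[A] A) (v : Fin (r + 1) → M), (∀ j, v j ∈ N) →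
      (Matrix.of fun i j => l i (v j)).det = 0)
    (l : Fin r → M →ₗ[A] A) (v : Fin r → M) (hv : ∀ j, v j ∈ N) (x : M) (hx : x ∈ N) :
    let L : Matrix (Fin r) (Fin r) A := Matrix.of fun i j => l i (v j)
    L.det ^ 2 • x = L.det • ∑ j, (L.adjugate.mulVec fun i => l i x) j • v j := by
  intro L
  rw [← sub_eq_zero]
  refine hsep _ fun μ => ?_
  let l' : Unit ⊕ Fin r → M →ₗ[A] A := Sum.elim (fun _ => μ) l
  let v' : Unit ⊕ Fin r → M := Sum.elim (fun _ => x) v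
  let e : Fin (r + 1) ≃ Unit ⊕ Fin r := Fintype.equivOfCardEq (by simp [add_comm])
  have h0 : (Matrix.of fun i j => l' i (v' j)).det = 0 := by
    rw [← Matrix.det_submatrix_equiv_self e]
    refine h (fun i => l' (e i)) (fun j => v' (e j)) fun j => ?_
    rcases e j with _ | j
    · exact hx
    · exact hv j
  have hblock : (Matrix.of fun i j => l' i (v' j)) = Matrix.fromBlocks
      (Matrix.of fun _ _ => μ x) (Matrix.of fun (_ : Unit) j => μ (v j))
      (Matrix.of fun i (_ : Unit) => l i x) L := by
    ext (i | i) (j | j) <;> rfl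
  let b : Matrix (Fin r) Unit A := Matrix.of fun i _ => l i x
  have hmul : (Matrix.of fun i j => l' i (v' j)) *
      Matrix.fromBlocks (Matrix.of fun _ _ => L.det) 0 (-(L.adjugate * b)) 1 =
      Matrix.fromBlocks (Matrix.of fun _ _ => L.det * μ x -
          ∑ j, (L.adjugate.mulVec fun i => l i x) j * μ (v j))
        (Matrix.of fun (_ : Unit) j => μ (v j)) 0 L := by
    rw [hblock, Matrix.fromBlocks_multiply]
    congr 1
    · ext i j
      simp only [Matrix.add_apply, Matrix.mul_apply, Matrix.of_apply, Matrix.neg_apply,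
        Finset.univ_unique, Finset.sum_singleton, mul_neg, Finset.sum_neg_distrib, b,
        Matrix.mulVec, dotProduct]
      rw [sub_eq_add_neg, mul_comm]
      congr 2
      exact Finset.sum_congr rfl fun _ _ => mul_comm _ _
    · simp
    · rw [Matrix.mul_neg, ← Matrix.mul_assoc, Matrix.mul_adjugate, Matrix.smul_mul, Matrix.one_mul]
      ext i j
      simp [Matrix.mul_apply, b, mul_comm]
    · simp
  have h1 := congrArg Matrix.det hmul
  rw [Matrix.det_mul, h0, zero_mul, Matrix.det_fromBlocks_zero₂₁, Matrix.det_unique] at h1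
  simp only [map_sub, map_smul, map_sum, smul_eq_mul]
  rw [Matrix.of_apply] at h1
  linear_combination -h1

theorem DiffSimple.exists_projection {A M : Type*} [CommRing A] [AddCommGroup M] [Module A M]
    {Φ : A →+* A} (hs : DiffSimple Φ) (hsep : ∀ x : M, (∀ l : M →ₗ[A] A, l x = 0) → x = 0)
    (f : M → M) (hf : ∀ l : M →ₗ[A] A, ∃ l' : M →ₗ[A] A, ∀ v, l' (f v) = Φ (l v))
    (N : Submodule A M) (hN : ∀ x ∈ N, f x ∈ N) (t : Finset M)
    (ht : N ≤ Submodule.span A t) :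
    ∃ π : M →ₗ[A] M, (∀ x, π x ∈ N) ∧ ∀ x ∈ N, π x = x := by
  classical
  let a : ℕ → Ideal A := fun r => Ideal.span {d | ∃ (l : Fin r → M →ₗ[A] A) (v : Fin r → M),
    (∀ j, v j ∈ N) ∧ (Matrix.of fun i j => l i (v j)).det = d}
  have hstab : ∀ r, ∀ x ∈ a r, Φ x ∈ a r := by
    intro r
    change a r ≤ (a r).comap Φ
    rw [Ideal.span_le]
    rintro _ ⟨l, v, hv, rfl⟩
    choose l' hl' using hf
    refine Ideal.subset_span ⟨fun i => l' (l i), fun j => f (v j), fun j => hN _ (hv j), ?_⟩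
    rw [RingHom.map_det]
    congr 1
    ext i j
    simp [hl']
  have h0 : a 0 ≠ ⊥ := by
    have h1 : (1 : A) ∈ a 0 := Ideal.subset_span ⟨Fin.elim0, Fin.elim0, fun j => j.elim0, by simp⟩
    have := hs.nontrivial
    intro h
    rw [h, Ideal.mem_bot] at h1
    exact one_ne_zero h1
  have hbig : a (t.card + 1) = ⊥ := by
    rw [eq_bot_iff, Ideal.span_le]
    rintro _ ⟨l, v, hv, rfl⟩
    have : ∀ j, ∃ c : t → A, ∑ k, c k • (k : M) = v j := by
      intro j
      have := ht (hv j)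
      rw [Submodule.mem_span_finset'] at this
      exact this
    choose c hc using this
    have : (Matrix.of fun i j => l i (v j)) =
        (Matrix.of fun i (k : t) => l i k) * Matrix.of fun k j => c j k := by
      ext i j
      simp [← hc, Matrix.mul_apply, mul_comm]
    rw [SetLike.mem_coe, Ideal.mem_bot, this]
    exact Matrix.det_mul_eq_zero_of_card_lt _ _ (by simp)
  obtain ⟨r, hr, hr1⟩ : ∃ r, a r ≠ ⊥ ∧ a (r + 1) = ⊥ := by
    by_contra! hcon
    have : ∀ n, a n ≠ ⊥ := fun n => by
      induction n with
      | zero => exact h0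
      | succ n ih => exact hcon n ih
    exact this _ hbig
  have htop : a r = ⊤ := (hs.2 _ (hstab r)).resolve_left hr
  let E : Ideal A :=
    { carrier := {c | ∃ π : M →ₗ[A] M, (∀ x, π x ∈ N) ∧ ∀ x ∈ N, π x = c • x}
      zero_mem' := ⟨0, by simp, by simp⟩
      add_mem' := by
        rintro c d ⟨π, h1, h2⟩ ⟨π', h1', h2'⟩
        exact ⟨π + π', fun x => N.add_mem (h1 x) (h1' x), fun x hx => by
          rw [LinearMap.add_apply, h2 x hx, h2' x hx, add_smul]⟩
      smul_mem' := by
        rintro c d ⟨π, h1, h2⟩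
        exact ⟨c • π, fun x => N.smul_mem _ (h1 x), fun x hx => by
          rw [LinearMap.smul_apply, h2 x hx, smul_smul, smul_eq_mul]⟩ }
  have hE : E = ⊤ := by
    rw [← top_le_iff, ← Ideal.span_pow_eq_top _ htop 2, Ideal.span_le]
    rintro _ ⟨_, ⟨l, v, hv, rfl⟩, rfl⟩
    let L : Matrix (Fin r) (Fin r) A := Matrix.of fun i j => l i (v j)
    refine ⟨L.det • ∑ j, ((LinearMap.proj j).comp
      ((Matrix.mulVecLin L.adjugate).comp (LinearMap.pi l))).smulRight (v j), fun x => ?_,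
      fun x hx => ?_⟩
    · simp only [LinearMap.smul_apply, LinearMap.sum_apply, LinearMap.smulRight_apply]
      exact N.smul_mem _ (N.sum_mem fun j _ => N.smul_mem _ (hv j))
    · have := Matrix.det_sq_smul_eq_of_minors_eq_zero hsep N (r := r) (fun l v hv => by
        have : (Matrix.of fun i j => l i (v j)).det ∈ a (r + 1) := Ideal.subset_span ⟨l, v, hv, rfl⟩
        rwa [hr1, Ideal.mem_bot] at this) l v hv x hx
      simp only [LinearMap.smul_apply, LinearMap.sum_apply, LinearMap.smulRight_apply]
      exact this.symm
  obtain ⟨π, h1, h2⟩ : (1 : A) ∈ E := hE ▸ Submodule.mem_top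
  exact ⟨π, h1, fun x hx => by rw [h2 x hx, one_smul]⟩

/-- Every finite subset of the ideal `J` is fixed by a linear endomorphism with image in `J`. -/
def LocallyRetract {V A : Type*} [CommRing A] (J : Ideal (MvPolynomial V A)) : Prop :=
  ∀ s : Finset (MvPolynomial V A), (∀ p ∈ s, p ∈ J) →
    ∃ π : MvPolynomial V A →ₗ[A] MvPolynomial V A, (∀ p, π p ∈ J) ∧ ∀ p ∈ s, π p = p

theorem MvPolynomial.totalDegree_eval₂_C_comp_le {V W S A : Type*} [CommRing S] [CommRing A]
    (φ : S →+* A) (g : V → MvPolynomial W A) (hg : ∀ x, (g x).totalDegree ≤ 1)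
    (p : MvPolynomial V S) : (eval₂ (C.comp φ) g p).totalDegree ≤ p.totalDegree := by
  rw [eval₂_eq]
  refine (totalDegree_finsetSum _ _).trans (Finset.sup_le fun n hn => ?_)
  refine (totalDegree_mul _ _).trans ?_
  rw [RingHom.comp_apply, totalDegree_C, zero_add]
  refine (totalDegree_finsetProd _ _).trans (le_trans ?_ (le_totalDegree hn))
  rw [Finsupp.sum]
  refine Finset.sum_le_sum fun x _ => (totalDegree_pow _ _).trans ?_
  exact (Nat.mul_le_mul_left _ (hg x)).trans (by simp)

theorem DiffSimple.locallyRetract {A ι m : Type*} [CommRing A] [Finite ι] [Fintype m]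
    [DecidableEq m] {Φ : A →+* A} (hs : DiffSimple Φ) (D D' : ι → Matrix m m A)
    (hD : ∀ j, D j * D' j = 1) (J : Ideal (MvPolynomial (ι × m × m) A))
    (hJ : ∀ p ∈ J, twist Φ D p ∈ J) : LocallyRetract J := by
  classical
  have := Fintype.ofFinite ι
  intro s hsJ
  let d := s.sup totalDegree
  let N : Submodule A (MvPolynomial (ι × m × m) A) :=
    J.restrictScalars A ⊓ restrictTotalDegree (ι × m × m) A d
  have hN : ∀ p, p ∈ N ↔ p ∈ J ∧ p.totalDegree ≤ d := fun p => by
    simp [N, mem_restrictTotalDegree]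
  have hfin : {n : ι × m × m →₀ ℕ | n.degree ≤ d}.Finite := Finsupp.finite_of_degree_le d
  obtain ⟨π, h1, h2⟩ := hs.exists_projection (M := MvPolynomial (ι × m × m) A) (fun x hx => by
      ext n
      exact hx (lcoeff A n)) (twist Φ D) (fun l => by
      let ρ : MvPolynomial (ι × m × m) A →ₐ[A] MvPolynomial (ι × m × m) A :=
        aeval fun x => ((D' x.1).map C * genMat ι m A x.1 : Matrix m m _) x.2.1 x.2.2
      have hρ : ∀ p, ρ (twist Φ D p) = MvPolynomial.map Φ p := by
        have : (ρ : MvPolynomial (ι × m × m) A →+* _).comp (twist Φ D) = MvPolynomial.map Φ := by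
          rw [ringHom_eq_evalMat (MvPolynomial.map Φ), twist, comp_evalMat]
          congr 1
          · ext x; simp
          · funext j
            have hgen : (genMat ι m A j).map ρ = (D' j).map C * genMat ι m A j := by
              ext p q; simp [genMat, ρ]
            have hC : ((D j).map C).map ρ = (D j).map C := by
              ext p q; simp
            rw [Matrix.map_mul]
            change ((D j).map C).map ρ * (genMat ι m A j).map ρ = _
            rw [hgen, hC, ← Matrix.mul_assoc, ← Matrix.map_mul, hD, genMat_map_map,
              Matrix.map_one _ (map_zero _) (map_one _), Matrix.one_mul]
        exact fun p => RingHom.congr_fun this p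
      refine ⟨((basisMonomials (ι × m × m) A).constr A fun n => Φ (l (monomial n 1))).comp
        ρ.toLinearMap, fun v => ?_⟩
      rw [LinearMap.comp_apply, AlgHom.toLinearMap_apply, hρ]
      induction v using MvPolynomial.induction_on' with
      | monomial n a =>
        have h1 : monomial n (Φ a) = Φ a • basisMonomials (ι × m × m) A n := by
          simp [smul_monomial]
        have h2 : monomial n a = a • (monomial n 1 : MvPolynomial (ι × m × m) A) := by
          simp [smul_monomial]
        rw [map_monomial, h1, map_smul, Basis.constr_basis, h2, map_smul, smul_eq_mul,
          smul_eq_mul, map_mul]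
      | add p q hp hq => rw [map_add, map_add, hp, hq, map_add, map_add]) N (fun p hp => by
      rw [hN] at hp ⊢
      refine ⟨hJ p hp.1, (totalDegree_eval₂_C_comp_le _ _ (fun x => ?_) p).trans hp.2⟩
      change totalDegree (((D x.1).map C * genMat ι m A x.1 : Matrix m m _) x.2.1 x.2.2) ≤ 1
      rw [Matrix.mul_apply]
      refine (totalDegree_finsetSum _ _).trans (Finset.sup_le fun r _ => ?_)
      refine (totalDegree_mul _ _).trans ?_
      rw [Matrix.map_apply, totalDegree_C, zero_add]
      exact (totalDegree_monomial_le _ _).trans (by simp))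
    (hfin.toFinset.image fun n => monomial n 1) (fun p hp => by
      rw [hN] at hp
      rw [p.as_sum]
      refine Submodule.sum_mem _ fun n hn => ?_
      rw [← mul_one (coeff n p), ← smul_eq_mul, ← smul_monomial]
      refine Submodule.smul_mem _ _ (Submodule.subset_span ?_)
      refine Finset.mem_coe.2 (Finset.mem_image.2 ⟨n, hfin.mem_toFinset.2 ?_, rfl⟩)
      exact (le_totalDegree hn).trans hp.2)
  refine ⟨π, fun p => ((hN _).1 (h1 p)).1, fun p hp => h2 p ((hN p).2 ⟨hsJ p hp, ?_⟩)⟩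
  exact Finset.le_sup (f := totalDegree) hp

theorem MvPolynomial.mem_span_of_mem_map {V A A' : Type*} [CommRing A] [CommRing A'] (s : A →+* A')
    (J : Ideal (MvPolynomial V A)) {p : MvPolynomial V A'}
    (hp : p ∈ J.map (MvPolynomial.map (σ := V) s)) :
    p ∈ Submodule.span A' (MvPolynomial.map s '' (J : Set (MvPolynomial V A))) := by
  induction hp using Submodule.span_induction with
  | mem x hx => exact Submodule.subset_span hx
  | zero => exact zero_mem _
  | add x y _ _ hx hy => exact add_mem hx hy
  | smul q x hxJ hx =>
    clear hxJ
    induction q using MvPolynomial.induction_on' with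
    | add q r hq hr => rw [add_smul]; exact add_mem hq hr
    | monomial n c =>
      induction hx using Submodule.span_induction with
      | mem y hy =>
        obtain ⟨y, hy, rfl⟩ := hy
        have : monomial n c • MvPolynomial.map s y = c • MvPolynomial.map s (monomial n 1 * y) := by
          rw [map_mul, map_monomial, map_one, smul_eq_mul, ← smul_mul_assoc, smul_monomial,
            smul_eq_mul, mul_one]
        rw [this]
        exact Submodule.smul_mem _ _ (Submodule.subset_span ⟨_, J.mul_mem_left _ hy, rfl⟩)
      | zero => rw [smul_zero]; exact zero_mem _
      | add y z _ _ hy hz => rw [smul_add]; exact add_mem hy hz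
      | smul b y _ hy => rw [smul_comm]; exact Submodule.smul_mem _ _ hy

theorem MvPolynomial.exists_finset_of_mem_map {V A A' : Type*} [CommRing A] [CommRing A']
    (s : A →+* A') (J : Ideal (MvPolynomial V A)) {p : MvPolynomial V A'}
    (hp : p ∈ J.map (MvPolynomial.map (σ := V) s)) :
    ∃ t : Finset (MvPolynomial V A), (∀ q ∈ t, q ∈ J) ∧
      p ∈ Submodule.span A' (MvPolynomial.map s '' (t : Set (MvPolynomial V A))) := by
  classical
  obtain ⟨u, hu, hpu⟩ := Submodule.mem_span_finite_of_mem_span (mem_span_of_mem_map s J hp)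
  obtain ⟨t, ht, rfl⟩ := Finset.subset_set_image_iff.1 hu
  exact ⟨t, fun q hq => ht hq, by simpa using hpu⟩

theorem MvPolynomial.exists_linearMap_extension {V A A' : Type*} [CommRing A] [CommRing A']
    (s : A →+* A') (π : MvPolynomial V A →ₗ[A] MvPolynomial V A) (J : Ideal (MvPolynomial V A))
    (hπ : ∀ p, π p ∈ J) : ∃ π' : MvPolynomial V A' →ₗ[A'] MvPolynomial V A',
      (∀ p, π' (MvPolynomial.map s p) = MvPolynomial.map s (π p)) ∧
      ∀ p, π' p ∈ J.map (MvPolynomial.map (σ := V) s) := by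
  refine ⟨(basisMonomials V A').constr A' fun n => MvPolynomial.map s (π (monomial n 1)), ?_, ?_⟩
  · intro p
    induction p using MvPolynomial.induction_on' with
    | monomial n a =>
      have h1 : monomial n (s a) = s a • basisMonomials V A' n := by simp [smul_monomial]
      have h2 : monomial n a = a • (monomial n 1 : MvPolynomial V A) := by simp [smul_monomial]
      rw [map_monomial, h1, map_smul, Basis.constr_basis, h2, map_smul, smul_eq_C_mul,
        smul_eq_C_mul, map_mul, map_C]
    | add p q hp hq => rw [map_add, map_add, hp, hq, map_add, map_add]
  · intro p
    rw [Basis.constr_apply]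
    exact Submodule.sum_mem _ fun n _ => Submodule.smul_of_tower_mem _ _
      (Ideal.mem_map_of_mem _ (hπ _))

theorem LocallyRetract.map {V A A' : Type*} [CommRing A] [CommRing A'] {J : Ideal (MvPolynomial V A)}
    (h : LocallyRetract J) (s : A →+* A') : LocallyRetract (J.map (MvPolynomial.map (σ := V) s)) := by
  classical
  intro u hu
  choose! t ht htp using fun p (hp : p ∈ u) => exists_finset_of_mem_map s J (hu p hp)
  obtain ⟨π, h1, h2⟩ := h (u.biUnion t) fun q hq => by
    obtain ⟨p, hp, hq⟩ := Finset.mem_biUnion.1 hq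
    exact ht p hp q hq
  obtain ⟨π', h1', h2'⟩ := exists_linearMap_extension s π J h1
  refine ⟨π', h2', fun p hp => ?_⟩
  have hle : Submodule.span A' (MvPolynomial.map s '' (t p : Set (MvPolynomial V A))) ≤
      LinearMap.eqLocus π' LinearMap.id := by
    rw [Submodule.span_le]
    rintro _ ⟨q, hq, rfl⟩
    change π' _ = _
    rw [h1', h2 q (Finset.mem_biUnion.2 ⟨p, hp, hq⟩), LinearMap.id_apply]
  exact hle (htp p hp)

theorem LocallyRetract.mem_of_map_mem {V A A' : Type*} [CommRing A] [CommRing A']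
    {J : Ideal (MvPolynomial V A)} (h : LocallyRetract J) (i : A →+* A')
    (hi : Function.Injective i) {p : MvPolynomial V A}
    (hp : MvPolynomial.map i p ∈ J.map (MvPolynomial.map (σ := V) i)) : p ∈ J := by
  classical
  obtain ⟨t, ht, hpt⟩ := exists_finset_of_mem_map i J hp
  obtain ⟨π, h1, h2⟩ := h t ht
  obtain ⟨π', h1', -⟩ := exists_linearMap_extension i π J h1
  have hle : Submodule.span A' (MvPolynomial.map i '' (t : Set (MvPolynomial V A))) ≤
      LinearMap.eqLocus π' LinearMap.id := by
    rw [Submodule.span_le]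
    rintro _ ⟨q, hq, rfl⟩
    change π' _ = _
    rw [h1', h2 q hq, LinearMap.id_apply]
  have h3 : π' (MvPolynomial.map i p) = MvPolynomial.map i p := hle hpt
  rw [h1'] at h3
  rw [← MvPolynomial.map_injective i hi h3]
  exact h1 p

theorem RingHom.exists_amalgam_of_injective.{u₁, u₂} {q : Type u₁} {Q : Type u₂} [CommRing q] [CommRing Q]
    [Nontrivial q] {α β : q →+* Q} (hα : Function.Injective α) (hβ : Function.Injective β) :
    ∃ (W : Type u₂) (_ : CommRing W) (_ : Nontrivial W) (f f' : Q →+* W),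
      f.comp β = f'.comp α := by
  obtain ⟨P, hP⟩ := Ideal.nonempty_minimalPrimes (I := (⊥ : Ideal q)) bot_ne_top
  obtain ⟨P₁, hP₁, h₁⟩ := Ideal.exists_comap_eq_of_mem_minimalPrimes_of_injective hα P hP
  obtain ⟨P₂, hP₂, h₂⟩ := Ideal.exists_comap_eq_of_mem_minimalPrimes_of_injective hβ P hP
  have := hP.1.1
  have lift : ∀ (γ : q →+* Q) (P' : Ideal Q) [P'.IsPrime], P'.comap γ = P →
      ∃ g : FractionRing (q ⧸ P) →+* FractionRing (Q ⧸ P'), ∀ x : q,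
        g (algebraMap (q ⧸ P) _ (Ideal.Quotient.mk P x)) =
          algebraMap (Q ⧸ P') _ (Ideal.Quotient.mk P' (γ x)) := by
    intro γ P' _ h
    have hinj : Function.Injective (Ideal.quotientMap P' γ h.ge) :=
      Ideal.quotientMap_injective' h.le
    refine ⟨IsFractionRing.map (K := FractionRing (q ⧸ P)) (L := FractionRing (Q ⧸ P')) hinj,
      fun x => ?_⟩
    rw [IsFractionRing.map, IsLocalization.map_eq, Ideal.quotientMap_mk]
  obtain ⟨g₁, hg₁⟩ := lift α P₁ h₁
  obtain ⟨g₂, hg₂⟩ := lift β P₂ h₂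
  obtain ⟨W, _, _, l, r, hlr⟩ := RingHom.exists_amalgam g₁ g₂
  refine ⟨W, inferInstance, inferInstance,
    r.comp ((algebraMap (Q ⧸ P₂) _).comp (Ideal.Quotient.mk P₂)),
    l.comp ((algebraMap (Q ⧸ P₁) _).comp (Ideal.Quotient.mk P₁)), ?_⟩
  ext x
  have := RingHom.congr_fun hlr (algebraMap (q ⧸ P) _ (Ideal.Quotient.mk P x))
  simp only [RingHom.comp_apply, hg₁, hg₂] at this
  exact this.symm

theorem IsDiffMaximal.exists_step {V A₀ A₁ A₂ : Type*} [CommRing A₀] [CommRing A₁] [CommRing A₂]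
    {Φ₀ : A₀ →+* A₀} {Φ₁ : A₁ →+* A₁} {Φ₂ : A₂ →+* A₂} (i₀ s₀ : A₀ →+* A₁) (i₁ s₁ : A₁ →+* A₂)
    (hi₀ : ∀ a, i₀ (Φ₀ a) = Φ₁ (i₀ a)) (hs₀ : ∀ a, s₀ (Φ₀ a) = Φ₁ (s₀ a))
    (hi₁ : ∀ a, i₁ (Φ₁ a) = Φ₂ (i₁ a)) (hs₁ : ∀ a, s₁ (Φ₁ a) = Φ₂ (s₁ a))
    (hcomm : i₁.comp s₀ = s₁.comp i₀) (t : V → A₁)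
    (ht : Function.Surjective (eval₂Hom i₀ t))
    (ht' : Function.Surjective (eval₂Hom i₁ (s₁ ∘ t)))
    (hker : RingHom.ker (eval₂Hom i₁ (s₁ ∘ t)) ≤
      (RingHom.ker (eval₂Hom i₀ t)).map (MvPolynomial.map s₀))
    {M₀ : Ideal A₀} {M₁ : Ideal A₁} (hM₀ : IsDiffMaximal Φ₀ M₀) (hM₁ : IsDiffMaximal Φ₁ M₁)
    (hiM : ∀ x ∈ M₀, i₀ x ∈ M₁) (hsM : ∀ x ∈ M₀, s₀ x ∈ M₁) :
    ∃ M₂ : Ideal A₂, IsDiffMaximal Φ₂ M₂ ∧ (∀ x ∈ M₁, i₁ x ∈ M₂) ∧ ∀ x ∈ M₁, s₁ x ∈ M₂ := by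
  have hα := Ideal.quotientMap_injective' (f := i₀) (H := hiM) (hM₀.comap_eq hi₀ hM₁ hiM).le
  have hβ := Ideal.quotientMap_injective' (f := s₀) (H := hsM) (hM₀.comap_eq hs₀ hM₁ hsM).le
  have : Nontrivial (A₀ ⧸ M₀) := Ideal.Quotient.nontrivial_iff.2 hM₀.1
  obtain ⟨W, _, _, f, f', hff⟩ := RingHom.exists_amalgam_of_injective hα hβ
  let ψ : MvPolynomial V A₁ →+* W :=
    eval₂Hom (f.comp (Ideal.Quotient.mk M₁)) fun v => f' (Ideal.Quotient.mk M₁ (t v))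
  have hψ : ∀ p, ψ (MvPolynomial.map s₀ p) = f' (Ideal.Quotient.mk M₁ (eval₂Hom i₀ t p)) := by
    have : ψ.comp (MvPolynomial.map s₀) =
        (f'.comp (Ideal.Quotient.mk M₁)).comp (eval₂Hom i₀ t) := by
      refine MvPolynomial.ringHom_ext (fun a => ?_) (fun v => by simp [ψ])
      have := RingHom.congr_fun hff (Ideal.Quotient.mk M₀ a)
      change f (Ideal.Quotient.mk M₁ (s₀ a)) = f' (Ideal.Quotient.mk M₁ (i₀ a)) at this
      simpa [ψ] using this
    exact fun p => RingHom.congr_fun this p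
  have hψker : RingHom.ker (eval₂Hom i₁ (s₁ ∘ t)) ≤ RingHom.ker ψ := by
    refine hker.trans ?_
    rw [Ideal.map_le_iff_le_comap]
    intro p hp
    rw [RingHom.mem_ker] at hp
    rw [Ideal.mem_comap, RingHom.mem_ker, hψ, hp, map_zero, map_zero]
  let χ : A₂ →+* W := RingHom.liftOfSurjective _ ht' ⟨ψ, hψker⟩
  have hχ : ∀ p, χ (eval₂Hom i₁ (s₁ ∘ t) p) = ψ p := fun p =>
    RingHom.liftOfRightInverse_comp_apply _ _ _ ⟨ψ, hψker⟩ p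
  have hχi : ∀ a ∈ M₁, χ (i₁ a) = 0 := by
    intro a ha
    have := hχ (C a)
    rw [coe_eval₂Hom, eval₂_C] at this
    rw [this]
    simp [ψ, Ideal.Quotient.eq_zero_iff_mem.2 ha]
  have hχs : ∀ a ∈ M₁, χ (s₁ a) = 0 := by
    intro a ha
    obtain ⟨p, rfl⟩ := ht a
    have h1 : s₁ (eval₂Hom i₀ t p) = eval₂Hom i₁ (s₁ ∘ t) (MvPolynomial.map s₀ p) := by
      have : s₁.comp (eval₂Hom i₀ t) =
          (eval₂Hom i₁ (s₁ ∘ t)).comp (MvPolynomial.map s₀) :=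
        MvPolynomial.ringHom_ext (fun a => by simpa using (RingHom.congr_fun hcomm a).symm)
          (by simp)
      exact RingHom.congr_fun this p
    rw [h1, hχ, hψ, Ideal.Quotient.eq_zero_iff_mem.2 ha, map_zero]
  let I : Ideal A₂ := M₁.map i₁ ⊔ M₁.map s₁
  have hI : I ≤ RingHom.ker χ :=
    sup_le (Ideal.map_le_iff_le_comap.2 hχi) (Ideal.map_le_iff_le_comap.2 hχs)
  have hst : I ≤ I.comap Φ₂ := by
    refine sup_le (Ideal.map_le_iff_le_comap.2 fun a ha => ?_)
      (Ideal.map_le_iff_le_comap.2 fun a ha => ?_)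
    · rw [Ideal.mem_comap, Ideal.mem_comap, ← hi₁]
      exact Ideal.mem_sup_left (Ideal.mem_map_of_mem _ (hM₁.2.1 a ha))
    · rw [Ideal.mem_comap, Ideal.mem_comap, ← hs₁]
      exact Ideal.mem_sup_right (Ideal.mem_map_of_mem _ (hM₁.2.1 a ha))
  obtain ⟨M₂, hIM, hM₂⟩ := exists_le_isDiffMaximal Φ₂ I
    (fun h => RingHom.ker_ne_top χ (top_le_iff.1 (h ▸ hI))) hst
  exact ⟨M₂, hM₂, fun x hx => hIM (Ideal.mem_sup_left (Ideal.mem_map_of_mem _ hx)),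
    fun x hx => hIM (Ideal.mem_sup_right (Ideal.mem_map_of_mem _ hx))⟩

/-- A sequence of ideals, each of which contains the image of its predecessor under an endomorphism
of the ground field, is eventually generated by these images. -/
theorem MvPolynomial.exists_map_eq_of_map_le {V Ω : Type*} [Finite V] [Field Ω] (σ : Ω →+* Ω)
    (I : ℕ → Ideal (MvPolynomial V Ω)) (hI : ∀ i, ∀ p ∈ I i, MvPolynomial.map σ p ∈ I (i + 1)) :
    ∃ e, ∀ i, e ≤ i → (I i).map (MvPolynomial.map (σ := V) σ) = I (i + 1) := by
  have := Fintype.ofFinite V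
  let _ : LinearOrder V := LinearOrder.lift' (Fintype.equivFin V) (Fintype.equivFin V).injective
  let o : MonomialOrder V := MonomialOrder.lex
  have hdeg : ∀ p : MvPolynomial V Ω, o.degree (MvPolynomial.map σ p) = o.degree p := fun p => by
    simp only [MonomialOrder.degree, support_map_of_injective p σ.injective]
  let L : ℕ → Set (V →₀ ℕ) := fun i => {d | ∃ p ∈ I i, p ≠ 0 ∧ o.degree p = d}
  let N : ℕ →o Ideal (MvPolynomial V Ω) :=
    { toFun := fun i => Ideal.span ((fun d => monomial d (1 : Ω)) '' L i)
      monotone' := monotone_nat_of_le_succ fun i => Ideal.span_mono <| Set.image_mono <| by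
        rintro _ ⟨p, hp, h0, rfl⟩
        exact ⟨_, hI i p hp, (map_ne_zero_iff _ (map_injective σ σ.injective)).2 h0, hdeg p⟩ }
  obtain ⟨e, he⟩ := monotone_stabilizes_iff_noetherian.2
    (inferInstance : IsNoetherian (MvPolynomial V Ω) (MvPolynomial V Ω)) N
  refine ⟨e, fun i hi => le_antisymm (Ideal.map_le_iff_le_comap.2 (hI i)) fun p hp => ?_⟩
  have hN : N i = N (i + 1) := (he i hi).symm.trans (he _ (hi.trans i.le_succ))
  let B : Set (MvPolynomial V Ω) := {b | ∃ q ∈ I i, q ≠ 0 ∧ MvPolynomial.map σ q = b}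
  have hB : B ⊆ (I i).map (MvPolynomial.map (σ := V) σ) := by
    rintro _ ⟨q, hq, -, rfl⟩
    exact Ideal.mem_map_of_mem _ hq
  obtain ⟨g, r, hg, -, hr⟩ := o.div_set (B := B) (by
    rintro _ ⟨q, hq, h0, rfl⟩
    rw [isUnit_iff_ne_zero, Ne, MonomialOrder.leadingCoeff_eq_zero_iff]
    exact (map_ne_zero_iff _ (map_injective σ σ.injective)).2 h0) p
  have hcomb : Finsupp.linearCombination _ (fun b : B => (b : MvPolynomial V Ω)) g ∈
      (I i).map (MvPolynomial.map (σ := V) σ) :=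
    Submodule.sum_mem _ fun b _ => Submodule.smul_mem _ _ (hB b.2)
  suffices r = 0 by rwa [hg, this, add_zero]
  by_contra h0
  have hrI : r ∈ I (i + 1) := by
    rw [← Ideal.add_mem_iff_right _ (Ideal.map_le_iff_le_comap.2 (hI i) hcomb), ← hg]
    exact hp
  have hmem : monomial (o.degree r) (1 : Ω) ∈ N i := by
    rw [hN]
    exact Ideal.subset_span ⟨_, ⟨r, hrI, h0, rfl⟩, rfl⟩
  obtain ⟨_, ⟨q, hq, hq0, rfl⟩, hle⟩ := mem_ideal_span_monomial_image.1 hmem (o.degree r) (by simp)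
  exact hr _ (o.degree_mem_support h0) _ ⟨q, hq, hq0, rfl⟩ ((hdeg q).trans_le hle)

/-- The algebraic relations of a family `t` over a subring. -/
noncomputable def relIdeal {V S : Type*} [CommRing S] (A : Subring S) (t : V → S) :
    Ideal (MvPolynomial V A) :=
  RingHom.ker (eval₂Hom A.subtype t)

theorem mem_relIdeal {V S : Type*} [CommRing S] {A : Subring S} {t : V → S}
    {p : MvPolynomial V A} : p ∈ relIdeal A t ↔ eval₂ A.subtype t p = 0 := Iff.rfl

section Tower

variable {V S : Type*} [CommRing S] {G : S →+* S} {C : ℕ → Subring S} {t : ℕ → V → S}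

theorem relIdeal_map_le (hG : ∀ i, ∀ x ∈ C i, G x ∈ C (i + 1))
    (htG : ∀ i v, G (t i v) = t (i + 1) v) (i : ℕ) :
    (relIdeal (C i) (t i)).map (MvPolynomial.map (σ := V) (G.restrict (C i) (C (i + 1)) (hG i))) ≤
      relIdeal (C (i + 1)) (t (i + 1)) := by
  rw [Ideal.map_le_iff_le_comap]
  intro p hp
  rw [mem_relIdeal] at hp
  rw [Ideal.mem_comap, mem_relIdeal, eval₂_map]
  have : (eval₂Hom ((C (i + 1)).subtype.comp (G.restrict (C i) (C (i + 1)) (hG i))) (t (i + 1))) =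
      G.comp (eval₂Hom (C i).subtype (t i)) :=
    MvPolynomial.ringHom_ext (fun a => by simp) (by simp [htG])
  have := RingHom.congr_fun this p
  simp only [coe_eval₂Hom, RingHom.comp_apply] at this
  rw [this, hp, map_zero]

theorem locallyRetract_relIdeal (hG : ∀ i, ∀ x ∈ C i, G x ∈ C (i + 1))
    (htG : ∀ i v, G (t i v) = t (i + 1) v) (r : ℕ → Ideal (MvPolynomial V S))
    (hr : ∀ i, (relIdeal (C i) (t i)).map (MvPolynomial.map (σ := V) (C i).subtype) ≤ r i)
    (hrG : ∀ i, r (i + 1) ≤ (r i).map (MvPolynomial.map (σ := V) G))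
    (hr0 : r 0 ≤ (relIdeal (C 0) (t 0)).map (MvPolynomial.map (σ := V) (C 0).subtype))
    (h0 : LocallyRetract (relIdeal (C 0) (t 0))) (i : ℕ) :
    LocallyRetract (relIdeal (C i) (t i)) ∧
      r i ≤ (relIdeal (C i) (t i)).map (MvPolynomial.map (σ := V) (C i).subtype) ∧
      relIdeal (C (i + 1)) (t (i + 1)) = (relIdeal (C i) (t i)).map
        (MvPolynomial.map (σ := V) (G.restrict (C i) (C (i + 1)) (hG i))) := by
  have hcomp : ∀ i, ((relIdeal (C i) (t i)).map (MvPolynomial.map (σ := V) (C i).subtype)).map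
      (MvPolynomial.map (σ := V) G) = ((relIdeal (C i) (t i)).map
        (MvPolynomial.map (σ := V) (G.restrict (C i) (C (i + 1)) (hG i)))).map
          (MvPolynomial.map (σ := V) (C (i + 1)).subtype) := fun i => by
    rw [Ideal.map_map, Ideal.map_map]
    congr 1
    exact MvPolynomial.ringHom_ext (by simp) (by simp)
  have key : ∀ i, LocallyRetract (relIdeal (C i) (t i)) →
      r i ≤ (relIdeal (C i) (t i)).map (MvPolynomial.map (σ := V) (C i).subtype) →
      relIdeal (C (i + 1)) (t (i + 1)) = (relIdeal (C i) (t i)).map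
        (MvPolynomial.map (σ := V) (G.restrict (C i) (C (i + 1)) (hG i))) := by
    intro i h1 h2
    refine le_antisymm (fun p hp => ?_) (relIdeal_map_le hG htG i)
    refine (h1.map _).mem_of_map_mem (C (i + 1)).subtype Subtype.val_injective ?_
    rw [← hcomp]
    exact Ideal.map_mono h2 (hrG i (hr (i + 1) (Ideal.mem_map_of_mem _ hp)))
  have ind : ∀ i, LocallyRetract (relIdeal (C i) (t i)) ∧
      r i ≤ (relIdeal (C i) (t i)).map (MvPolynomial.map (σ := V) (C i).subtype) := by
    intro i
    induction i with
    | zero => exact ⟨h0, hr0⟩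
    | succ i ih =>
      rw [key i ih.1 ih.2]
      refine ⟨ih.1.map _, ?_⟩
      rw [← hcomp]
      exact (hrG i).trans (Ideal.map_mono ih.2)
  exact ⟨(ind i).1, (ind i).2, key i (ind i).1 (ind i).2⟩

theorem exists_isDiffMaximal_tower {F : S →+* S} (hF : ∀ i, ∀ x ∈ C i, F x ∈ C i)
    (hG : ∀ i, ∀ x ∈ C i, G x ∈ C (i + 1)) (hFG : ∀ x, F (G x) = G (F x))
    (hmono : ∀ i, C i ≤ C (i + 1))
    (ht : ∀ i v, t i v ∈ C (i + 1)) (htG : ∀ i v, G (t i v) = t (i + 1) v)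
    (hgen : ∀ i, ∀ x ∈ C (i + 1), ∃ p, eval₂ (C i).subtype (t i) p = x)
    (r : ℕ → Ideal (MvPolynomial V S))
    (hr : ∀ i, (relIdeal (C i) (t i)).map (MvPolynomial.map (σ := V) (C i).subtype) ≤ r i)
    (hrG : ∀ i, r (i + 1) ≤ (r i).map (MvPolynomial.map (σ := V) G))
    (hr0 : r 0 ≤ (relIdeal (C 0) (t 0)).map (MvPolynomial.map (σ := V) (C 0).subtype))
    (h0 : LocallyRetract (relIdeal (C 0) (t 0)))
    {M₀ : Ideal (C 0)} {M₁ : Ideal (C 1)}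
    (hM₀ : IsDiffMaximal (F.restrict (C 0) (C 0) (hF 0)) M₀)
    (hM₁ : IsDiffMaximal (F.restrict (C 1) (C 1) (hF 1)) M₁)
    (hiM : ∀ x ∈ M₀, Subring.inclusion (hmono 0) x ∈ M₁)
    (hsM : ∀ x ∈ M₀, G.restrict (C 0) (C 1) (hG 0) x ∈ M₁) {x : C 0} (hx : x ∈ M₀) (n : ℕ) :
    ∃ M : Ideal (C n), M ≠ ⊤ ∧ ∃ y ∈ M, (y : S) = x := by
  suffices h : ∃ (M : Ideal (C n)) (M' : Ideal (C (n + 1))),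
      IsDiffMaximal (F.restrict (C n) (C n) (hF n)) M ∧
      IsDiffMaximal (F.restrict (C (n + 1)) (C (n + 1)) (hF (n + 1))) M' ∧
      (∀ x ∈ M, Subring.inclusion (hmono n) x ∈ M') ∧
      (∀ x ∈ M, G.restrict (C n) (C (n + 1)) (hG n) x ∈ M') ∧ ∃ y ∈ M, (y : S) = x by
    obtain ⟨M, M', hM, -, -, -, h⟩ := h
    exact ⟨M, hM.1, h⟩
  induction n with
  | zero => exact ⟨M₀, M₁, hM₀, hM₁, hiM, hsM, x, hx, rfl⟩
  | succ n ih =>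
    obtain ⟨M, M', hM, hM', hi, hs, y, hy, hyx⟩ := ih
    have hev : ∀ (i : ℕ) (t' : V → C (i + 1)), (∀ v, (t' v : S) = t i v) → ∀ p,
        (eval₂Hom (Subring.inclusion (hmono i)) t' p : S) = eval₂ (C i).subtype (t i) p := by
      intro i t' ht' p
      have : (C (i + 1)).subtype.comp (eval₂Hom (Subring.inclusion (hmono i)) t') =
          eval₂Hom (C i).subtype (t i) :=
        MvPolynomial.ringHom_ext (fun a => by simp) (by simp [ht'])
      exact RingHom.congr_fun this p
    have hsurj : ∀ (i : ℕ) (t' : V → C (i + 1)), (∀ v, (t' v : S) = t i v) →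
        Function.Surjective (eval₂Hom (Subring.inclusion (hmono i)) t') := by
      intro i t' ht' x
      obtain ⟨p, hp⟩ := hgen i x x.2
      exact ⟨p, Subtype.ext ((hev i t' ht' p).trans hp)⟩
    have hker : ∀ (i : ℕ) (t' : V → C (i + 1)), (∀ v, (t' v : S) = t i v) →
        RingHom.ker (eval₂Hom (Subring.inclusion (hmono i)) t') = relIdeal (C i) (t i) := by
      intro i t' ht'
      ext p
      rw [mem_relIdeal, ← hev i t' ht', RingHom.mem_ker, ZeroMemClass.coe_eq_zero]
    obtain ⟨M'', hM'', h1, h2⟩ := IsDiffMaximal.exists_step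
      (Φ₀ := F.restrict (C n) (C n) (hF n)) (Φ₁ := F.restrict (C (n + 1)) (C (n + 1)) (hF (n + 1)))
      (Φ₂ := F.restrict (C (n + 2)) (C (n + 2)) (hF (n + 2)))
      (Subring.inclusion (hmono n)) (G.restrict (C n) (C (n + 1)) (hG n))
      (Subring.inclusion (hmono (n + 1))) (G.restrict (C (n + 1)) (C (n + 2)) (hG (n + 1)))
      (fun a => rfl) (fun a => Subtype.ext (hFG a).symm) (fun a => rfl)
      (fun a => Subtype.ext (hFG a).symm) (by ext; rfl)
      (fun v => ⟨t n v, ht n v⟩) (hsurj n _ fun v => rfl) (hsurj (n + 1) _ fun v => htG n v)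
      (by
        rw [hker n _ fun v => rfl, hker (n + 1) _ fun v => htG n v]
        exact (locallyRetract_relIdeal hG htG r hr hrG hr0 h0 n).2.2.le) hM hM' hi hs
    exact ⟨M', M'', hM', hM'', h1, h2, _, hi y hy, hyx⟩

end Tower

/-- The entries of a family of matrices. -/
def matFam {ι m S : Type*} (W : ι → Matrix m m S) (x : ι × m × m) : S := W x.1 x.2.1 x.2.2

/-- The ideal generated by the algebraic relations of `t` over a subring. -/
noncomputable def relSpan {V S : Type*} [CommRing S] (A : Subring S) (t : V → S) :
    Ideal (MvPolynomial V S) :=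
  (relIdeal A t).map (MvPolynomial.map A.subtype)

theorem relSpan_mono {V S : Type*} [CommRing S] {A A' : Subring S} (h : A ≤ A') (t : V → S) :
    relSpan A t ≤ relSpan A' t := by
  rw [relSpan, Ideal.map_le_iff_le_comap]
  intro p hp
  have : MvPolynomial.map A.subtype p =
      MvPolynomial.map A'.subtype (MvPolynomial.map (Subring.inclusion h) p) := by
    rw [map_map]; rfl
  rw [Ideal.mem_comap, this]
  refine Ideal.mem_map_of_mem _ ?_
  rw [mem_relIdeal, eval₂_map]
  exact hp

theorem relSpan_map_le {V V' S S' : Type*} [CommRing S] [CommRing S'] {A : Subring S}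
    {A' : Subring S'} {t : V → S} {t' : V' → S'} (θ : MvPolynomial V S →+* MvPolynomial V' S')
    (hC : ∀ a ∈ A, θ (C a) ∈ (MvPolynomial.map (σ := V') A'.subtype).range)
    (hX : ∀ v, θ (X v) ∈ (MvPolynomial.map (σ := V') A'.subtype).range) (E : S →+* S')
    (hE : ((eval₂Hom (RingHom.id S') t').comp θ) = E.comp (eval₂Hom (RingHom.id S) t)) :
    (relSpan A t).map θ ≤ relSpan A' t' := by
  rw [relSpan, Ideal.map_le_iff_le_comap, Ideal.map_le_iff_le_comap]
  intro p hp
  have hmem : θ (MvPolynomial.map A.subtype p) ∈ (MvPolynomial.map (σ := V') A'.subtype).range := by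
    clear hp
    induction p using MvPolynomial.induction_on with
    | C a => rw [map_C]; exact hC a a.2
    | add p q hp hq => rw [map_add, map_add]; exact add_mem hp hq
    | mul_X p v hp => rw [map_mul, map_mul, map_X]; exact mul_mem hp (hX v)
  obtain ⟨p', hp'⟩ := hmem
  change θ (MvPolynomial.map A.subtype p) ∈ relSpan A' t'
  rw [← hp']
  refine Ideal.mem_map_of_mem _ ?_
  have h1 := RingHom.congr_fun hE (MvPolynomial.map A.subtype p)
  rw [RingHom.comp_apply, ← hp', RingHom.comp_apply, coe_eval₂Hom, coe_eval₂Hom, eval₂_map,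
    eval₂_map] at h1
  rw [mem_relIdeal] at hp ⊢
  change eval₂ A'.subtype t' p' = E (eval₂ A.subtype t p) at h1
  rw [h1, hp, map_zero]

theorem DiffSimple.le_map_comap {V S Ω : Type*} [CommRing S] [Field Ω] [Algebra Ω S] {F : S →+* S}
    (hs : DiffSimple F) (hconst : ∀ t, F t = t → t ∈ (algebraMap Ω S).range)
    (a : Ideal (MvPolynomial V S)) (ha : ∀ x ∈ a, MvPolynomial.map F x ∈ a) :
    a ≤ (a.comap (MvPolynomial.map (algebraMap Ω S))).map (MvPolynomial.map (algebraMap Ω S)) := by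
  have hle := hs.le_span_fixed (MvPolynomial.basisMonomials V S) (MvPolynomial.map F)
    (fun x i => MvPolynomial.coeff_map F x i) (a.restrictScalars S) ha
  intro x hx
  refine Submodule.span_induction (p := fun x _ => x ∈ _) ?_ (zero_mem _)
    (fun x y _ _ hx hy => add_mem hx hy)
    (fun t x _ hx => by rw [MvPolynomial.smul_eq_C_mul]; exact Ideal.mul_mem_left _ _ hx) (hle hx)
  rintro y ⟨hy, hfix⟩
  obtain ⟨y, rfl⟩ : ∃ y', MvPolynomial.map (algebraMap Ω S) y' = y := by
    rw [← Set.mem_range, MvPolynomial.mem_range_map_iff_coeffs_subset]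
    intro c hc
    obtain ⟨i, -, rfl⟩ := MvPolynomial.mem_coeffs_iff.1 hc
    refine hconst _ ?_
    rw [← MvPolynomial.coeff_map, hfix]
  exact Ideal.mem_map_of_mem _ hy

section

variable {ι m S : Type*} [CommRing S]

theorem map_eq_evalMat {B : Type*} [CommRing B] (f : S →+* B) :
    (MvPolynomial.map f : MvPolynomial (ι × m × m) S →+* _) = evalMat (C.comp f) (genMat ι m B) :=
  MvPolynomial.ringHom_ext (by simp) (by simp [genMat])

variable [Fintype m]

/-- The substitution `X_j ↦ U_j X_j`. -/
noncomputable def leftMul (U : ι → Matrix m m S) :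
    MvPolynomial (ι × m × m) S →+* MvPolynomial (ι × m × m) S :=
  evalMat C fun j => (U j).map C * genMat ι m S j

/-- The substitution `X_j ↦ X_j Z_j`. -/
noncomputable def rightMul (Z : ι → Matrix m m S) :
    MvPolynomial (ι × m × m) S →+* MvPolynomial (ι × m × m) S :=
  evalMat C fun j => genMat ι m S j * (Z j).map C

theorem evalMat_comp_leftMul {B : Type*} [CommRing B] (f : S →+* B) (W : ι → Matrix m m B)
    (U : ι → Matrix m m S) :
    (evalMat f W).comp (leftMul U) = evalMat f fun j => (U j).map f * W j := by
  rw [leftMul, comp_evalMat]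
  congr 1
  · ext; simp
  · funext j
    rw [Matrix.map_mul, genMat_map_evalMat, Matrix.map_map]
    congr 2
    ext; simp

theorem evalMat_comp_rightMul {B : Type*} [CommRing B] (f : S →+* B) (W : ι → Matrix m m B)
    (Z : ι → Matrix m m S) :
    (evalMat f W).comp (rightMul Z) = evalMat f fun j => W j * (Z j).map f := by
  rw [rightMul, comp_evalMat]
  congr 1
  · ext; simp
  · funext j
    rw [Matrix.map_mul, genMat_map_evalMat, Matrix.map_map]
    congr 2
    ext; simp

theorem map_comp_leftMul {B : Type*} [CommRing B] (f : S →+* B) (U : ι → Matrix m m S) :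
    (MvPolynomial.map f).comp (leftMul U) =
      (leftMul fun j => (U j).map f).comp (MvPolynomial.map f) := by
  rw [map_eq_evalMat, evalMat_comp_leftMul, comp_evalMat]
  congr 1
  · ext; simp [leftMul]
  · funext j
    rw [leftMul, genMat_map_evalMat, Matrix.map_map]
    rfl

theorem map_comp_rightMul {B : Type*} [CommRing B] (f : S →+* B) (Z : ι → Matrix m m S) :
    (MvPolynomial.map f).comp (rightMul Z) =
      (rightMul fun j => (Z j).map f).comp (MvPolynomial.map f) := by
  rw [map_eq_evalMat, evalMat_comp_rightMul, comp_evalMat]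
  congr 1
  · ext; simp [rightMul]
  · funext j
    rw [rightMul, genMat_map_evalMat, Matrix.map_map]
    rfl

theorem leftMul_comp_leftMul [DecidableEq m] {U U' : ι → Matrix m m S} (h : ∀ j, U j * U' j = 1) :
    (leftMul U').comp (leftMul U) = RingHom.id _ := by
  rw [leftMul, evalMat_comp_leftMul]
  refine MvPolynomial.ringHom_ext (by simp) fun x => ?_
  rw [evalMat_X, ← Matrix.mul_assoc, ← Matrix.map_mul, h,
    Matrix.map_one _ (map_zero _) (map_one _)]
  simp [genMat]

theorem rightMul_comp_rightMul [DecidableEq m] {Z Z' : ι → Matrix m m S}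
    (h : ∀ j, Z' j * Z j = 1) :
    (rightMul Z').comp (rightMul Z) = RingHom.id _ := by
  rw [rightMul, evalMat_comp_rightMul]
  refine MvPolynomial.ringHom_ext (by simp) fun x => ?_
  rw [evalMat_X, Matrix.mul_assoc, ← Matrix.map_mul, h,
    Matrix.map_one _ (map_zero _) (map_one _)]
  simp [genMat]

theorem map_comp_leftMul_eq_comp_twist (F : S →+* S) (A U : ι → Matrix m m S)
    (hFU : ∀ j, (U j).map F = A j * U j) :
    (MvPolynomial.map F).comp (leftMul U) = (leftMul U).comp (twist F A) := by
  have h1 : (leftMul U).comp (twist F A) = evalMat (C.comp F)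
      fun j => (A j).map C * ((U j).map C * genMat ι m S j) := by
    rw [twist, comp_evalMat]
    congr 1
    · ext; simp [leftMul]
    · funext j
      rw [Matrix.map_mul, leftMul, genMat_map_evalMat, Matrix.map_map]
      congr 2
      funext x
      exact evalMat_C _ _ x
  rw [h1, leftMul, comp_evalMat]
  have h2 : ∀ j, ((U j).map C * genMat ι m S j).map (MvPolynomial.map F) =
      (A j).map C * ((U j).map C * genMat ι m S j) := fun j => by
    have h3 : ((U j).map (C (σ := ι × m × m))).map (MvPolynomial.map F) = ((U j).map F).map C := by
      ext; simp
    rw [Matrix.map_mul, genMat_map_map, h3, hFU, Matrix.map_mul, Matrix.mul_assoc]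
  have h4 : (MvPolynomial.map F).comp C = (C (σ := ι × m × m)).comp F := by ext; simp
  rw [h4, funext h2]

theorem mem_range_map_of_mul {A : Subring S} {P Q : Matrix m m (MvPolynomial (ι × m × m) S)}
    (hP : ∀ p q, P p q ∈ (MvPolynomial.map (σ := ι × m × m) A.subtype).range)
    (hQ : ∀ p q, Q p q ∈ (MvPolynomial.map (σ := ι × m × m) A.subtype).range) (p q : m) :
    (P * Q) p q ∈ (MvPolynomial.map (σ := ι × m × m) A.subtype).range := by
  rw [Matrix.mul_apply]
  exact sum_mem fun r _ => mul_mem (hP _ _) (hQ _ _)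

theorem C_mem_range_map {V : Type*} {A : Subring S} {a : S} (ha : a ∈ A) :
    C a ∈ (MvPolynomial.map (σ := V) A.subtype).range := ⟨C ⟨a, ha⟩, by simp⟩

theorem X_mem_range_map {V : Type*} (A : Subring S) (v : V) :
    X v ∈ (MvPolynomial.map (σ := V) A.subtype).range := ⟨X v, by simp⟩

theorem relSpan_map_rightMul_le (T : Subring S) (U Z : ι → Matrix m m S)
    (hZ : ∀ j p q, Z j p q ∈ T) :
    (relSpan T (matFam fun j => U j * Z j)).map (rightMul Z) ≤ relSpan T (matFam U) := by
  refine relSpan_map_le _ (fun a ha => ?_) (fun v => ?_) (RingHom.id S) ?_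
  · rw [rightMul, evalMat_C]
    exact C_mem_range_map ha
  · rw [rightMul, evalMat_X]
    exact mem_range_map_of_mul (fun p q => X_mem_range_map T _)
      (fun p q => C_mem_range_map (hZ _ _ _)) _ _
  · exact (evalMat_comp_rightMul (RingHom.id S) U Z).trans
      (by rw [RingHom.id_comp]; simp only [RingHom.coe_id, Matrix.map_id]; rfl)

/-- The relations of the matrices `U i` over the rings `T i` are eventually generated by the
translates of the preceding ones. -/
theorem exists_relSpan_le {Ω : Type*} [Finite ι] [DecidableEq m] [Field Ω] [Algebra Ω S]
    {F G : S →+* S} (σΩ : Ω →+* Ω)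
    (hGσ : ∀ a, G (algebraMap Ω S a) = algebraMap Ω S (σΩ a)) (hs : DiffSimple F)
    (hconst : ∀ t, F t = t → t ∈ (algebraMap Ω S).range)
    (T : ℕ → Subring S) (hFT : ∀ i, ∀ x ∈ T i, F x ∈ T i) (hGT : ∀ i, ∀ x ∈ T i, G x ∈ T (i + 1))
    (hΩT : ∀ i a, algebraMap Ω S a ∈ T i) (A U : ℕ → ι → Matrix m m S)
    (hA : ∀ i j p q, A i j p q ∈ T i) (hU : ∀ i j, (U i j).det = 1)
    (hFU : ∀ i j, (U i j).map F = A i j * U i j) (hGU : ∀ i j, (U i j).map G = U (i + 1) j) :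
    ∃ e, ∀ i, e ≤ i → ∀ ζ : ι → Matrix m m Ω, (∀ j, (ζ j).det = 1) →
      relSpan (T (i + 1)) (matFam fun j => U (i + 1) j * ((ζ j).map σΩ).map (algebraMap Ω S)) ≤
        (relSpan (T i) (matFam fun j => U i j * (ζ j).map (algebraMap Ω S))).map
          (MvPolynomial.map G) := by
  let R : ℕ → Ideal (MvPolynomial (ι × m × m) S) := fun i => relSpan (T i) (matFam (U i))
  have hRG : ∀ i, (R i).map (MvPolynomial.map G) ≤ R (i + 1) := fun i => by
    refine relSpan_map_le _ (fun a ha => ?_) (fun v => ?_) G ?_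
    · rw [map_C]
      exact C_mem_range_map (hGT i a ha)
    · rw [map_X]
      exact X_mem_range_map _ _
    · exact MvPolynomial.ringHom_ext (by simp) (by simp [matFam, ← hGU])
  have hRF : ∀ i, (R i).map (twist F (A i)) ≤ R i := fun i => by
    refine relSpan_map_le _ (fun a ha => ?_) (fun v => ?_) F ?_
    · rw [twist, evalMat_C]
      exact C_mem_range_map (hFT i a ha)
    · rw [twist, evalMat_X]
      exact mem_range_map_of_mul (fun p q => C_mem_range_map (hA _ _ _ _))
        (fun p q => X_mem_range_map _ _) _ _
    · exact evalMat_twist F (A i) (RingHom.id S) F (by simp) (U i) (by simpa using hFU i)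
  let J : ℕ → Ideal (MvPolynomial (ι × m × m) S) := fun i => (R i).map (leftMul (U i))
  let I : ℕ → Ideal (MvPolynomial (ι × m × m) Ω) := fun i =>
    (J i).comap (MvPolynomial.map (algebraMap Ω S))
  have hJ : ∀ i, (I i).map (MvPolynomial.map (algebraMap Ω S)) = J i := fun i => by
    refine le_antisymm Ideal.map_comap_le (hs.le_map_comap hconst (J i) ?_)
    have : J i ≤ (J i).comap (MvPolynomial.map F) := by
      rw [← Ideal.map_le_iff_le_comap, Ideal.map_map,
        map_comp_leftMul_eq_comp_twist F (A i) (U i) (hFU i), ← Ideal.map_map]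
      exact Ideal.map_mono (hRF i)
    exact this
  have hGl : ∀ i, (MvPolynomial.map G).comp (leftMul (U i)) =
      (leftMul (U (i + 1))).comp (MvPolynomial.map G) := fun i => by
    rw [map_comp_leftMul]
    simp only [hGU]
  have hGalg : (MvPolynomial.map (σ := ι × m × m) (algebraMap Ω S)).comp (MvPolynomial.map σΩ) =
      (MvPolynomial.map G).comp (MvPolynomial.map (algebraMap Ω S)) :=
    MvPolynomial.ringHom_ext (by simp [hGσ]) (by simp)
  have hJG : ∀ i, (J i).map (MvPolynomial.map G) ≤ J (i + 1) := fun i => by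
    rw [Ideal.map_map, hGl, ← Ideal.map_map]
    exact Ideal.map_mono (hRG i)
  obtain ⟨e, he⟩ := MvPolynomial.exists_map_eq_of_map_le σΩ I fun i p hp => by
    have := hJG i (Ideal.mem_map_of_mem (MvPolynomial.map G) hp)
    rw [← RingHom.comp_apply, ← hGalg] at this
    exact this
  refine ⟨e, fun i hi ζ hζ => ?_⟩
  have hR : R (i + 1) ≤ (R i).map (MvPolynomial.map G) := by
    have h1 : J (i + 1) = ((R i).map (MvPolynomial.map G)).map (leftMul (U (i + 1))) := by
      rw [← hJ, ← he i hi, Ideal.map_map, hGalg, ← Ideal.map_map, hJ, Ideal.map_map, hGl,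
        ← Ideal.map_map]
    have h2 := congrArg (Ideal.map (leftMul fun j => (U (i + 1) j).adjugate)) h1
    rw [Ideal.map_map, Ideal.map_map, leftMul_comp_leftMul fun j => by
      rw [Matrix.mul_adjugate, hU, one_smul], Ideal.map_id, Ideal.map_id] at h2
    exact h2.le
  let Z : ι → Matrix m m S := fun j => (ζ j).map (algebraMap Ω S)
  let Z' : ι → Matrix m m S := fun j => (ζ j).adjugate.map (algebraMap Ω S)
  have hZZ : ∀ j, Z j * Z' j = 1 := fun j => by
    rw [← Matrix.map_mul, Matrix.mul_adjugate, hζ, one_smul,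
      Matrix.map_one _ (map_zero _) (map_one _)]
  have hGZ : ∀ M : Matrix m m Ω, (M.map σΩ).map (algebraMap Ω S) = (M.map (algebraMap Ω S)).map G :=
    fun M => by ext; simp [hGσ]
  have hZZG : ∀ j, (Z j).map G * (Z' j).map G = 1 := fun j => by
    rw [← Matrix.map_mul, hZZ, Matrix.map_one _ (map_zero _) (map_one _)]
  simp only [hGZ]
  calc relSpan (T (i + 1)) (matFam fun j => U (i + 1) j * (Z j).map G)
      = ((relSpan (T (i + 1)) (matFam fun j => U (i + 1) j * (Z j).map G)).map
          (rightMul fun j => (Z j).map G)).map (rightMul fun j => (Z' j).map G) := by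
        rw [Ideal.map_map, rightMul_comp_rightMul fun j => mul_eq_one_comm.1 (hZZG j),
          Ideal.map_id]
    _ ≤ (R (i + 1)).map (rightMul fun j => (Z' j).map G) :=
        Ideal.map_mono (relSpan_map_rightMul_le _ _ _ fun j p q => by
          rw [← hGZ]; exact hΩT _ _)
    _ ≤ ((R i).map (MvPolynomial.map G)).map (rightMul fun j => (Z' j).map G) := Ideal.map_mono hR
    _ = ((R i).map (rightMul Z')).map (MvPolynomial.map G) := by
        rw [Ideal.map_map, Ideal.map_map, map_comp_rightMul]
    _ ≤ (relSpan (T i) (matFam fun j => U i j * Z j)).map (MvPolynomial.map G) := by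
        refine Ideal.map_mono ?_
        have := relSpan_map_rightMul_le (T i) (fun j => U i j * Z j) Z' fun j p q => hΩT _ _
        simpa only [Matrix.mul_assoc, hZZ, Matrix.mul_one] using this

end

section Level

variable {K S Ω m : Type*} [Field K] [CommRing S] [Field Ω] [Algebra K S] [Algebra Ω S] [Fintype m]

theorem twist_mem_ker {ι : Type*} {φ : K →+* K} {F : S →+* S}
    (hF : ∀ a, F (algebraMap K S a) = algebraMap K S (φ a))
    {A : ι → Matrix m m K} {U : ι → Matrix m m S}
    (hFU : ∀ j, (U j).map F = (A j).map (algebraMap K S) * U j)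
    {p : MvPolynomial (ι × m × m) K} (hp : p ∈ RingHom.ker (evalMat (algebraMap K S) U)) :
    twist φ A p ∈ RingHom.ker (evalMat (algebraMap K S) U) := by
  rw [RingHom.mem_ker] at hp ⊢
  rw [← RingHom.comp_apply, evalMat_twist φ A _ F hF U hFU, RingHom.comp_apply, hp, map_zero]

theorem map_mul_of_fixed {F : S →+* S} (hΩ : ∀ a : Ω, F (algebraMap Ω S a) = algebraMap Ω S a)
    {A U : Matrix m m S} (hFU : U.map F = A * U) (z : Matrix m m Ω) :
    (U * z.map (algebraMap Ω S)).map F = A * (U * z.map (algebraMap Ω S)) := by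
  have : (z.map (algebraMap Ω S)).map F = z.map (algebraMap Ω S) := by ext; simp [hΩ]
  rw [Matrix.map_mul, hFU, this, Matrix.mul_assoc]

variable [IsAlgClosed Ω] [DecidableEq m]

theorem exists_isDiffMaximal_ker {ι : Type*} [Finite ι] (φ : K →+* K) {F : S →+* S}
    (hF : ∀ a, F (algebraMap K S a) = algebraMap K S (φ a)) (hs : DiffSimple F)
    (hΩ : ∀ a : Ω, F (algebraMap Ω S a) = algebraMap Ω S a)
    (hconst : ∀ t, F t = t → t ∈ (algebraMap Ω S).range)
    (A : ι → Matrix m m K) (U : ι → Matrix m m S) (hU : ∀ j, (U j).det = 1)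
    (hFU : ∀ j, (U j).map F = (A j).map (algebraMap K S) * U j) :
    ∃ z : ι → Matrix m m Ω, (∀ j, (z j).det = 1) ∧
      RingHom.ker (evalMat (algebraMap K S) U) ≤
        RingHom.ker (evalMat (algebraMap K S) fun j => U j * (z j).map (algebraMap Ω S)) ∧
      IsDiffMaximal (twist φ A)
        (RingHom.ker (evalMat (algebraMap K S) fun j => U j * (z j).map (algebraMap Ω S))) := by
  have := hs.nontrivial
  obtain ⟨M, hle, hM⟩ := exists_le_isDiffMaximal (twist φ A)
    (RingHom.ker (evalMat (algebraMap K S) U)) (RingHom.ker_ne_top _)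
    fun p hp => twist_mem_ker hF hFU hp
  obtain ⟨z, hz⟩ := exists_zero_of_stable φ F hF hs hconst A U hU hFU M hM.1 hM.2.1
  have heq : RingHom.ker (evalMat (algebraMap K S) fun j => U j * (z j).map (algebraMap Ω S)) =
      M := (hM.2.2 _ hz fun p hp => twist_mem_ker hF
        (fun j => map_mul_of_fixed hΩ (hFU j) (z j)) hp).resolve_right (RingHom.ker_ne_top _)
  refine ⟨z, fun j => ?_, heq ▸ hle, heq ▸ hM⟩
  have h1 : (genMat ι m K j).det - 1 ∈ RingHom.ker (evalMat (algebraMap K S) U) := by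
    rw [RingHom.mem_ker, map_sub, map_one, RingHom.map_det, RingHom.mapMatrix_apply,
      genMat_map_evalMat, hU, sub_self]
  have h2 := hz _ (hle h1)
  rw [map_sub, map_one, RingHom.map_det, RingHom.mapMatrix_apply, genMat_map_evalMat,
    Matrix.det_mul, hU, one_mul, sub_eq_zero, ← RingHom.mapMatrix_apply, ← RingHom.map_det] at h2
  exact (algebraMap Ω S).injective (h2.trans (map_one _).symm)

theorem exists_isDiffMaximal_ker_fin (φ : K →+* K) {F : S →+* S}
    (hF : ∀ a, F (algebraMap K S a) = algebraMap K S (φ a)) (hs : DiffSimple F)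
    (hΩ : ∀ a : Ω, F (algebraMap Ω S a) = algebraMap Ω S a)
    (hconst : ∀ t, F t = t → t ∈ (algebraMap Ω S).range)
    (A : ℕ → Matrix m m K) (U : ℕ → Matrix m m S) (hU : ∀ j, (U j).det = 1)
    (hFU : ∀ j, (U j).map F = (A j).map (algebraMap K S) * U j) (e : ℕ) :
    ∃ z : ℕ → Matrix m m Ω, (∀ j, (z j).det = 1) ∧
      IsDiffMaximal (twist φ fun j : Fin e => A j) (RingHom.ker (evalMat (algebraMap K S)
        fun j : Fin e => U j * (z j).map (algebraMap Ω S))) ∧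
      IsDiffMaximal (twist φ fun j : Fin (e + 1) => A j) (RingHom.ker (evalMat (algebraMap K S)
        fun j : Fin (e + 1) => U j * (z j).map (algebraMap Ω S))) := by
  have hnt := hs.nontrivial
  have hdet : ∀ z : Matrix m m Ω, z.det = 1 → (z.map (algebraMap Ω S)).det = 1 := fun z hz => by
    rw [← RingHom.mapMatrix_apply, ← RingHom.map_det, hz, map_one]
  obtain ⟨z₀', h1', -, h3⟩ := exists_isDiffMaximal_ker φ hF hs hΩ hconst (fun j : Fin e => A j)
    (fun j => U j) (fun j => hU j) fun j => hFU j
  obtain ⟨z₀, h1, hz₀, hz₀'⟩ : ∃ z₀ : ℕ → Matrix m m Ω, (∀ j, (z₀ j).det = 1) ∧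
      (∀ j : Fin e, z₀ j = z₀' j) ∧ z₀ e = 1 := by
    refine ⟨fun j => if h : j < e then z₀' ⟨j, h⟩ else 1, fun j => ?_, fun j => by simp, by simp⟩
    dsimp only
    split_ifs
    exacts [h1' _, Matrix.det_one]
  simp only [← hz₀] at h3
  obtain ⟨z₁', g1', g2, g3⟩ := exists_isDiffMaximal_ker φ hF hs hΩ hconst
    (fun j : Fin (e + 1) => A j) (fun j => U j * (z₀ j).map (algebraMap Ω S))
    (fun j => by rw [Matrix.det_mul, hU, hdet _ (h1 _), one_mul])
    fun j => map_mul_of_fixed hΩ (hFU j) (z₀ j)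
  obtain ⟨z₁, g1, hz₁⟩ : ∃ z₁ : ℕ → Matrix m m Ω, (∀ j, (z₁ j).det = 1) ∧
      (∀ j : Fin (e + 1), z₁ j = z₁' j) := by
    refine ⟨fun j => if h : j < e + 1 then z₁' ⟨j, h⟩ else 1, fun j => ?_, fun j => dif_pos j.2⟩
    dsimp only
    split_ifs
    exacts [g1' _, Matrix.det_one]
  simp only [← hz₁, Matrix.mul_assoc, ← Matrix.map_mul] at g2 g3
  refine ⟨fun j => z₀ j * z₁ j, fun j => by rw [Matrix.det_mul, h1, g1, one_mul], ?_, g3⟩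
  suffices h : RingHom.ker (evalMat (algebraMap K S)
        fun j : Fin e => U j * (z₀ j * z₁ j).map (algebraMap Ω S)) =
      RingHom.ker (evalMat (algebraMap K S)
        fun j : Fin e => U j * (z₀ j).map (algebraMap Ω S)) by rw [h]; exact h3
  refine (h3.2.2 _ (fun p hp => ?_) fun p hp => twist_mem_ker (A := fun j : Fin e => A j)
    (U := fun j : Fin e => U j * (z₀ j * z₁ j).map (algebraMap Ω S)) hF
    (fun j => map_mul_of_fixed hΩ (hFU j) _) hp).resolve_right (RingHom.ker_ne_top _)
  have hren : ∀ W : ℕ → Matrix m m S, (evalMat (algebraMap K S) fun j : Fin e => W j) p =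
      (evalMat (algebraMap K S) fun j : Fin (e + 1) => W j)
        (rename (fun x => (x.1.castSucc, x.2)) p) := by
    intro W
    simp only [evalMat, coe_eval₂Hom, eval₂_rename]
    rfl
  rw [RingHom.mem_ker, hren fun j => U j * (z₀ j).map (algebraMap Ω S)] at hp
  have := g2 hp
  rw [RingHom.mem_ker] at this ⊢
  rw [hren fun j => U j * (z₀ j * z₁ j).map (algebraMap Ω S)]
  exact this

end Level

section GenRing

variable {S m : Type*} [CommRing S]

/-- The subring generated by a set and the entries of the first `n` matrices of a sequence. -/
def genRing (X : Set S) (U : ℕ → Matrix m m S) (n : ℕ) : Subring S :=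
  Subring.closure (X ∪ {x | ∃ j < n, ∃ p q, U j p q = x})

variable {X : Set S} {U : ℕ → Matrix m m S} {n : ℕ}

theorem subset_genRing : X ⊆ genRing X U n := fun _ hx => Subring.subset_closure (Or.inl hx)

theorem entry_mem_genRing {j : ℕ} (hj : j < n) (p q : m) : U j p q ∈ genRing X U n :=
  Subring.subset_closure (Or.inr ⟨j, hj, p, q, rfl⟩)

theorem genRing_le {T : Subring S} (hX : X ⊆ T) (hU : ∀ j < n, ∀ p q, U j p q ∈ T) :
    genRing X U n ≤ T := by
  refine Subring.closure_le.2 (Set.union_subset hX ?_)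
  rintro _ ⟨j, hj, p, q, rfl⟩
  exact hU j hj p q

theorem genRing_mono {X' : Set S} {n' : ℕ} (hX : X ⊆ X') (hn : n ≤ n') :
    genRing X U n ≤ genRing X' U n' :=
  genRing_le (hX.trans subset_genRing) fun _ hj _ _ => entry_mem_genRing (hj.trans_le hn) _ _

theorem map_mem_genRing {n' : ℕ} {E : S →+* S} (hX : ∀ x ∈ X, E x ∈ genRing X U n')
    (hU : ∀ j < n, ∀ p q, E (U j p q) ∈ genRing X U n') {x : S} (hx : x ∈ genRing X U n) :
    E x ∈ genRing X U n' := by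
  have : genRing X U n ≤ (genRing X U n').comap E := genRing_le hX hU
  exact this hx

theorem genRing_eq_range {K : Type*} [Field K] [Algebra K S] (U : ℕ → Matrix m m S) (n : ℕ) :
    genRing (Set.range (algebraMap K S)) U n =
      (evalMat (algebraMap K S) fun j : Fin n => U j).range := by
  refine le_antisymm (genRing_le ?_ fun j hj p q => ?_) ?_
  · rintro _ ⟨a, rfl⟩
    exact ⟨C a, evalMat_C _ _ _⟩
  · exact ⟨MvPolynomial.X (⟨j, hj⟩, p, q), evalMat_X _ _ _⟩
  · rintro _ ⟨p, rfl⟩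
    induction p using MvPolynomial.induction_on with
    | C a => rw [evalMat_C]; exact subset_genRing ⟨a, rfl⟩
    | add p q hp hq => rw [map_add]; exact add_mem hp hq
    | mul_X p v hp =>
      rw [map_mul, evalMat_X]
      exact mul_mem hp (entry_mem_genRing v.1.2 _ _)

theorem exists_eval_eq_of_mem_genRing_succ [Fintype m] [DecidableEq m] {Z : Matrix m m S}
    (hZ : ∀ p q, Z p q ∈ genRing X U n) (hdet : Z.det = 1) {x : S} (hx : x ∈ genRing X U (n + 1)) :
    ∃ p, eval₂ (genRing X U n).subtype (matFam fun _ : Unit => U n * Z) p = x := by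
  let f := eval₂Hom (genRing X U n).subtype (matFam fun _ : Unit => U n * Z)
  have hC : ∀ a ∈ genRing X U n, a ∈ f.range := fun a ha => ⟨C ⟨a, ha⟩, by simp [f]⟩
  suffices genRing X U (n + 1) ≤ f.range from this hx
  refine genRing_le (fun a ha => hC a (subset_genRing ha)) fun j hj p q => ?_
  rcases Nat.lt_succ_iff_lt_or_eq.1 hj with hj | rfl
  · exact hC _ (entry_mem_genRing hj _ _)
  · have hadj : ∀ p q, Z.adjugate p q ∈ genRing X U j := fun p q => by
      have : Z = (Matrix.of fun p q => (⟨Z p q, hZ p q⟩ : genRing X U j)).map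
        (genRing X U j).subtype := rfl
      rw [this, ← RingHom.mapMatrix_apply, ← RingHom.map_adjugate]
      exact Subtype.prop _
    have h1 : U j = U j * Z * Z.adjugate := by
      rw [Matrix.mul_assoc, Matrix.mul_adjugate, hdet, one_smul, Matrix.mul_one]
    rw [h1, Matrix.mul_apply]
    refine sum_mem fun r _ => mul_mem ⟨MvPolynomial.X ((), p, r), ?_⟩ (hC _ (hadj _ _))
    simp [f, matFam]

end GenRing

theorem RingHom.eq_of_eq_sup {S T : Type*} [CommRing S] [CommRing T] {C P B : Subring S}
    (hC : C = P ⊔ B) {f g : C →+* T} (hP : ∀ x (h : x ∈ C), x ∈ P → f ⟨x, h⟩ = g ⟨x, h⟩)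
    (hB : ∀ x (h : x ∈ C), x ∈ B → f ⟨x, h⟩ = g ⟨x, h⟩) : f = g := by
  subst hC
  have hle : P ⊔ B ≤ (f.eqLocus g).map (P ⊔ B).subtype :=
    sup_le (fun x hx => ⟨⟨x, le_sup_left (a := P) hx⟩, hP _ _ hx, rfl⟩)
      (fun x hx => ⟨⟨x, le_sup_right (a := P) hx⟩, hB _ _ hx, rfl⟩)
  ext x
  obtain ⟨y, hy, hyx⟩ := hle x.2
  obtain rfl : y = x := Subtype.ext hyx
  exact hy

section Retraction

variable {S : Type*} [CommRing S] {F : S →+* S} {P B : Subring S}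

theorem sum_mul_map_eq_zero (hF : ∀ x ∈ P, F x ∈ P) (hs : DiffSimple (F.restrict P P hF))
    (hB : ∀ b ∈ B, F b = b) (g : B →+* S)
    (hc : ∀ c ∈ P, F c = c → ∃ h : c ∈ B, g ⟨c, h⟩ = c) {κ : Type*} (c : κ → B) (x : κ →₀ P)
    (hx : x.sum (fun i r => (r : S) * c i) = 0) : x.sum (fun i r => (r : S) * g (c i)) = 0 := by
  have := hs.relation_mem_span_fixed F (fun _ => rfl) (fun i => (c i : S))
    (fun i => hB _ (c i).2) x hx
  clear hx
  induction this using Submodule.span_induction with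
  | mem y hy =>
    have h0 : ∀ i, ∃ h : (y i : S) ∈ B, g ⟨y i, h⟩ = y i := fun i =>
      hc _ (y i).2 (congrArg Subtype.val (hy.2 i))
    have h1 : ∑ i ∈ y.support, (⟨y i, (h0 i).1⟩ : B) * c i = 0 := by
      have := hy.1
      rw [Finsupp.sum] at this
      apply Subtype.ext
      rw [AddSubmonoidClass.coe_finsetSum]
      exact this
    have h2 := congrArg g h1
    rw [map_sum, map_zero] at h2
    rw [Finsupp.sum, ← h2]
    refine Finset.sum_congr rfl fun i _ => ?_
    rw [map_mul, (h0 i).2]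
  | zero => exact Finsupp.sum_zero_index
  | add y z _ _ hy hz =>
    rw [Finsupp.sum_add_index' (by simp) (by simp [add_mul]), hy, hz, add_zero]
  | smul a y _ hy =>
    rw [Finsupp.sum_smul_index' (by simp)]
    simp only [smul_eq_mul, Subring.coe_mul, mul_assoc]
    rw [← Finsupp.mul_sum, hy, mul_zero]

theorem exists_retraction (hF : ∀ x ∈ P, F x ∈ P) (hs : DiffSimple (F.restrict P P hF))
    (hB : ∀ b ∈ B, F b = b) (g : B →+* S)
    (hc : ∀ c ∈ P, F c = c → ∃ h : c ∈ B, g ⟨c, h⟩ = c) (hg : ∀ b, g b ∈ P) {C : Subring S}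
    (hC : C = P ⊔ B) :
    ∃ ρ : C →+* P, (∀ x (h : x ∈ C), x ∈ P → (ρ ⟨x, h⟩ : S) = x) ∧
      ∀ x (h : x ∈ C) (h' : x ∈ B), (ρ ⟨x, h⟩ : S) = g ⟨x, h'⟩ := by
  have hPC : P ≤ C := hC ▸ le_sup_left
  have hBC : B ≤ C := hC ▸ le_sup_right
  let f : MvPolynomial B P →+* C := eval₂Hom (Subring.inclusion hPC) (Subring.inclusion hBC)
  let f' : MvPolynomial B P →+* P := eval₂Hom (RingHom.id P) (fun b => ⟨g b, hg b⟩)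
  have hf : Function.Surjective f := by
    have : C ≤ f.range.map C.subtype := by
      refine hC.le.trans (sup_le (fun x hx => ?_) fun x hx => ?_)
      · exact ⟨Subring.inclusion hPC ⟨x, hx⟩, ⟨MvPolynomial.C ⟨x, hx⟩, by simp [f]⟩, rfl⟩
      · exact ⟨Subring.inclusion hBC ⟨x, hx⟩, ⟨X ⟨x, hx⟩, by simp [f]⟩, rfl⟩
    intro x
    obtain ⟨y, ⟨p, hp⟩, hyx⟩ := this x.2
    exact ⟨p, hp.trans (Subtype.ext hyx)⟩
  have hker : RingHom.ker f ≤ RingHom.ker f' := by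
    intro p hp
    rw [RingHom.mem_ker] at hp ⊢
    let x : (B →₀ ℕ) →₀ P := Finsupp.onFinset p.support (fun d => coeff d p)
      (fun d hd => mem_support_iff.2 hd)
    let c : (B →₀ ℕ) → B := fun d => ∏ i ∈ d.support, i ^ d i
    have h1 : x.sum (fun i r => (r : S) * c i) = f p := by
      rw [Finsupp.onFinset_sum _ (by simp), coe_eval₂Hom, eval₂_eq, AddSubmonoidClass.coe_finsetSum]
      simp [c]
    have h2 : x.sum (fun i r => (r : S) * g (c i)) = f' p := by
      rw [Finsupp.onFinset_sum _ (by simp), coe_eval₂Hom, eval₂_eq, AddSubmonoidClass.coe_finsetSum]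
      simp [c]
    rw [hp] at h1
    exact Subtype.ext (h2.symm.trans (sum_mul_map_eq_zero hF hs hB g hc c x h1))
  let ρ := RingHom.liftOfSurjective f hf ⟨f', hker⟩
  have hρ : ∀ p, ρ (f p) = f' p := fun p => by
    simp [ρ, RingHom.liftOfRightInverse_comp_apply]
  refine ⟨ρ, fun x h hx => ?_, fun x h hx => ?_⟩
  · have := hρ (MvPolynomial.C ⟨x, hx⟩)
    simp only [f, f', coe_eval₂Hom, eval₂_C] at this
    exact congrArg Subtype.val this
  · have := hρ (X ⟨x, hx⟩)
    simp only [f, f', coe_eval₂Hom, eval₂_X] at this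
    exact congrArg Subtype.val this

theorem relIdeal_le_map {P' : Subring S} (hF : ∀ x ∈ P', F x ∈ P')
    (hs : DiffSimple (F.restrict P' P' hF)) (hc : ∀ c ∈ P', F c = c → c ∈ P)
    (hB : ∀ b ∈ B, F b = b) (hPP : P ≤ P') {V : Type*} (t : V → S) (ht : ∀ v, t v ∈ P')
    (hgen : ∀ x ∈ P', ∃ p, eval₂ P.subtype t p = x) {C : Subring S} (hPC : P ≤ C)
    (hC : C = P ⊔ B) :
    relIdeal C t ≤ (relIdeal P t).map (MvPolynomial.map (Subring.inclusion hPC)) := by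
  have hBC : B ≤ C := hC ▸ le_sup_right
  let j : MvPolynomial V P →+* MvPolynomial V C := MvPolynomial.map (Subring.inclusion hPC)
  let f : MvPolynomial B (MvPolynomial V P) →+* MvPolynomial V C :=
    eval₂Hom j (fun b => MvPolynomial.C (Subring.inclusion hBC b))
  have hf : Function.Surjective f := by
    let Q : Subring (MvPolynomial V C) :=
      RingHom.range (R := MvPolynomial B (MvPolynomial V P)) f
    have h1 : C ≤ (Q.comap (MvPolynomial.C : C →+* MvPolynomial V C)).map C.subtype := by
      refine hC.le.trans (sup_le (fun x hx => ?_) fun x hx => ?_)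
      · exact ⟨Subring.inclusion hPC ⟨x, hx⟩, ⟨MvPolynomial.C (MvPolynomial.C ⟨x, hx⟩),
          by simp [f, j]⟩, rfl⟩
      · exact ⟨Subring.inclusion hBC ⟨x, hx⟩, ⟨X ⟨x, hx⟩, by simp [f]⟩, rfl⟩
    intro p
    change p ∈ Q
    induction p using MvPolynomial.induction_on with
    | C a =>
      obtain ⟨y, hy, hya⟩ := h1 a.2
      obtain rfl : y = a := Subtype.ext hya
      exact hy
    | add p q hp hq => exact add_mem hp hq
    | mul_X p v hp => exact mul_mem hp ⟨MvPolynomial.C (X v), by simp [f, j]⟩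
  intro p hp
  obtain ⟨q, rfl⟩ := hf p
  obtain ⟨ev, hev, hevC⟩ : ∃ ev : MvPolynomial V P →+* P',
      (∀ p, (ev p : S) = eval₂ P.subtype t p) ∧ ∀ a : P, (ev (MvPolynomial.C a) : S) = a := by
    let ev : MvPolynomial V P →+* P' :=
      eval₂Hom (Subring.inclusion hPP) fun v => ⟨t v, ht v⟩
    refine ⟨ev, fun p => ?_, fun a => by simp [ev]⟩
    have : (P'.subtype.comp ev) = eval₂Hom P.subtype t :=
      MvPolynomial.ringHom_ext (fun a => by simp [ev]) fun v => by simp [ev]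
    exact RingHom.congr_fun this p
  have hevs : Function.Surjective ev := fun x => by
    obtain ⟨p, hp⟩ := hgen x x.2
    exact ⟨p, Subtype.ext ((hev p).trans hp)⟩
  let x : (B →₀ ℕ) →₀ MvPolynomial V P := Finsupp.onFinset q.support (fun d => coeff d q)
      (fun d hd => mem_support_iff.2 hd)
  let c : (B →₀ ℕ) → B := fun d => ∏ i ∈ d.support, i ^ d i
  let cC : (B →₀ ℕ) → MvPolynomial V C := fun d => MvPolynomial.C (Subring.inclusion hBC (c d))
  have hx : f q = x.sum fun d r => j r * cC d := by
    rw [Finsupp.onFinset_sum _ (by simp), coe_eval₂Hom, eval₂_eq]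
    simp [cC, c]
  have hjt : ∀ r : MvPolynomial V P, eval₂ C.subtype t (j r) = ev r := fun r => by
    rw [hev, eval₂_map]; rfl
  have hrel : (x.mapRange ev (map_zero _)).sum (fun i r => (r : S) * c i) = 0 := by
    rw [Finsupp.sum_mapRange_index (by simp)]
    rw [hx, mem_relIdeal, ← coe_eval₂Hom, map_finsuppSum] at hp
    rw [← hp]
    refine Finsupp.sum_congr fun d _ => ?_
    rw [map_mul, coe_eval₂Hom, hjt]
    simp [cC]
  have key : ∀ z ∈ Submodule.span P' {y : (B →₀ ℕ) →₀ P' |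
      y.sum (fun i r => (r : S) * c i) = 0 ∧ ∀ i, F.restrict P' P' hF (y i) = y i},
      ∃ w : (B →₀ ℕ) →₀ MvPolynomial V P, w.mapRange ev (map_zero _) = z ∧
        w.sum (fun d r => j r * cC d) = 0 := by
    intro z hz
    induction hz using Submodule.span_induction with
    | mem y hy =>
      have hy2 : ∀ i, (y i : S) ∈ P := fun i => hc _ (y i).2 (congrArg Subtype.val (hy.2 i))
      let u : (B →₀ ℕ) →₀ MvPolynomial V P := Finsupp.onFinset y.support
        (fun i => MvPolynomial.C ⟨y i, hy2 i⟩) fun i hi => by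
          rw [Finsupp.mem_support_iff]
          rintro h
          refine hi ?_
          rw [← map_zero MvPolynomial.C]
          exact congrArg _ (Subtype.ext (congrArg (Subtype.val : P' → S) h))
      refine ⟨u, ?_, ?_⟩
      · ext i
        simp [u, hevC]
      · rw [Finsupp.onFinset_sum _ (by simp)]
        have := hy.1
        rw [Finsupp.sum] at this
        simp only [j, cC, map_C, ← map_mul, ← map_sum]
        rw [← map_zero MvPolynomial.C]
        congr 1
        apply Subtype.ext
        rw [AddSubmonoidClass.coe_finsetSum]
        exact this
    | zero => exact ⟨0, by simp, by simp⟩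
    | add y z _ _ hy hz =>
      obtain ⟨u, rfl, hu⟩ := hy
      obtain ⟨v, rfl, hv⟩ := hz
      refine ⟨u + v, by ext; simp, ?_⟩
      rw [Finsupp.sum_add_index' (by simp) (by simp [add_mul]), hu, hv, add_zero]
    | smul a y _ hy =>
      obtain ⟨u, rfl, hu⟩ := hy
      obtain ⟨b, rfl⟩ := hevs a
      refine ⟨b • u, by ext; simp, ?_⟩
      rw [Finsupp.sum_smul_index' (by simp)]
      simp only [smul_eq_mul, map_mul, mul_assoc]
      rw [← Finsupp.mul_sum, hu, mul_zero]
  obtain ⟨w, hw1, hw2⟩ := key _ (hs.relation_mem_span_fixed F (fun _ => rfl)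
    (fun i => (c i : S)) (fun i => hB _ (c i).2) _ hrel)
  have : f q = (x - w).sum fun d r => j r * cC d := by
    rw [Finsupp.sum_sub_index (by simp [sub_mul]), hw2, sub_zero, hx]
  rw [this]
  refine Ideal.sum_mem _ fun d _ => Ideal.mul_mem_right _ _ (Ideal.mem_map_of_mem _ ?_)
  rw [mem_relIdeal, ← hev]
  have := DFunLike.congr_fun hw1 d
  simp only [Finsupp.mapRange_apply] at this
  rw [Finsupp.sub_apply, map_sub, this, sub_self]
  rfl

end Retraction

section GenRingSup

variable {S m : Type*} [CommRing S] [Fintype m] [DecidableEq m]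

theorem genRing_union_eq_sup {X : Set S} {B : Subring S} {U Z : ℕ → Matrix m m S} {n : ℕ}
    (hZ : ∀ j < n, ∀ p q, Z j p q ∈ B) (hdet : ∀ j, (Z j).det = 1) :
    genRing (X ∪ B) U n = genRing X (fun j => U j * Z j) n ⊔ B := by
  refine le_antisymm (genRing_le (Set.union_subset ?_ fun _ hx => le_sup_right (a := genRing X _ n) hx) fun j hj p q => ?_)
    (sup_le (genRing_le (Set.subset_union_left.trans subset_genRing) fun j hj p q => ?_)
      (Set.subset_union_right.trans subset_genRing))
  · exact fun x hx => le_sup_left (a := genRing X (fun j => U j * Z j) n) (subset_genRing hx)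
  · have hadj : ∀ p q, (Z j).adjugate p q ∈ B := fun p q => by
      have : Z j = (Matrix.of fun p q => (⟨Z j p q, hZ j hj p q⟩ : B)).map B.subtype := rfl
      rw [this, ← RingHom.mapMatrix_apply, ← RingHom.map_adjugate]
      exact Subtype.prop _
    have h1 : U j = U j * Z j * (Z j).adjugate := by
      rw [Matrix.mul_assoc, Matrix.mul_adjugate, hdet, one_smul, Matrix.mul_one]
    rw [h1, Matrix.mul_apply]
    exact sum_mem fun r _ => mul_mem
      (le_sup_left (a := genRing X (fun j => U j * Z j) n) (entry_mem_genRing hj _ _))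
      (le_sup_right (a := genRing X (fun j => U j * Z j) n) (hadj _ _))
  · rw [Matrix.mul_apply]
    exact sum_mem fun r _ => mul_mem (entry_mem_genRing hj _ _)
      (subset_genRing (Or.inr (hZ j hj _ _)))

end GenRingSup

section Base

variable {K S m : Type*} [Field K] [CommRing S] [Algebra K S] [Fintype m] {φ : K →+* K}
  {F : S →+* S} {A : ℕ → Matrix m m K} {W : ℕ → Matrix m m S} {X : Set S} {n : ℕ}

theorem map_mem_genRing_of_twist (hF : ∀ a, F (algebraMap K S a) = algebraMap K S (φ a))
    (hFW : ∀ j, (W j).map F = (A j).map (algebraMap K S) * W j) (hX : ∀ x ∈ X, F x = x) :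
    ∀ x ∈ genRing (Set.range (algebraMap K S) ∪ X) W n,
      F x ∈ genRing (Set.range (algebraMap K S) ∪ X) W n := by
  intro x hx
  refine map_mem_genRing ?_ (fun j hj p q => ?_) hx
  · rintro _ (⟨a, rfl⟩ | hx)
    · rw [hF]; exact subset_genRing (Or.inl ⟨_, rfl⟩)
    · rw [hX _ hx]; exact subset_genRing (Or.inr hx)
  · rw [← Matrix.map_apply (f := F), hFW, Matrix.mul_apply]
    exact sum_mem fun r _ => mul_mem (subset_genRing (Or.inl ⟨_, rfl⟩)) (entry_mem_genRing hj _ _)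

theorem IsDiffMaximal.diffSimple_genRing [DecidableEq m]
    (hF : ∀ a, F (algebraMap K S a) = algebraMap K S (φ a))
    (hFW : ∀ j, (W j).map F = (A j).map (algebraMap K S) * W j)
    (h : IsDiffMaximal (twist φ fun j : Fin n => A j)
      (RingHom.ker (evalMat (algebraMap K S) fun j : Fin n => W j)))
    (hst : ∀ x ∈ genRing (Set.range (algebraMap K S)) W n,
      F x ∈ genRing (Set.range (algebraMap K S)) W n) :
    DiffSimple (F.restrict _ _ hst) := by
  have hr := genRing_eq_range (K := K) W n
  let f : MvPolynomial (Fin n × m × m) K →+* genRing (Set.range (algebraMap K S)) W n :=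
    (evalMat (algebraMap K S) fun j : Fin n => W j).codRestrict _ fun p => hr.ge ⟨p, rfl⟩
  have hker : RingHom.ker f = RingHom.ker (evalMat (algebraMap K S) fun j : Fin n => W j) := by
    ext p
    exact Subtype.ext_iff
  refine IsDiffMaximal.diffSimple (τ := twist φ fun j : Fin n => A j) (f := f) (fun p => ?_)
    (fun x => ?_) (hker ▸ h)
  · apply Subtype.ext
    exact RingHom.congr_fun (evalMat_twist φ (fun j : Fin n => A j) (algebraMap K S) F hF
      (fun j : Fin n => W j) fun j => hFW j) p
  · obtain ⟨p, hp⟩ := hr.le x.2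
    exact ⟨p, Subtype.ext hp⟩

theorem DiffSimple.fixed_mem_genRing [DecidableEq m] [IsAlgClosed (constSubfield K φ)]
    (hF : ∀ a, F (algebraMap K S a) = algebraMap K S (φ a))
    {hst : ∀ x ∈ genRing (Set.range (algebraMap K S)) W n,
      F x ∈ genRing (Set.range (algebraMap K S)) W n} (hs : DiffSimple (F.restrict _ _ hst)) :
    ∀ c ∈ genRing (Set.range (algebraMap K S)) W n, F c = c →
      ∃ a : K, φ a = a ∧ algebraMap K S a = c := by
  intro c hc hFc
  let P := genRing (Set.range (algebraMap K S)) W n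
  let i : K →+* P := (algebraMap K S).codRestrict _ fun a => subset_genRing ⟨a, rfl⟩
  let : Algebra K P := i.toAlgebra
  have hr := genRing_eq_range (K := K) W n
  let f : MvPolynomial (Fin n × m × m) K →ₐ[K] P :=
    { (evalMat (algebraMap K S) fun j : Fin n => W j).codRestrict P fun p => hr.ge ⟨p, rfl⟩ with
      commutes' := fun a => Subtype.ext (evalMat_C _ _ _) }
  have : Algebra.FiniteType K P := Algebra.FiniteType.of_surjective f fun x => by
    obtain ⟨p, hp⟩ := hr.le x.2
    exact ⟨p, Subtype.ext hp⟩
  obtain ⟨a, ha, hac⟩ := DiffSimple.fixed_mem_of_finiteType (P := P) φ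
    (fun a => Subtype.ext (hF a)) hs ⟨c, hc⟩ (Subtype.ext hFc)
  exact ⟨a, ha, congrArg Subtype.val hac⟩

end Base

theorem isDiffMaximal_ker_retraction {S : Type*} [CommRing S] {F : S →+* S} {P B C : Subring S}
    (hFP : ∀ x ∈ P, F x ∈ P) (hs : DiffSimple (F.restrict P P hFP)) (hB : ∀ b ∈ B, F b = b)
    {g : B →+* S} (hFg : ∀ b, F (g b) = g b) (hC : C = P ⊔ B) (hFC : ∀ x ∈ C, F x ∈ C)
    {ρ : C →+* P} (hρP : ∀ x (h : x ∈ C), x ∈ P → (ρ ⟨x, h⟩ : S) = x)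
    (hρB : ∀ x (h : x ∈ C) (h' : x ∈ B), (ρ ⟨x, h⟩ : S) = g ⟨x, h'⟩) :
    IsDiffMaximal (F.restrict C C hFC) (RingHom.ker ρ) := by
  have hPC : P ≤ C := hC ▸ le_sup_left
  refine hs.isDiffMaximal_ker (f := ρ) (RingHom.congr_fun (f := ρ.comp (F.restrict C C hFC))
    (g := (F.restrict P P hFP).comp ρ) (RingHom.eq_of_eq_sup hC (fun x h hx => ?_)
      fun x h hx => ?_)) fun x => ⟨⟨x, hPC x.2⟩, Subtype.ext (hρP _ _ x.2)⟩
  · apply Subtype.ext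
    change (ρ ⟨F x, _⟩ : S) = F (ρ ⟨x, h⟩)
    rw [hρP _ _ (hFP x hx), hρP _ _ hx]
  · apply Subtype.ext
    change (ρ ⟨F x, hFC x h⟩ : S) = F (ρ ⟨x, h⟩)
    rw [hρB x h hx, hFg, ← hρB x h hx]
    congr 2
    exact Subtype.ext (hB x hx)

theorem exists_isDiffMaximal_base {S : Type*} [CommRing S] {F G : S →+* S} {P₀ P₁ B C₀ C₁ : Subring S}
    (hF₀ : ∀ x ∈ P₀, F x ∈ P₀) (hs₀ : DiffSimple (F.restrict P₀ P₀ hF₀))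
    (hF₁ : ∀ x ∈ P₁, F x ∈ P₁) (hs₁ : DiffSimple (F.restrict P₁ P₁ hF₁)) (hPP : P₀ ≤ P₁)
    (hB : ∀ b ∈ B, F b = b) (g : B →+* S) (hc : ∀ c ∈ P₁, F c = c → ∃ h : c ∈ B, g ⟨c, h⟩ = c)
    (hFg : ∀ b, F (g b) = g b) (hg : ∀ b, g b ∈ P₀) (hGg : ∀ b, G (g b) ∈ P₀)
    (hGB : ∀ x (h : x ∈ B), ∃ h' : G x ∈ B, g ⟨G x, h'⟩ = G (g ⟨x, h⟩))
    (hC₀ : C₀ = P₀ ⊔ B) (hC₁ : C₁ = P₁ ⊔ B) (hFC₀ : ∀ x ∈ C₀, F x ∈ C₀)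
    (hFC₁ : ∀ x ∈ C₁, F x ∈ C₁) (hCC : C₀ ≤ C₁) (hGC : ∀ x ∈ C₀, G x ∈ C₁) :
    ∃ M₀ M₁, IsDiffMaximal (F.restrict C₀ C₀ hFC₀) M₀ ∧ IsDiffMaximal (F.restrict C₁ C₁ hFC₁) M₁ ∧
      (∀ x ∈ M₀, Subring.inclusion hCC x ∈ M₁) ∧ (∀ x ∈ M₀, G.restrict C₀ C₁ hGC x ∈ M₁) ∧
      ∀ b : B, ∃ x ∈ M₀, (x : S) = b - g b := by
  have hPC : P₀ ≤ C₀ := hC₀ ▸ le_sup_left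
  have hBC : B ≤ C₀ := hC₀ ▸ le_sup_right
  obtain ⟨ρ₀, hρ₀P, hρ₀B⟩ := exists_retraction hF₀ hs₀ hB g (fun c h => hc c (hPP h)) hg hC₀
  obtain ⟨ρ₁, hρ₁P, hρ₁B⟩ := exists_retraction hF₁ hs₁ hB g hc (fun b => hPP (hg b)) hC₁
  refine ⟨RingHom.ker ρ₀, RingHom.ker ρ₁,
    isDiffMaximal_ker_retraction hF₀ hs₀ hB hFg hC₀ hFC₀ hρ₀P hρ₀B,
    isDiffMaximal_ker_retraction hF₁ hs₁ hB hFg hC₁ hFC₁ hρ₁P hρ₁B, fun x hx => ?_,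
    fun x hx => ?_, fun b => ⟨⟨b - g b, sub_mem (hBC b.2) (hPC (hg b))⟩, ?_, rfl⟩⟩
  · have : ρ₁.comp (Subring.inclusion hCC) = (Subring.inclusion hPP).comp ρ₀ := by
      refine RingHom.eq_of_eq_sup hC₀ (fun x h hx => ?_) fun x h hx => ?_
      · exact Subtype.ext ((hρ₁P x _ (hPP hx)).trans (hρ₀P x h hx).symm)
      · exact Subtype.ext ((hρ₁B x _ hx).trans (hρ₀B x h hx).symm)
    have := RingHom.congr_fun this x
    rw [RingHom.comp_apply, RingHom.comp_apply, RingHom.mem_ker.1 hx, map_zero] at this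
    exact this
  · have : ρ₁.comp (G.restrict C₀ C₁ hGC) =
        (ρ₁.comp (G.restrict C₀ C₁ hGC)).comp ((Subring.inclusion hPC).comp ρ₀) := by
      refine RingHom.eq_of_eq_sup hC₀ (fun x h hx => ?_) fun x h hx => ?_
      · have : (Subring.inclusion hPC) (ρ₀ ⟨x, h⟩) = ⟨x, h⟩ := Subtype.ext (hρ₀P x h hx)
        exact congrArg (ρ₁.comp (G.restrict C₀ C₁ hGC)) this.symm
      · obtain ⟨h', hg'⟩ := hGB x hx
        have h1 : (Subring.inclusion hPC) (ρ₀ ⟨x, h⟩) = ⟨g ⟨x, hx⟩, hPC (hg _)⟩ :=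
          Subtype.ext (hρ₀B x h hx)
        refine Eq.trans ?_ (congrArg (ρ₁.comp (G.restrict C₀ C₁ hGC)) h1).symm
        apply Subtype.ext
        change (ρ₁ ⟨G x, hGC x h⟩ : S) = ρ₁ ⟨G (g ⟨x, hx⟩), hGC _ (hPC (hg _))⟩
        rw [hρ₁B _ _ h', hg', hρ₁P _ _ (hPP (hGg _))]
    have := RingHom.congr_fun this x
    rw [RingHom.comp_apply _ ((Subring.inclusion hPC).comp ρ₀), RingHom.comp_apply _ ρ₀,
      RingHom.mem_ker.1 hx, map_zero, map_zero] at this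
    exact this
  · rw [RingHom.mem_ker]
    have h1 : (⟨b - g b, sub_mem (hBC b.2) (hPC (hg b))⟩ : C₀) =
      ⟨b, hBC b.2⟩ - ⟨g b, hPC (hg b)⟩ := rfl
    rw [h1, map_sub, sub_eq_zero]
    exact Subtype.ext ((hρ₀B _ _ b.2).trans (hρ₀P _ _ (hg b)).symm)

theorem map_relIdeal_le {V S : Type*} [CommRing S] {A A' : Subring S} (h : A ≤ A') (t : V → S) :
    (relIdeal A t).map (MvPolynomial.map (Subring.inclusion h)) ≤ relIdeal A' t := by
  rw [Ideal.map_le_iff_le_comap]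
  intro p hp
  rw [Ideal.mem_comap, mem_relIdeal, eval₂_map]
  exact hp

theorem relSpan_le_relSpan {V S : Type*} [CommRing S] {A A' : Subring S} (h : A ≤ A') (t : V → S)
    (hle : relIdeal A' t ≤ (relIdeal A t).map (MvPolynomial.map (Subring.inclusion h))) :
    relSpan A' t ≤ relSpan A t := by
  refine (Ideal.map_mono hle).trans ?_
  rw [Ideal.map_map, relSpan]
  refine le_of_eq ?_
  congr 1
  ext <;> simp

theorem locallyRetract_relIdeal_matFam {S ι m : Type*} [CommRing S] [Finite ι] [Fintype m] [DecidableEq m]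
    {F : S →+* S} {P : Subring S} (hF : ∀ x ∈ P, F x ∈ P) (hs : DiffSimple (F.restrict P P hF))
    (D W : ι → Matrix m m S) (hD : ∀ j, (D j).det = 1) (hDP : ∀ j p q, D j p q ∈ P)
    (hFW : ∀ j, (W j).map F = D j * W j) : LocallyRetract (relIdeal P (matFam W)) := by
  let D' : ι → Matrix m m P := fun j => Matrix.of fun p q => ⟨D j p q, hDP j p q⟩
  have hD' : ∀ j, (D' j).map P.subtype = D j := fun _ => rfl
  refine hs.locallyRetract D' (fun j => (D' j).adjugate) (fun j => ?_) _ fun p hp => ?_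
  · have : (D' j).det = 1 := Subtype.ext (by
      rw [← Subring.subtype_apply, RingHom.map_det, RingHom.mapMatrix_apply, hD', hD]; rfl)
    rw [Matrix.mul_adjugate, this, one_smul]
  · have h := RingHom.congr_fun (evalMat_twist (F.restrict P P hF) D' P.subtype F (fun _ => rfl) W
      fun j => (hFW j).trans (by rw [hD'])) p
    rw [mem_relIdeal] at hp ⊢
    rw [RingHom.comp_apply, RingHom.comp_apply] at h
    exact h.trans ((congrArg F hp).trans (map_zero F))

section Core

variable {K Ω S : Type u} [Field K] [Field Ω] [CommRing S] [Algebra K S] [Algebra Ω S]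
  {φ σ : K →+* K} {hcomm : ∀ a, φ (σ a) = σ (φ a)} [Algebra (constSubfield K φ) Ω]
  {F G : S →+* S} {σΩ : Ω →+* Ω}

theorem SigmaClosed.exists_point_subring [Nontrivial S]
    (hcl : SigmaClosed (sigmaRes φ σ hcomm))
    (hk : ∀ a : constSubfield K φ, algebraMap Ω S (algebraMap _ Ω a) = algebraMap K S a)
    (hGK : ∀ a, G (algebraMap K S a) = algebraMap K S (σ a))
    (hGΩ : ∀ a, G (algebraMap Ω S a) = algebraMap Ω S (σΩ a)) (T : Finset Ω) :
    ∃ (B : Subring S) (g : B →+* S), B ≤ (algebraMap Ω S).range ∧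
      (∀ x ∈ T, algebraMap Ω S x ∈ B) ∧ (∀ b, ∃ a, φ a = a ∧ algebraMap K S a = g b) ∧
      (∀ a, φ a = a → ∃ h : algebraMap K S a ∈ B, g ⟨_, h⟩ = algebraMap K S a) ∧
      ∀ x (h : x ∈ B), ∃ h' : G x ∈ B, g ⟨G x, h'⟩ = G (g ⟨x, h⟩) := by
  have hinj := (algebraMap Ω S).injective
  obtain ⟨B, hB, g, hT, hg⟩ := hcl.exists_point σΩ (fun a => hinj (by
    rw [hk, ← hGΩ, hk, hGK]; rfl)) T
  let e := B.toSubring.equivMapOfInjective (algebraMap Ω S) hinj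
  let g' : B.toSubring.map (algebraMap Ω S) →+* S :=
    ((algebraMap K S).comp ((constSubfield K φ).subtype.comp (g : B →+* constSubfield K φ))).comp
      (e.symm : B.toSubring.map (algebraMap Ω S) →+* B.toSubring)
  have hg' : ∀ b (h : b ∈ B) h', g' ⟨algebraMap Ω S b, h'⟩ = algebraMap K S (g ⟨b, h⟩) := by
    intro b h h'
    have : e.symm ⟨algebraMap Ω S b, h'⟩ = ⟨b, h⟩ := e.symm_apply_eq.2 (Subtype.ext rfl)
    change algebraMap K S (g (e.symm ⟨algebraMap Ω S b, h'⟩)) = _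
    rw [this]
  refine ⟨B.toSubring.map (algebraMap Ω S), g', ?_, fun x hx => ⟨x, hT hx, rfl⟩, ?_, ?_, ?_⟩
  · rintro _ ⟨x, -, rfl⟩
    exact ⟨x, rfl⟩
  · rintro ⟨_, x, hx, rfl⟩
    exact ⟨_, (g ⟨x, hx⟩).2, (hg' x hx _).symm⟩
  · intro a ha
    have h1 := hk ⟨a, ha⟩
    have h2 : algebraMap _ Ω (⟨a, ha⟩ : constSubfield K φ) ∈ B := B.algebraMap_mem _
    have h3 : algebraMap K S a ∈ B.toSubring.map (algebraMap Ω S) := ⟨_, h2, h1⟩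
    refine ⟨h3, ?_⟩
    have h4 := hg' _ h2 ⟨_, h2, rfl⟩
    have h5 : g ⟨_, h2⟩ = ⟨a, ha⟩ := g.commutes ⟨a, ha⟩
    rw [h5] at h4
    exact (congrArg g' (Subtype.ext h1.symm)).trans h4
  · rintro _ ⟨x, hx, rfl⟩
    have h1 : G (algebraMap Ω S x) ∈ B.toSubring.map (algebraMap Ω S) :=
      ⟨σΩ x, hB x hx, (hGΩ x).symm⟩
    refine ⟨h1, ?_⟩
    have h2 := hg' x hx ⟨x, hx, rfl⟩
    have h3 := hg' (σΩ x) (hB x hx) ⟨σΩ x, hB x hx, rfl⟩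
    have h4 : g ⟨σΩ x, hB x hx⟩ = _ := hg ⟨x, hx⟩
    rw [h4] at h3
    refine (congrArg g' (Subtype.ext (hGΩ x))).trans (h3.trans ?_)
    refine Eq.trans ?_ (congrArg G h2).symm
    rw [hGK]; rfl

variable {m : Type*} [Fintype m] [DecidableEq m]

theorem fixed_mem_of_sigmaClosed [IsAlgClosed Ω] (hcl : SigmaClosed (sigmaRes φ σ hcomm))
    (hk : ∀ a : constSubfield K φ, algebraMap Ω S (algebraMap _ Ω a) = algebraMap K S a)
    (hFG : ∀ x, F (G x) = G (F x)) (hFK : ∀ a, F (algebraMap K S a) = algebraMap K S (φ a))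
    (hGK : ∀ a, G (algebraMap K S a) = algebraMap K S (σ a))
    (hs : DiffSimple F) (hFΩ : ∀ a : Ω, F (algebraMap Ω S a) = algebraMap Ω S a)
    (hGΩ : ∀ a, G (algebraMap Ω S a) = algebraMap Ω S (σΩ a))
    (hconst : ∀ t, F t = t → t ∈ (algebraMap Ω S).range)
    (A : ℕ → Matrix m m K) (U : ℕ → Matrix m m S) (hU : ∀ j, (U j).det = 1)
    (hFU : ∀ j, (U j).map F = (A j).map (algebraMap K S) * U j)
    (hGU : ∀ j, (U j).map G = U (j + 1)) (c : Ω)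
    (hc : ∀ a : K, φ a = a → algebraMap K S a ≠ algebraMap Ω S c →
      ∃ n, ∃ d ∈ genRing (Set.range (algebraMap K S)) U n,
        (algebraMap Ω S c - algebraMap K S a) * d = 1) :
    ∃ a : K, φ a = a ∧ algebraMap K S a = algebraMap Ω S c := by
  classical
  have := hs.nontrivial
  have := hcl.isAlgClosed
  let R := Set.range (algebraMap K S)
  let ΩS := (algebraMap Ω S).range
  have hGR : ∀ x ∈ R, G x ∈ R := by rintro _ ⟨a, rfl⟩; exact ⟨σ a, (hGK a).symm⟩
  have hG : ∀ {B : Subring S} (_ : ∀ x ∈ B, G x ∈ B) i, ∀ x ∈ genRing (R ∪ B) U i,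
      G x ∈ genRing (R ∪ B) U (i + 1) := fun hB i x hx => by
    refine map_mem_genRing ?_ (fun j hj p q => ?_) hx
    · rintro x (hx | hx)
      · exact subset_genRing (Or.inl (hGR x hx))
      · exact subset_genRing (Or.inr (hB x hx))
    · rw [← Matrix.map_apply (f := G), hGU]
      exact entry_mem_genRing (by omega) _ _
  have hF : ∀ {B : Subring S} (_ : B ≤ ΩS) i, ∀ x ∈ genRing (R ∪ B) U i,
      F x ∈ genRing (R ∪ B) U i := fun hB i => map_mem_genRing_of_twist hFK hFU fun x hx => by
    obtain ⟨a, rfl⟩ := hB hx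
    exact hFΩ a
  have hGΩS : ∀ x ∈ ΩS, G x ∈ ΩS := by rintro _ ⟨a, rfl⟩; exact ⟨_, (hGΩ a).symm⟩
  obtain ⟨e, he⟩ := exists_relSpan_le (ι := Unit) σΩ hGΩ hs hconst (fun i => genRing (R ∪ ΩS) U i)
    (hF le_rfl) (hG hGΩS) (fun i a => subset_genRing (Or.inr ⟨a, rfl⟩))
    (fun i _ => (A i).map (algebraMap K S)) (fun i _ => U i)
    (fun i _ p q => subset_genRing (Or.inl ⟨_, rfl⟩)) (fun i _ => hU i) (fun i _ => hFU i)
    fun i _ => hGU i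
  obtain ⟨z, hz, hM₀, hM₁⟩ := exists_isDiffMaximal_ker_fin φ hFK hs hFΩ hconst A U hU hFU e
  let y : ℕ → Matrix m m S := fun j => U j * (z j).map (algebraMap Ω S)
  have hFy : ∀ j, (y j).map F = (A j).map (algebraMap K S) * y j := fun j =>
    map_mul_of_fixed hFΩ (hFU j) (z j)
  let P : ℕ → Subring S := fun i => genRing R y i
  have hFP : ∀ i, ∀ x ∈ P i, F x ∈ P i := fun i => by
    simpa using map_mem_genRing_of_twist (X := ∅) (n := i) hFK hFy (by simp)
  have hs₀ := hM₀.diffSimple_genRing hFK hFy (hFP e)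
  have hs₁ := hM₁.diffSimple_genRing hFK hFy (hFP (e + 1))
  have hP₁ := hs₁.fixed_mem_genRing hFK
  have hPP : P e ≤ P (e + 1) := genRing_mono subset_rfl (Nat.le_succ e)
  obtain ⟨B, g, hBΩ, hTB, hgK, hKB, hGB⟩ := hcl.exists_point_subring hk hGK hGΩ
    (insert c ((Finset.range (e + 1) ×ˢ Finset.univ ×ˢ Finset.univ).image
      fun x : ℕ × m × m => z x.1 x.2.1 x.2.2))
  have hBF : ∀ b ∈ B, F b = b := fun b hb => by
    obtain ⟨a, rfl⟩ := hBΩ hb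
    exact hFΩ a
  have hzB : ∀ j < e + 1, ∀ p q, (z j).map (algebraMap Ω S) p q ∈ B := fun j hj p q =>
    hTB _ (Finset.mem_insert_of_mem (Finset.mem_image.2
      ⟨(j, p, q), by simpa using Nat.lt_succ_iff.1 hj, rfl⟩))
  have hcB : algebraMap Ω S c ∈ B := hTB _ (Finset.mem_insert_self _ _)
  have hdet : ∀ z : Matrix m m Ω, z.det = 1 → (z.map (algebraMap Ω S)).det = 1 := fun z hz => by
    rw [← RingHom.mapMatrix_apply, ← RingHom.map_det, hz, map_one]
  have hdet' : ∀ j, ((z j).map (algebraMap Ω S)).det = 1 := fun j => hdet _ (hz j)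
  have hC₀ : genRing (R ∪ B) U e = P e ⊔ B :=
    genRing_union_eq_sup (fun j hj => hzB j (by omega)) hdet'
  have hC₁ : genRing (R ∪ B) U (e + 1) = P (e + 1) ⊔ B := genRing_union_eq_sup hzB hdet'
  have hT : genRing (R ∪ ΩS) U e = P e ⊔ ΩS :=
    genRing_union_eq_sup (fun j hj p q => ⟨_, rfl⟩) hdet'
  have hKP : ∀ a i, algebraMap K S a ∈ P i := fun a i => subset_genRing ⟨a, rfl⟩
  have hFg : ∀ b, F (g b) = g b := fun b => by
    obtain ⟨a, ha, hb⟩ := hgK b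
    rw [← hb, hFK, ha]
  have hcP₁ : ∀ c ∈ P (e + 1), F c = c → ∃ h : c ∈ B, g ⟨c, h⟩ = c := fun c hc hFc => by
    obtain ⟨a, ha, rfl⟩ := hP₁ c hc hFc
    exact hKB a ha
  have hgP : ∀ b, g b ∈ P e := fun b => by
    obtain ⟨a, -, hb⟩ := hgK b
    exact hb ▸ hKP a e
  have hGgP : ∀ b, G (g b) ∈ P e := fun b => by
    obtain ⟨a, -, hb⟩ := hgK b
    rw [← hb, hGK]
    exact hKP _ e
  let C : ℕ → Subring S := fun i => genRing (R ∪ B) U (e + i)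
  have hFC : ∀ i, ∀ x ∈ C i, F x ∈ C i := fun i => hF hBΩ (e + i)
  have hGC : ∀ i, ∀ x ∈ C i, G x ∈ C (i + 1) := fun i =>
    hG (fun x hx => (hGB x hx).choose) (e + i)
  have hCmono : ∀ i, C i ≤ C (i + 1) := fun i => genRing_mono subset_rfl (Nat.le_succ _)
  obtain ⟨M₀, M₁, hmax₀, hmax₁, hiM, hsM, hM⟩ := exists_isDiffMaximal_base (hFP e) hs₀ (hFP (e + 1))
    hs₁ hPP hBF g hcP₁ hFg hgP hGgP hGB (C₀ := C 0) (C₁ := C 1) hC₀ hC₁ (hFC 0) (hFC 1) (hCmono 0)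
    (hGC 0)
  let ζ : ℕ → Matrix m m Ω := fun i => (z e).map (σΩ^[i])
  have hζ₀ : ζ 0 = z e := by ext; rfl
  have hζ : ∀ i, ζ (i + 1) = (ζ i).map σΩ := fun i => by
    ext p q
    exact Function.iterate_succ_apply' _ _ _
  have hζdet : ∀ i, (ζ i).det = 1 := fun i => by
    induction i with
    | zero => rw [hζ₀, hz]
    | succ i ih => rw [hζ, ← RingHom.mapMatrix_apply, ← RingHom.map_det, ih, map_one]
  have hζB : ∀ i p q, (ζ i).map (algebraMap Ω S) p q ∈ B := fun i => by
    induction i with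
    | zero => rw [hζ₀]; exact hzB e (Nat.lt_succ_self e)
    | succ i ih =>
      intro p q
      rw [hζ, Matrix.map_apply, Matrix.map_apply, ← hGΩ]
      exact (hGB _ (ih p q)).choose
  have hζC : ∀ i p q, (ζ i).map (algebraMap Ω S) p q ∈ C i := fun i p q =>
    subset_genRing (Or.inr (hζB i p q))
  let t : ℕ → Unit × m × m → S := fun i => matFam fun _ => U (e + i) * (ζ i).map (algebraMap Ω S)
  have ht₀ : t 0 = matFam fun _ => y e := by
    simp only [t, hζ₀, add_zero, y]
  have hgenP : ∀ x ∈ P (e + 1), ∃ p, eval₂ (P e).subtype (matFam fun _ : Unit => y e) p = x :=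
    fun x hx => by
      have := exists_eval_eq_of_mem_genRing_succ (Z := 1) (fun p q => ?_) Matrix.det_one hx
      · rwa [Matrix.mul_one] at this
      · rw [Matrix.one_apply]; split_ifs
        exacts [one_mem _, zero_mem _]
  have hJ : ∀ {B' C' : Subring S} (_ : B' ≤ ΩS) (hPC : P e ≤ C') (_ : C' = P e ⊔ B'),
      relIdeal C' (t 0) ≤ (relIdeal (P e) (t 0)).map (MvPolynomial.map (Subring.inclusion hPC)) :=
    fun hB' hPC hC => by
      rw [ht₀]
      refine relIdeal_le_map (hFP (e + 1)) hs₁ (fun c hc hFc => ?_) (fun b hb => ?_) hPP _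
        (fun v => entry_mem_genRing (Nat.lt_succ_self e) _ _) hgenP hPC hC
      · obtain ⟨a, -, rfl⟩ := hP₁ c hc hFc
        exact hKP a e
      · obtain ⟨a, rfl⟩ := hB' hb
        exact hFΩ a
  have hPC : P e ≤ C 0 := le_sup_left.trans hC₀.ge
  have hr₀ : relSpan (genRing (R ∪ ΩS) U e) (t 0) ≤ relSpan (C 0) (t 0) :=
    (relSpan_le_relSpan (le_sup_left.trans hT.ge) _ (hJ le_rfl _ hT)).trans (relSpan_mono hPC _)
  have hA : ∀ j, ((A j).map (algebraMap K S)).det = 1 := fun j => by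
    have := congrArg Matrix.det (hFU j)
    rwa [Matrix.det_mul, ← RingHom.mapMatrix_apply, ← RingHom.map_det, hU, mul_one, map_one,
      eq_comm] at this
  have h₀ : LocallyRetract (relIdeal (C 0) (t 0)) := by
    rw [le_antisymm (hJ hBΩ hPC hC₀) (map_relIdeal_le hPC _)]
    refine LocallyRetract.map ?_ _
    rw [ht₀]
    exact locallyRetract_relIdeal_matFam (hFP e) hs₀ (fun _ => (A e).map (algebraMap K S)) _
      (fun _ => hA e) (fun _ p q => hKP _ e) fun _ => hFy e
  obtain ⟨x, hx, hxc⟩ := hM ⟨_, hcB⟩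
  obtain ⟨a, ha, hga⟩ := hgK ⟨_, hcB⟩
  refine ⟨a, ha, by_contra fun hne => ?_⟩
  obtain ⟨n, d, hd, hcd⟩ := hc a ha hne
  have key := exists_isDiffMaximal_tower (C := C) (t := t) hFC hGC hFG hCmono
    (fun i v => ?_) (fun i v => ?_) (fun i x hx => ?_)
    (fun i => relSpan (genRing (R ∪ ΩS) U (e + i)) (t i)) (fun i => ?_) (fun i => ?_) hr₀ h₀ hmax₀
    hmax₁ hiM hsM hx n
  · obtain ⟨M, hMne, w, hw, hwx⟩ := key
    refine hMne ((Ideal.eq_top_iff_one _).2 ?_)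
    have hdC : d ∈ C n := genRing_mono Set.subset_union_left (Nat.le_add_left n e) hd
    have h1 : (1 : C n) = w * ⟨d, hdC⟩ := Subtype.ext (by
      rw [Subring.coe_mul, hwx, hxc, ← hga, hcd]; rfl)
    rw [h1]
    exact Ideal.mul_mem_right _ _ hw
  · change (U (e + i) * (ζ i).map (algebraMap Ω S)) v.2.1 v.2.2 ∈ C (i + 1)
    rw [Matrix.mul_apply]
    exact sum_mem fun r _ => mul_mem (entry_mem_genRing (Nat.lt_succ_self _) _ _)
      (hCmono i (hζC i _ _))
  · have : (U (e + i) * (ζ i).map (algebraMap Ω S)).map G =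
        U (e + (i + 1)) * (ζ (i + 1)).map (algebraMap Ω S) := by
      rw [Matrix.map_mul, hGU, hζ]
      congr 1
      ext p q
      simp [hGΩ]
    exact congrFun (congrFun this v.2.1) v.2.2
  · exact exists_eval_eq_of_mem_genRing_succ (hζC i) (hdet _ (hζdet i)) hx
  · refine relSpan_mono (genRing_mono (Set.union_subset_union_right _ ?_) le_rfl) _
    exact hBΩ
  · have := he (e + i) (Nat.le_add_right e i) (fun _ => ζ i) fun _ => hζdet i
    simp only [← hζ] at this
    exact this

end Core

section BaseChange

open scoped TensorProduct

variable {L R Ω : Type*} [Field L] [CommRing R] [Field Ω] [Algebra L R] [Algebra L Ω]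
  {Φ : R →+* R} {F : R ⊗[L] Ω →+* R ⊗[L] Ω}

theorem repr_map_tensor (hΦ : ∀ l, Φ (algebraMap L R l) = algebraMap L R l)
    (hF : ∀ r ω, F (r ⊗ₜ ω) = Φ r ⊗ₜ ω) {κ : Type*} (b : Basis κ L Ω) (x : R ⊗[L] Ω) (i : κ) :
    (Algebra.TensorProduct.basis R b).repr (F x) i =
      Φ ((Algebra.TensorProduct.basis R b).repr x i) := by
  induction x using TensorProduct.induction_on with
  | zero => simp
  | tmul r ω => simp [hF, hΦ]
  | add x y hx hy => simp [hx, hy]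

theorem exists_tmul_eq_of_fixed (hΦ : ∀ l, Φ (algebraMap L R l) = algebraMap L R l)
    (hconst : ∀ r, Φ r = r → ∃ l, algebraMap L R l = r)
    (hF : ∀ r ω, F (r ⊗ₜ ω) = Φ r ⊗ₜ ω) {x : R ⊗[L] Ω} (hx : F x = x) :
    ∃ ω : Ω, 1 ⊗ₜ ω = x := by
  let b := Basis.ofVectorSpace L Ω
  have h (i) : ∃ l, algebraMap L R l = (Algebra.TensorProduct.basis R b).repr x i :=
    hconst _ (by rw [← repr_map_tensor hΦ hF, hx])
  choose l hl using h
  refine ⟨∑ i ∈ ((Algebra.TensorProduct.basis R b).repr x).support, l i • b i, ?_⟩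
  rw [TensorProduct.tmul_sum]
  conv_rhs => rw [← (Algebra.TensorProduct.basis R b).linearCombination_repr x,
    Finsupp.linearCombination_apply, Finsupp.sum]
  refine Finset.sum_congr rfl fun i _ => ?_
  rw [Algebra.TensorProduct.basis_apply, ← hl, ← TensorProduct.smul_tmul, algebraMap_smul,
    TensorProduct.smul_tmul']

theorem DiffSimple.tensor (hs : DiffSimple Φ)
    (hΦ : ∀ l, Φ (algebraMap L R l) = algebraMap L R l)
    (hconst : ∀ r, Φ r = r → ∃ l, algebraMap L R l = r)
    (hF : ∀ r ω, F (r ⊗ₜ ω) = Φ r ⊗ₜ ω) : DiffSimple F := by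
  have := hs.nontrivial
  have hinj := Algebra.TensorProduct.includeLeft_injective (S := L) (A := R)
    (algebraMap L Ω).injective
  have := hinj.nontrivial
  refine ⟨bot_ne_top, fun I hI => or_iff_not_imp_left.2 fun hbot => ?_⟩
  have hle := hs.le_span_fixed (Algebra.TensorProduct.basis R (Basis.ofVectorSpace L Ω)) F
    (repr_map_tensor hΦ hF _) (I.restrictScalars R) hI
  obtain ⟨y, ⟨hyI, hy⟩, hy0⟩ : ∃ y, (y ∈ I ∧ F y = y) ∧ y ≠ 0 := by
    by_contra! hcon
    refine hbot (eq_bot_iff.2 fun x hx => ?_)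
    have h1 := hle hx
    exact Submodule.span_le (p := (⊥ : Submodule R (R ⊗[L] Ω))).2 hcon h1
  obtain ⟨ω, rfl⟩ := exists_tmul_eq_of_fixed hΦ hconst hF hy
  refine Ideal.eq_top_of_isUnit_mem _ hyI ?_
  have hω : ω ≠ 0 := by
    rintro rfl
    exact hy0 (TensorProduct.tmul_zero _ _)
  exact (IsUnit.mk0 ω hω).map (Algebra.TensorProduct.includeRight : Ω →ₐ[L] R ⊗[L] Ω)

end BaseChange

theorem exists_ringHom_of_mem_range {A B C : Type*} [CommRing A] [CommRing B] [CommRing C]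
    {i : B →+* C} (hi : Function.Injective i) (f : A →+* C) (hf : ∀ a, ∃ b, i b = f a) :
    ∃ g : A →+* B, ∀ a, i (g a) = f a := by
  choose g hg using hf
  refine ⟨⟨⟨⟨g, ?_⟩, ?_⟩, ?_, ?_⟩, hg⟩ <;> intros <;> apply hi <;> simp [hg]

theorem DiffSimple.exists_field {R : Type u} [CommRing R] {Φ : R →+* R} (hs : DiffSimple Φ) :
    ∃ (L : Type u) (_ : Field L) (i : L →+* R), ∀ r, Φ r = r ↔ ∃ l, i l = r := by
  have := hs.nontrivial
  have hfield : IsField (Φ.eqLocus (RingHom.id R)) := by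
    refine ⟨⟨0, 1, zero_ne_one⟩, mul_comm, fun {a} ha => ?_⟩
    obtain ⟨b, hb⟩ := (hs.isUnit_of_fixed a.2 (by simpa using ha)).exists_right_inv
    have hΦb : Φ b = b := by
      have h1 : (a : R) * Φ b = 1 := by
        have ha' : Φ (a : R) = a := a.2
        rw [← map_one Φ, ← hb, map_mul, ha']
      calc Φ b = (a * b) * Φ b := by rw [hb, one_mul]
        _ = b * (a * Φ b) := by ring
        _ = b := by rw [h1, mul_one]
    exact ⟨⟨b, hΦb⟩, Subtype.ext hb⟩
  exact ⟨_, hfield.toField, (Φ.eqLocus (RingHom.id R)).subtype,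
    fun r => ⟨fun h => ⟨⟨r, h⟩, rfl⟩, fun ⟨l, hl⟩ => hl ▸ l.2⟩⟩

/-- Extension of scalars from the constants to their algebraic closure. -/
theorem DiffSimple.exists_baseChange {R : Type u} [CommRing R] {Φ Ψ : R →+* R}
    (hs : DiffSimple Φ) (hcomm : ∀ r, Φ (Ψ r) = Ψ (Φ r)) :
    ∃ (Ω S : Type u) (_ : Field Ω) (_ : IsAlgClosed Ω) (_ : CommRing S) (_ : Algebra Ω S)
      (ι : R →+* S) (F G : S →+* S) (σΩ : Ω →+* Ω), Function.Injective ι ∧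
      (∀ r, F (ι r) = ι (Φ r)) ∧ (∀ r, G (ι r) = ι (Ψ r)) ∧ (∀ x, F (G x) = G (F x)) ∧
      (∀ a, F (algebraMap Ω S a) = algebraMap Ω S a) ∧
      (∀ a, G (algebraMap Ω S a) = algebraMap Ω S (σΩ a)) ∧ DiffSimple F ∧
      (∀ t, F t = t → t ∈ (algebraMap Ω S).range) ∧
      ∀ r, Φ r = r → ∃ c, algebraMap Ω S c = ι r := by
  obtain ⟨L, _, i, hi⟩ := hs.exists_field
  have := hs.nontrivial
  have hΦ (l) : Φ (i l) = i l := (hi _).2 ⟨l, rfl⟩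
  obtain ⟨τ, hτ⟩ := exists_ringHom_of_mem_range i.injective (Ψ.comp i) fun l =>
    (hi _).1 (by rw [RingHom.comp_apply, hcomm, hΦ])
  obtain ⟨σΩ, hσΩ⟩ := exists_ringHom_extension (E := AlgebraicClosure L)
    ((algebraMap L (AlgebraicClosure L)).comp τ)
  let _ : Algebra L R := i.toAlgebra
  let F := Algebra.TensorProduct.mapRingHom (RingHom.id L) Φ (RingHom.id (AlgebraicClosure L))
    (RingHom.ext hΦ) rfl
  let G := Algebra.TensorProduct.mapRingHom τ Ψ σΩ (RingHom.ext fun l => (hτ l).symm)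
    (RingHom.ext hσΩ)
  have hF (r ω) : F (r ⊗ₜ ω) = Φ r ⊗ₜ ω := Algebra.TensorProduct.mapRingHom_tmul ..
  have hG (r ω) : G (r ⊗ₜ ω) = Ψ r ⊗ₜ σΩ ω := Algebra.TensorProduct.mapRingHom_tmul ..
  have hconst (r) (hr : Φ r = r) : ∃ l, algebraMap L R l = r := (hi r).1 hr
  have hinj := Algebra.TensorProduct.includeLeft_injective (S := L) (A := R)
    (algebraMap L (AlgebraicClosure L)).injective
  refine ⟨AlgebraicClosure L, TensorProduct L R (AlgebraicClosure L), inferInstance, inferInstance,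
    inferInstance, Algebra.TensorProduct.rightAlgebra,
    Algebra.TensorProduct.includeLeftRingHom, F, G, σΩ, hinj, fun r => ?_, fun r => ?_,
    fun x => ?_, fun a => ?_, fun a => ?_, hs.tensor hΦ hconst hF, fun t ht => ?_, fun r hr => ?_⟩
  · exact hF r 1
  · exact (hG r 1).trans (by rw [map_one]; rfl)
  · induction x using TensorProduct.induction_on with
    | zero => simp
    | tmul r ω => rw [hG, hF, hF, hG, hcomm]
    | add x y hx hy => simp only [map_add, hx, hy]
  · exact (hF 1 a).trans (by rw [map_one]; rfl)
  · exact (hG 1 a).trans (by rw [map_one]; rfl)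
  · exact exists_tmul_eq_of_fixed hΦ hconst hF ht
  · obtain ⟨l, rfl⟩ := hconst r hr
    exact ⟨algebraMap L _ l, (Algebra.TensorProduct.tmul_one_eq_one_tmul l).symm⟩

section Reduction

variable {K R : Type u} [Field K] [CommRing R] [Algebra K R] {n : Type*} [Fintype n] [DecidableEq n]
  {φ σ : K →+* K} {Φ Ψ : R →+* R}

theorem exists_unimodular_family
    (hΦΨ : ∀ r, Φ (Ψ r) = Ψ (Φ r)) (hΨ : ∀ a, Ψ (algebraMap K R a) = algebraMap K R (σ a))
    {A : Matrix n n K} (hA : IsUnit A.det)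
    {Y : Matrix n n R} {w : ℕ → R} (hY : Y.map Φ = A.map (algebraMap K R) * Y)
    (hw : ∀ i, (Y.map Ψ^[i]).det * w i = 1)
    (hgen : Algebra.adjoin K ({x : R | ∃ (i : ℕ) (p q : n), (Y.map Ψ^[i]) p q = x} ∪
      Set.range w) = ⊤) :
    ∃ (A' : ℕ → Matrix (n ⊕ Unit) (n ⊕ Unit) K) (U : ℕ → Matrix (n ⊕ Unit) (n ⊕ Unit) R),
      (∀ j, (U j).det = 1) ∧ (∀ j, (U j).map Φ = (A' j).map (algebraMap K R) * U j) ∧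
      (∀ j, (U j).map Ψ = U (j + 1)) ∧
      ∀ r, ∃ N, r ∈ genRing (Set.range (algebraMap K R)) U N := by
  let U (j : ℕ) : Matrix (n ⊕ Unit) (n ⊕ Unit) R :=
    Matrix.fromBlocks (Y.map Ψ^[j]) 0 0 (Matrix.of fun _ _ => w j)
  let A' : ℕ → Matrix (n ⊕ Unit) (n ⊕ Unit) K := fun j =>
    Nat.rec (Matrix.fromBlocks A 0 0 (Matrix.of fun _ _ => A.det⁻¹)) (fun _ B => B.map σ) j
  have hYs (j) : (Y.map Ψ^[j]).map Ψ = Y.map Ψ^[j + 1] := by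
    ext p q
    exact (Function.iterate_succ_apply' _ _ _).symm
  have hws (j) : Ψ (w j) = w (j + 1) := by
    have h1 : (Y.map Ψ^[j + 1]).det * Ψ (w j) = 1 := by
      rw [← hYs, ← RingHom.mapMatrix_apply, ← RingHom.map_det, ← map_mul, hw, map_one]
    calc Ψ (w j) = ((Y.map Ψ^[j + 1]).det * w (j + 1)) * Ψ (w j) := by rw [hw, one_mul]
      _ = ((Y.map Ψ^[j + 1]).det * Ψ (w j)) * w (j + 1) := by ring
      _ = w (j + 1) := by rw [h1, one_mul]
  have hUs (j) : (U j).map Ψ = U (j + 1) := by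
    simp only [U]
    rw [Matrix.fromBlocks_map, hYs, Matrix.map_zero _ (map_zero _), Matrix.map_zero _ (map_zero _)]
    congr 1
    ext
    exact hws j
  have hw0 : Y.det * w 0 = 1 := hw 0
  have hdetΦ : Φ Y.det = algebraMap K R A.det * Y.det := by
    rw [RingHom.map_det, RingHom.mapMatrix_apply, hY, Matrix.det_mul, RingHom.map_det,
      RingHom.mapMatrix_apply]
  have hwΦ : Φ (w 0) = algebraMap K R A.det⁻¹ * w 0 := by
    have h1 : algebraMap K R A.det * Y.det * Φ (w 0) = 1 := by
      rw [← hdetΦ, ← map_mul, hw0, map_one]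
    have h2 : algebraMap K R A.det⁻¹ * algebraMap K R A.det = 1 := by
      rw [← map_mul, inv_mul_cancel₀ hA.ne_zero, map_one]
    calc Φ (w 0) = (algebraMap K R A.det⁻¹ * algebraMap K R A.det) * (Y.det * w 0) * Φ (w 0) := by
          rw [h2, hw0, one_mul, one_mul]
      _ = algebraMap K R A.det⁻¹ * w 0 * (algebraMap K R A.det * Y.det * Φ (w 0)) := by ring
      _ = algebraMap K R A.det⁻¹ * w 0 := by rw [h1, mul_one]
  refine ⟨A', U, fun j => ?_, fun j => ?_, hUs, fun r => ?_⟩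
  · simp only [U]
    rw [Matrix.det_fromBlocks_zero₂₁, Matrix.det_unique (n := Unit), Matrix.of_apply, hw]
  · induction j with
    | zero =>
      have hY0 : (Y.map Ψ^[0]) = Y := rfl
      have hA0 : A' 0 = Matrix.fromBlocks A 0 0 (Matrix.of fun _ _ => A.det⁻¹) := rfl
      rw [hA0]
      simp only [U, hY0]
      rw [Matrix.fromBlocks_map, Matrix.fromBlocks_map, Matrix.fromBlocks_multiply]
      simp only [Matrix.map_zero _ (map_zero _), Matrix.zero_mul, Matrix.mul_zero, add_zero,
        zero_add, hY]
      congr 1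
      ext
      simpa [Matrix.mul_apply] using hwΦ
    | succ j ih =>
      have h1 : (U (j + 1)).map Φ = ((U j).map Φ).map Ψ := by
        rw [← hUs]
        ext p q
        exact hΦΨ _
      rw [h1, ih, Matrix.map_mul, hUs]
      congr 1
      ext p q
      exact hΨ _
  · have hr : r ∈ Algebra.adjoin K ({x : R | ∃ (i : ℕ) (p q : n), (Y.map Ψ^[i]) p q = x} ∪
      Set.range w) := hgen ▸ Algebra.mem_top
    have hmono {N N'} (h : N ≤ N') := genRing_mono (X := Set.range (algebraMap K R)) (U := U)
      subset_rfl h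
    induction hr using Algebra.adjoin_induction with
    | mem x hx =>
      obtain ⟨i, p, q, rfl⟩ | ⟨i, rfl⟩ := hx
      · exact ⟨i + 1, entry_mem_genRing (U := U) (Nat.lt_succ_self i) (Sum.inl p) (Sum.inl q)⟩
      · exact ⟨i + 1, entry_mem_genRing (U := U) (Nat.lt_succ_self i) (Sum.inr ()) (Sum.inr ())⟩
    | algebraMap a => exact ⟨0, subset_genRing ⟨a, rfl⟩⟩
    | add x y _ _ hx hy =>
      obtain ⟨N, hN⟩ := hx
      obtain ⟨N', hN'⟩ := hy
      exact ⟨max N N', add_mem (hmono (le_max_left _ _) hN) (hmono (le_max_right _ _) hN')⟩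
    | mul x y _ _ hx hy =>
      obtain ⟨N, hN⟩ := hx
      obtain ⟨N', hN'⟩ := hy
      exact ⟨max N N', mul_mem (hmono (le_max_left _ _) hN) (hmono (le_max_right _ _) hN')⟩

theorem fixed_mem_of_unimodular {m : Type*} [Fintype m] [DecidableEq m]
    {hcomm : ∀ a, φ (σ a) = σ (φ a)} (hcl : SigmaClosed (sigmaRes φ σ hcomm))
    (hΦΨ : ∀ r, Φ (Ψ r) = Ψ (Φ r)) (hΦ : ∀ a, Φ (algebraMap K R a) = algebraMap K R (φ a))
    (hΨ : ∀ a, Ψ (algebraMap K R a) = algebraMap K R (σ a)) (hs : DiffSimple Φ)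
    (A : ℕ → Matrix m m K) (U : ℕ → Matrix m m R) (hU : ∀ j, (U j).det = 1)
    (hΦU : ∀ j, (U j).map Φ = (A j).map (algebraMap K R) * U j)
    (hΨU : ∀ j, (U j).map Ψ = U (j + 1))
    (hgen : ∀ r, ∃ N, r ∈ genRing (Set.range (algebraMap K R)) U N) (r : R) (hr : Φ r = r) :
    ∃ a : K, φ a = a ∧ algebraMap K R a = r := by
  obtain ⟨Ω, S, _, _, _, _, ι, F, G, σΩ, hι, hFι, hGι, hFG, hFΩ, hGΩ, hsS, hconst, hc⟩ :=
    hs.exists_baseChange hΦΨ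
  have := hsS.nontrivial
  let _ : Algebra K S := (ι.comp (algebraMap K R)).toAlgebra
  have hK (a : K) : algebraMap K S a = ι (algebraMap K R a) := rfl
  obtain ⟨g, hg⟩ := exists_ringHom_of_mem_range (algebraMap Ω S).injective
    ((algebraMap K S).comp (constSubfield K φ).subtype) fun a =>
      hc (algebraMap K R a) (by rw [hΦ, a.2])
  let _ : Algebra (constSubfield K φ) Ω := g.toAlgebra
  obtain ⟨c, hcr⟩ := hc r hr
  have hgenι {N} {d : R} (hd : d ∈ genRing (Set.range (algebraMap K R)) U N) :
      ι d ∈ genRing (Set.range (algebraMap K S)) (fun j => (U j).map ι) N := by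
    have hle : genRing (Set.range (algebraMap K R)) U N ≤
        (genRing (Set.range (algebraMap K S)) (fun j => (U j).map ι) N).comap ι := by
      refine genRing_le ?_ fun j hj p q => ?_
      · rintro _ ⟨a, rfl⟩
        exact subset_genRing ⟨a, rfl⟩
      · exact entry_mem_genRing (U := fun j => (U j).map ι) hj p q
    exact hle hd
  obtain ⟨a, ha, hac⟩ := fixed_mem_of_sigmaClosed hcl hg hFG (fun a => by rw [hK, hFι, hΦ, ← hK])
    (fun a => by rw [hK, hGι, hΨ, ← hK]) hsS hFΩ hGΩ hconst A (fun j => (U j).map ι)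
    (fun j => by rw [← RingHom.mapMatrix_apply, ← RingHom.map_det, hU, map_one])
    (fun j => by
      have h1 : ((U j).map ι).map F = ((U j).map Φ).map ι := by
        ext p q
        exact hFι _
      rw [h1, hΦU, Matrix.map_mul]
      rfl)
    (fun j => by
      rw [← hΨU]
      ext p q
      exact hGι _)
    c fun a ha hne => by
      have hne' : r - algebraMap K R a ≠ 0 := fun h => hne (by
        rw [hcr, hK, sub_eq_zero.1 h])
      obtain ⟨d, hd⟩ := (hs.isUnit_of_fixed (by rw [map_sub, hr, hΦ, ha]) hne').exists_right_inv
      obtain ⟨N, hN⟩ := hgen d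
      exact ⟨N, ι d, hgenι hN, by rw [hcr, hK, ← map_sub, ← map_mul, hd, map_one]⟩
  exact ⟨a, ha, hι (by rw [← hK, hac, hcr])⟩

end Reduction

end

/-- If `k = K^φ` is `σ`-closed, then a `σ`-PV ring `R` over `K` has no new `φ`-constants:
`R^Φ` equals the image of `k`. -/
theorem sigma_pv_ring_no_new_constants
    {K R : Type u} [Field K] [CommRing R] [Algebra K R] {n : ℕ}
    (φ σ : K →+* K) (hcomm : ∀ a : K, φ (σ a) = σ (φ a))
    -- `k := K^φ` is `σ`-closed
    (hclosed : ∀ (B : Type u) (_ : CommRing B) (_ : IsDomain B)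
      (_ : Algebra ↥(constSubfield K φ) B) (σB : B →+* B),
      (∀ c : ↥(constSubfield K φ),
        σB (algebraMap ↥(constSubfield K φ) B c)
          = algebraMap ↥(constSubfield K φ) B (sigmaRes φ σ hcomm c)) →
      Function.Injective σB →
      (∃ T : Finset B,
        Algebra.adjoin ↥(constSubfield K φ) {x : B | ∃ t ∈ T, ∃ m : ℕ, (⇑σB)^[m] t = x} = ⊤) →
      ∃ g : B →ₐ[↥(constSubfield K φ)] ↥(constSubfield K φ),
        ∀ x : B, g (σB x) = sigmaRes φ σ hcomm (g x))
    -- `R` is a `σ`-PV ring over `K` for `φ(y) = Ay`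
    (A : Matrix (Fin n) (Fin n) K) (hA : IsUnit A.det)
    (Φ σ' : R →+* R) (hcommR : Φ.comp σ' = σ'.comp Φ)
    (hΦ : ∀ a : K, Φ (algebraMap K R a) = algebraMap K R (φ a))
    (hσ : ∀ a : K, σ' (algebraMap K R a) = algebraMap K R (σ a))
    (hsimple : DiffSimple Φ) (hdom : PseudoDomain Φ)
    (Y : Matrix (Fin n) (Fin n) R) (w : ℕ → R)
    (hY : Y.map ⇑Φ = A.map ⇑(algebraMap K R) * Y)
    (hw : ∀ i : ℕ, (Y.map ((⇑σ')^[i])).det * w i = 1)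
    (hgen : Algebra.adjoin K
      ({x : R | ∃ (i : ℕ) (p q : Fin n), (Y.map ((⇑σ')^[i])) p q = x} ∪ Set.range w) = ⊤) :
    ∀ r : R, Φ r = r → ∃ a : K, φ a = a ∧ algebraMap K R a = r := by
  obtain ⟨A', U, hU, hΦU, hΨU, hr⟩ := exists_unimodular_family
    (fun r => RingHom.congr_fun hcommR r) hσ hA hY hw hgen
  exact fixed_mem_of_unimodular (hcomm := hcomm) hclosed (fun r => RingHom.congr_fun hcommR r) hΦ hσ
    hsimple A' U hU hΦU hΨU hr
end

section
/- Let F be a field with two commuting ring endomorphisms φ and σ, and let ι : ℂ(z) → F be an injective ring homomorphism from the field of rational functions RatFunc ℂ such that: φ(ι(C c)) = ι(C c) and σ(ι(C c)) = ι(C c) for every constant c ∈ ℂ; φ(ι(X)) = ι(C a₁ · X + C a₂) and σ(ι(X)) = ι(C b₁ · X + C b₂) with a₁, a₂, b₁, b₂ ∈ ℂ and a₁·b₁ ≠ 0; and φ^n(ι(X)) ≠ ι(X) for every n ≥ 1. Let 𝐤 := {x ∈ F | φ(x) = x} be the subfield of φ-constants. Let a ∈ RatFunc ℂ be nonzero and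 let f ∈ F be nonzero with φ(f) = ι(a) · f. Then the family (σ^n(f))_{n ≥ 0} is algebraically dependent over the subfield of F generated by 𝐤 and ι(X) if and only if there exist a nonzero b ∈ RatFunc ℂ, an integer t ≥ 1, and integers n₀, …, n_{t−1} not all zero, such that ∏_{i=0}^{t−1} (σ^i(ι(a)))^{n_i} = φ(ι(b)) · (ι(b))^{-1} in F. -/
/-- A finitely generated nonzero algebra over an algebraically closed field has a rational point. -/
theorem exists_algHom_of_finiteType {k A : Type*} [Field k] [IsAlgClosed k] [CommRing A]
    [Nontrivial A] [Algebra k A] [Algebra.FiniteType k A] : Nonempty (A →ₐ[k] k) := by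
  obtain ⟨m, hm⟩ := Ideal.exists_maximal A
  let := Ideal.Quotient.field m
  have : Module.Finite k (A ⧸ m) := finite_of_finite_type_of_isJacobsonRing k (A ⧸ m)
  let e : k ≃ₐ[k] A ⧸ m := AlgEquiv.ofBijective (Algebra.ofId k (A ⧸ m))
    IsAlgClosed.algebraMap_bijective_of_isIntegral
  exact ⟨e.symm.toAlgHom.comp (Ideal.Quotient.mkₐ k m)⟩

open Polynomial in
/-- Solvability of a homogeneous bilinear system by nonzero polynomials descends to an
algebraically closed base field. -/
theorem Polynomial.exists_comp_mul_eq_of_map {k K : Type*} [Field k] [IsAlgClosed k] [Field K]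
    [Algebra k K] (R S l : k[X]) {P Q : K[X]} (hP : P ≠ 0) (hQ : Q ≠ 0)
    (h : P.comp (l.map (algebraMap k K)) * Q * S.map (algebraMap k K) =
      R.map (algebraMap k K) * P * Q.comp (l.map (algebraMap k K))) :
    ∃ P' Q' : k[X], P' ≠ 0 ∧ Q' ≠ 0 ∧ P'.comp l * Q' * S = R * P' * Q'.comp l := by
  classical
  let s : Finset K := P.coeffs ∪ Q.coeffs ∪ {P.leadingCoeff⁻¹, Q.leadingCoeff⁻¹}
  let B := Algebra.adjoin k (s : Set K)
  have : Algebra.FiniteType k B := .adjoin_of_finite s.finite_toSet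
  obtain ⟨ψ⟩ := exists_algHom_of_finiteType (k := k) (A := B)
  have hs (x : K) (hx : x ∈ s) : x ∈ B := Algebra.subset_adjoin hx
  have lift (p : K[X]) (hp : p ≠ 0) (hc : p.coeffs ⊆ s) (hl : p.leadingCoeff⁻¹ ∈ s) :
      ∃ q : B[X], q.map (algebraMap B K) = p ∧ q.map (ψ : B →+* k) ≠ 0 := by
    have hlift : p ∈ lifts (algebraMap B K) := by
      rw [lifts_iff_coeffs_subset_range]
      intro x hx
      exact ⟨⟨x, hs x (hc hx)⟩, rfl⟩
    obtain ⟨q, rfl⟩ := (mem_lifts _).1 hlift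
    refine ⟨q, rfl, fun h0 => ?_⟩
    have h1 : q.coeff (q.map (algebraMap B K)).natDegree * ⟨_, hs _ hl⟩ = 1 := by
      apply Subtype.val_injective
      have : (q.map (algebraMap B K)).leadingCoeff ≠ 0 := leadingCoeff_ne_zero.2 hp
      have h2 : ((q.coeff (q.map (algebraMap B K)).natDegree : B) : K) =
          (q.map (algebraMap B K)).leadingCoeff := by
        rw [leadingCoeff, coeff_map]; rfl
      rw [MulMemClass.coe_mul, h2]
      exact mul_inv_cancel₀ this
    have h3 := congrArg ψ h1
    have h4 := congrArg (fun p => coeff p (q.map (algebraMap B K)).natDegree) h0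
    simp only [coeff_map, coeff_zero] at h4
    rw [map_mul, map_one] at h3
    erw [h4] at h3
    simp at h3
  obtain ⟨p, hpP, hp⟩ := lift P hP (fun x hx => by simp [s, hx]) (by simp [s])
  obtain ⟨q, hqQ, hq⟩ := lift Q hQ (fun x hx => by simp [s, hx]) (by simp [s])
  refine ⟨_, _, hp, hq, ?_⟩
  have hinj : Function.Injective (algebraMap B K) := Subtype.val_injective
  have key : p.comp (l.map (algebraMap k B)) * q * S.map (algebraMap k B) =
      R.map (algebraMap k B) * p * q.comp (l.map (algebraMap k B)) := by
    apply Polynomial.map_injective _ hinj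
    rw [← hpP, ← hqQ] at h
    simpa [Polynomial.map_map, Polynomial.map_comp, ← IsScalarTower.algebraMap_eq] using h
  have hψ : (ψ : B →+* k).comp (algebraMap k B) = RingHom.id k := by
    ext x; simp
  simpa [Polynomial.map_map, Polynomial.map_comp, hψ] using
    congrArg (Polynomial.map (ψ : B →+* k)) key

/-- Eigenvectors of a field endomorphism `φ` that are linearly dependent over a `φ`-stable
subfield `L` have two eigenvalues differing by a factor `φ c / c` with `c ∈ L`. -/
theorem exists_eigenvalue_relation_of_sum_eq_zero {F J : Type*} [Field F] (φ : F →+* F)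
    (L : Subfield F) (hL : ∀ x ∈ L, φ x ∈ L) (m A : J → F) (hm : ∀ j, m j ≠ 0)
    (hA : ∀ j, A j ∈ L) (hφ : ∀ j, φ (m j) = A j * m j)
    (s : Finset J) (l : J → F) (hs : s.Nonempty)
    (hl : ∀ j ∈ s, l j ∈ L ∧ l j ≠ 0) (hsum : ∑ j ∈ s, l j * m j = 0) :
    ∃ i j, i ≠ j ∧ ∃ c ∈ L, c ≠ 0 ∧ A i * φ c = A j * c := by
  classical
  induction s using Finset.strongInduction generalizing l with
  | H s ih =>
    obtain ⟨i, hi⟩ := hs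
    let l' : J → F := fun j => φ (l j) * A j * l i - A i * φ (l i) * l j
    have hsum' : ∑ j ∈ s, l' j * m j = 0 := by
      have h1 : ∑ j ∈ s, φ (l j) * A j * m j = 0 := by
        rw [← map_zero φ, ← hsum, map_sum]
        refine Finset.sum_congr rfl fun j _ => ?_
        rw [map_mul, hφ, mul_assoc]
      calc ∑ j ∈ s, l' j * m j
          = l i * ∑ j ∈ s, φ (l j) * A j * m j - A i * φ (l i) * ∑ j ∈ s, l j * m j := by
            rw [Finset.mul_sum, Finset.mul_sum, ← Finset.sum_sub_distrib]
            exact Finset.sum_congr rfl fun j _ => by simp only [l']; ring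
        _ = 0 := by rw [h1, hsum]; ring
    by_cases hne : (s.filter fun j => l' j ≠ 0).Nonempty
    · refine ih _ ?_ l' hne ?_ ?_
      · refine Finset.filter_ssubset.2 ⟨i, hi, ?_⟩
        simp only [l', not_not]
        ring
      · intro j hj
        obtain ⟨hj, hj'⟩ := Finset.mem_filter.1 hj
        have hij := (hl i hi).1
        have hjj := (hl j hj).1
        exact ⟨L.sub_mem (L.mul_mem (L.mul_mem (hL _ hjj) (hA j)) hij)
          (L.mul_mem (L.mul_mem (hA i) (hL _ hij)) hjj), hj'⟩
      · refine (Finset.sum_subset (Finset.filter_subset _ _) fun j hj hj' => ?_).trans hsum'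
        have : l' j = 0 := by
          by_contra h0
          exact hj' (Finset.mem_filter.2 ⟨hj, h0⟩)
        rw [this, zero_mul]
    · obtain ⟨j, hj, hji⟩ : ∃ j ∈ s, j ≠ i := by
        by_contra! hall
        rw [Finset.sum_eq_single_of_mem i hi fun j hj hji => absurd (hall j hj) hji] at hsum
        exact mul_ne_zero (hl i hi).2 (hm i) hsum
      have h0 : l' j = 0 := by
        by_contra h0
        exact hne ⟨j, Finset.mem_filter.2 ⟨hj, h0⟩⟩
      have hi0 := (hl i hi).2
      have hφi : φ (l i) ≠ 0 := (map_ne_zero φ).2 hi0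
      refine ⟨j, i, hji, l j / l i, L.div_mem (hl j hj).1 (hl i hi).1,
        div_ne_zero (hl j hj).2 hi0, ?_⟩
      rw [map_div₀]
      field_simp
      simp only [l'] at h0
      linear_combination h0

/-- A field endomorphism as an algebra homomorphism over its field of constants. -/
def RingHom.toAlgHomEqLocus {F : Type*} [Field F] (φ : F →+* F) :
    F →ₐ[φ.eqLocusField (RingHom.id F)] F where
  __ := φ
  commutes' x := x.2

open Polynomial in
/-- An element with infinite orbit under `φ` is transcendental over the `φ`-constants. -/
theorem transcendental_eqLocusField_of_iterate_ne {F : Type*} [Field F] (φ : F →+* F) (z : F)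
    (h : ∀ n : ℕ, 1 ≤ n → (⇑φ)^[n] z ≠ z) :
    Transcendental (φ.eqLocusField (RingHom.id F)) z := by
  rw [transcendental_iff]
  intro p hp
  by_contra hp0
  have hlt (m n : ℕ) (hmn : m < n) : (⇑φ)^[m] z ≠ (⇑φ)^[n] z := by
    intro he
    obtain ⟨d, rfl⟩ := Nat.exists_eq_add_of_lt hmn
    rw [add_assoc, Function.iterate_add_apply] at he
    exact h (d + 1) (by omega) (φ.injective.iterate m he).symm
  have hinj : Function.Injective fun n : ℕ => (⇑φ)^[n] z := by
    intro m n he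
    rcases lt_trichotomy m n with hmn | hmn | hmn
    · exact absurd he (hlt m n hmn)
    · exact hmn
    · exact absurd he.symm (hlt n m hmn)
  have hroot (n : ℕ) : aeval ((⇑φ)^[n] z) p = 0 := by
    induction n with
    | zero => exact hp
    | succ n ih =>
      rw [Function.iterate_succ_apply']
      have := aeval_algHom_apply φ.toAlgHomEqLocus ((⇑φ)^[n] z) p
      rw [ih, map_zero] at this
      exact this
  refine Set.infinite_range_of_injective hinj ((p.rootSet_finite F).subset ?_)
  rintro _ ⟨n, rfl⟩
  exact mem_rootSet.2 ⟨hp0, hroot n⟩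

open Polynomial in
/-- Every element of the field generated by `z` and the `φ`-constants is a quotient of polynomials
in `z` with `φ`-constant coefficients. -/
theorem exists_aeval_div_of_mem_closure {F : Type*} [Field F] (φ : F →+* F) (z : F) {x : F}
    (hx : x ∈ Subfield.closure (insert z {x : F | φ x = x})) :
    ∃ P Q : (φ.eqLocusField (RingHom.id F))[X], x = aeval z P / aeval z Q := by
  rw [← IntermediateField.mem_adjoin_simple_iff]
  have : Subfield.closure (insert z {x : F | φ x = x}) ≤
      (IntermediateField.adjoin (φ.eqLocusField (RingHom.id F)) {z}).toSubfield := by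
    rw [Subfield.closure_le]
    rintro y (rfl | hy)
    · exact IntermediateField.mem_adjoin_simple_self _ _
    · exact IntermediateField.algebraMap_mem _ (⟨y, hy⟩ : φ.eqLocusField (RingHom.id F))
  exact this hx

open Polynomial in
/-- A ring homomorphism fixing constants acts on embedded polynomials by substitution. -/
theorem RatFunc.map_algebraMap_eq_comp {k F : Type*} [Field k] [Field F] (ι : RatFunc k →+* F)
    (θ : F →+* F) (hC : ∀ c : k, θ (ι (RatFunc.C c)) = ι (RatFunc.C c)) (l : k[X])
    (hX : θ (ι RatFunc.X) = ι (algebraMap k[X] (RatFunc k) l)) (p : k[X]) :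
    θ (ι (algebraMap k[X] (RatFunc k) p)) = ι (algebraMap k[X] (RatFunc k) (p.comp l)) := by
  have : (θ.comp ι).comp (algebraMap k[X] (RatFunc k)) =
      (ι.comp (algebraMap k[X] (RatFunc k))).comp (compRingHom l) := by
    apply Polynomial.ringHom_ext
    · intro c
      simpa using hC c
    · simpa using hX
  exact DFunLike.congr_fun this p

open Polynomial in
/-- A multiplicative cocycle with values in rational functions that becomes trivial over the field
generated by `z` and the `φ`-constants is already trivial over the rational functions. -/
theorem exists_ratFunc_eigenvector_of_mem_closure {k F : Type*} [Field k] [IsAlgClosed k] [Field F]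
    (φ : F →+* F) (ι : RatFunc k →+* F)
    (hC : ∀ c : k, φ (ι (RatFunc.C c)) = ι (RatFunc.C c)) (l : k[X])
    (hX : φ (ι RatFunc.X) = ι (algebraMap k[X] (RatFunc k) l))
    (hniter : ∀ n : ℕ, 1 ≤ n → (⇑φ)^[n] (ι RatFunc.X) ≠ ι RatFunc.X)
    (r : RatFunc k) {c : F} (hc : c ≠ 0)
    (hcL : c ∈ Subfield.closure (insert (ι RatFunc.X) {x : F | φ x = x}))
    (h : φ c = ι r * c) : ∃ b : RatFunc k, b ≠ 0 ∧ φ (ι b) = ι r * ι b := by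
  let K := φ.eqLocusField (RingHom.id F)
  let T : k →+* K := (ι.comp RatFunc.C).codRestrict K hC
  let : Algebra k K := T.toAlgebra
  have htr := transcendental_eqLocusField_of_iterate_ne φ _ hniter
  obtain ⟨P, Q, hPQ⟩ := exists_aeval_div_of_mem_closure φ _ hcL
  have hP : aeval (ι RatFunc.X) P ≠ 0 := by
    rintro h0; apply hc; rw [hPQ, h0, zero_div]
  have hQ : aeval (ι RatFunc.X) Q ≠ 0 := by
    rintro h0; apply hc; rw [hPQ, h0, div_zero]
  have haev (p : k[X]) : aeval (ι RatFunc.X) (p.map (algebraMap k K)) =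
      ι (algebraMap k[X] (RatFunc k) p) := by
    have : ((aeval (ι RatFunc.X) : K[X] →ₐ[K] F) : K[X] →+* F).comp
        (mapRingHom (algebraMap k K)) = ι.comp (algebraMap k[X] (RatFunc k)) := by
      apply Polynomial.ringHom_ext
      · intro c
        simp only [RingHom.comp_apply, coe_mapRingHom, Polynomial.map_C, RingHom.coe_coe, aeval_C,
          RatFunc.algebraMap_C]
        rfl
      · simp
    exact DFunLike.congr_fun this p
  have hφ (p : K[X]) : φ (aeval (ι RatFunc.X) p) =
      aeval (ι RatFunc.X) (p.comp (l.map (algebraMap k K))) := by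
    rw [aeval_comp, haev, ← hX]
    exact (aeval_algHom_apply φ.toAlgHomEqLocus (ι RatFunc.X) p).symm
  have hιne {p : k[X]} (hp : p ≠ 0) : ι (algebraMap k[X] (RatFunc k) p) ≠ 0 :=
    (map_ne_zero ι).2 (RatFunc.algebraMap_ne_zero hp)
  have hr : ι r = ι (algebraMap k[X] (RatFunc k) r.num) /
      ι (algebraMap k[X] (RatFunc k) r.denom) := by
    rw [← map_div₀, RatFunc.num_div_denom]
  have hd := hιne r.denom_ne_zero
  have hφQ : φ (aeval (ι RatFunc.X) Q) ≠ 0 := (map_ne_zero φ).2 hQ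
  have hpoly : P.comp (l.map (algebraMap k K)) * Q * r.denom.map (algebraMap k K) =
      r.num.map (algebraMap k K) * P * Q.comp (l.map (algebraMap k K)) := by
    apply transcendental_iff_injective.1 htr
    simp only [map_mul]
    rw [haev, haev, ← hφ, ← hφ]
    rw [hPQ, map_div₀, hr] at h
    field_simp at h
    linear_combination h
  obtain ⟨P', Q', hP', hQ', h'⟩ := Polynomial.exists_comp_mul_eq_of_map r.num r.denom l
    (fun h0 => hP (by rw [h0, map_zero])) (fun h0 => hQ (by rw [h0, map_zero])) hpoly
  refine ⟨algebraMap k[X] (RatFunc k) P' / algebraMap k[X] (RatFunc k) Q',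
    div_ne_zero (RatFunc.algebraMap_ne_zero hP') (RatFunc.algebraMap_ne_zero hQ'), ?_⟩
  have h1 := hιne hQ'
  have h2 := (map_ne_zero φ).2 h1
  have h3 := congrArg (fun p => ι (algebraMap k[X] (RatFunc k) p)) h'
  simp only [map_mul] at h3
  rw [← RatFunc.map_algebraMap_eq_comp ι φ hC l hX,
    ← RatFunc.map_algebraMap_eq_comp ι φ hC l hX] at h3
  rw [map_div₀, map_div₀, hr]
  field_simp
  linear_combination h3

/-- An integer multiplicative relation among elements of a field, with coefficient in a subfield,
makes the elements algebraically dependent over that subfield. -/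
theorem not_algebraicIndependent_of_prod_zpow_mem {F : Type*} [Field F] (L : Subfield F)
    (g : ℕ → F) (hg : ∀ n, g n ≠ 0) (t : ℕ) (nv : Fin t → ℤ) (hnv : ∃ i, nv i ≠ 0)
    (h : ∏ i : Fin t, g i ^ nv i ∈ L) : ¬ AlgebraicIndependent L g := by
  intro hind
  obtain ⟨i₀, hi₀⟩ := hnv
  let e (s : ℤ) : ℕ →₀ ℕ := ∑ i : Fin t, Finsupp.single (i : ℕ) (s * nv i).toNat
  have hmon (s : ℤ) (c : L) : MvPolynomial.aeval g (MvPolynomial.monomial (e s) c) =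
      c * ∏ i : Fin t, g i ^ (s * nv i).toNat := by
    simp only [e, MvPolynomial.monomial_sum_index, map_mul, map_prod, MvPolynomial.aeval_monomial,
      MvPolynomial.aeval_C]
    simp
    exact Or.inl rfl
  have he (s : ℤ) : e s (i₀ : ℕ) = (s * nv i₀).toNat := by
    simp [e, Finsupp.finsetSum_apply, Finsupp.single_apply, ← Fin.ext_iff]
  have heq : MvPolynomial.aeval g (MvPolynomial.monomial (e 1) (1 : L)) =
      MvPolynomial.aeval g (MvPolynomial.monomial (e (-1)) (⟨_, h⟩ : L)) := by
    rw [hmon, hmon, ← Finset.prod_mul_distrib, OneMemClass.coe_one, one_mul]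
    refine Finset.prod_congr rfl fun i _ => ?_
    rw [← zpow_natCast, ← zpow_natCast, ← zpow_add₀ (hg i)]
    congr 1
    omega
  have := congrArg (MvPolynomial.coeff (e 1)) (algebraicIndependent_iff_injective_aeval.1 hind heq)
  rw [MvPolynomial.coeff_monomial, MvPolynomial.coeff_monomial, if_pos rfl, if_neg] at this
  · exact one_ne_zero this
  · intro h0
    have := DFunLike.congr_fun h0 (i₀ : ℕ)
    rw [he, he] at this
    omega

/-- Algebraically dependent eigenvectors of a field endomorphism `φ` over a `φ`-stable subfield
yield an integer multiplicative relation among the eigenvalues. -/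
theorem exists_prod_zpow_of_not_algebraicIndependent {F : Type*} [Field F] (φ : F →+* F)
    (L : Subfield F) (hL : ∀ x ∈ L, φ x ∈ L) (g A : ℕ → F) (hg : ∀ n, g n ≠ 0)
    (hA : ∀ n, A n ∈ L) (hA0 : ∀ n, A n ≠ 0) (hφ : ∀ n, φ (g n) = A n * g n)
    (h : ¬ AlgebraicIndependent L g) :
    ∃ t : ℕ, 1 ≤ t ∧ ∃ nv : Fin t → ℤ, (∃ i, nv i ≠ 0) ∧ ∃ c ∈ L, c ≠ 0 ∧
      φ c = (∏ i : Fin t, A i ^ nv i) * c := by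
  rw [algebraicIndependent_iff] at h
  push Not at h
  obtain ⟨p, hp, hp0⟩ := h
  rw [MvPolynomial.aeval_def, MvPolynomial.eval₂_eq] at hp
  obtain ⟨d, e, hde, c, hcL, hc0, hc⟩ := exists_eigenvalue_relation_of_sum_eq_zero φ L hL
    (fun d : ℕ →₀ ℕ => ∏ i ∈ d.support, g i ^ d i) (fun d => ∏ i ∈ d.support, A i ^ d i)
    (fun d => Finset.prod_ne_zero_iff.2 fun i _ => pow_ne_zero _ (hg i))
    (fun d => prod_mem fun i _ => pow_mem (hA i) _)
    (fun d => by
      rw [map_prod, ← Finset.prod_mul_distrib]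
      exact Finset.prod_congr rfl fun i _ => by rw [map_pow, hφ, mul_pow])
    p.support (fun d => algebraMap L F (p.coeff d)) (MvPolynomial.support_nonempty.2 hp0)
    (fun d hd => ⟨(p.coeff d).2,
      (map_ne_zero (algebraMap L F)).2 (MvPolynomial.mem_support_iff.1 hd)⟩)
    hp
  obtain ⟨i₀, hi₀⟩ := DFunLike.ne_iff.1 hde
  have hsupp : ∃ t, d.support ⊆ Finset.range t ∧ e.support ⊆ Finset.range t ∧ i₀ < t := by
    obtain ⟨t, ht⟩ := (d.support ∪ e.support ∪ {i₀}).exists_nat_subset_range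
    refine ⟨t, fun x hx => ht (by simp [Finsupp.mem_support_iff.1 hx]),
      fun x hx => ht (by simp [Finsupp.mem_support_iff.1 hx]), Finset.mem_range.1 (ht (by simp))⟩
  obtain ⟨t, hdt, het, hit⟩ := hsupp
  have hprod (d : ℕ →₀ ℕ) (hd : d.support ⊆ Finset.range t) :
      ∏ i ∈ d.support, A i ^ d i = ∏ i : Fin t, A i ^ d i := by
    rw [← Finset.prod_range (fun i => A i ^ d i)]
    exact Finsupp.prod_of_support_subset d hd (fun i n => A i ^ n) (by simp)
  simp only [hprod d hdt, hprod e het] at hc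
  refine ⟨t, by omega, fun i => (e i : ℤ) - d i, ⟨⟨i₀, hit⟩, ?_⟩, c, hcL, hc0, ?_⟩
  · simp only
    omega
  · have hd0 : ∏ i : Fin t, A i ^ d i ≠ 0 :=
      Finset.prod_ne_zero_iff.2 fun i _ => pow_ne_zero _ (hA0 i)
    simp only [zpow_sub₀ (hA0 _), zpow_natCast, Finset.prod_div_distrib]
    field_simp
    linear_combination hc


/-- Criterion for `σ`-algebraic dependence of a solution of a first-order linear
`φ`-difference equation `φ(y) = a·y` over `ℂ(z)`: the solution `f` is `σ`-algebraically
dependent over `𝐤(z)` (the field generated by the `φ`-constants `𝐤` and `z`) if and only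
if `φ(a)^{n₀} σ(a)^{n₁} ⋯ σ^{t-1}(a)^{n_{t-1}} = φ(b)/b` for some nonzero `b ∈ ℂ(z)` and
some integers `n₀, …, n_{t-1}` not all zero. -/
theorem sigma_algebraic_dependence_criterion
    {F : Type*} [Field F]
    (φ σ : F →+* F) (hcomm : φ.comp σ = σ.comp φ)
    (ι : RatFunc ℂ →+* F) (hinj : Function.Injective ι)
    (hφC : ∀ c : ℂ, φ (ι (RatFunc.C c)) = ι (RatFunc.C c))
    (hσC : ∀ c : ℂ, σ (ι (RatFunc.C c)) = ι (RatFunc.C c))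
    (a₁ a₂ b₁ b₂ : ℂ) (hne : a₁ * b₁ ≠ 0)
    (hφX : φ (ι RatFunc.X) = ι (RatFunc.C a₁ * RatFunc.X + RatFunc.C a₂))
    (hσX : σ (ι RatFunc.X) = ι (RatFunc.C b₁ * RatFunc.X + RatFunc.C b₂))
    (hniter : ∀ n : ℕ, 1 ≤ n → (⇑φ)^[n] (ι RatFunc.X) ≠ ι RatFunc.X)
    (a : RatFunc ℂ) (ha : a ≠ 0) (f : F) (hf : f ≠ 0)
    (heq : φ f = ι a * f) :
    (¬ AlgebraicIndependent
        ↥(Subfield.closure (insert (ι RatFunc.X) {x : F | φ x = x}))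
        (fun n : ℕ => (⇑σ)^[n] f)) ↔
    ∃ b : RatFunc ℂ, b ≠ 0 ∧ ∃ t : ℕ, 1 ≤ t ∧ ∃ nv : Fin t → ℤ, (∃ i, nv i ≠ 0) ∧
      (∏ i : Fin t, ((⇑σ)^[(i : ℕ)] (ι a)) ^ (nv i)) = φ (ι b) * (ι b)⁻¹ := by
  set L := Subfield.closure (insert (ι RatFunc.X) {x : F | φ x = x}) with hLdef
  have hφX' : φ (ι RatFunc.X) = ι (algebraMap (Polynomial ℂ) (RatFunc ℂ)
      (Polynomial.C a₁ * Polynomial.X + Polynomial.C a₂)) := by simpa using hφX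
  have hσX' : σ (ι RatFunc.X) = ι (algebraMap (Polynomial ℂ) (RatFunc ℂ)
      (Polynomial.C b₁ * Polynomial.X + Polynomial.C b₂)) := by simpa using hσX
  have hconst {x : F} (hx : φ x = x) : x ∈ L :=
    Subfield.subset_closure (Set.mem_insert_of_mem _ hx)
  have hXL : ι RatFunc.X ∈ L := Subfield.subset_closure (Set.mem_insert _ _)
  have hιL (r : RatFunc ℂ) : ι r ∈ L := by
    have hpol (p : Polynomial ℂ) : ι (algebraMap (Polynomial ℂ) (RatFunc ℂ) p) ∈ L := by
      induction p using Polynomial.induction_on' with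
      | add p q hp hq => rw [map_add, map_add]; exact add_mem hp hq
      | monomial n c =>
        rw [← Polynomial.C_mul_X_pow_eq_monomial]
        simp only [map_mul, map_pow, RatFunc.algebraMap_C, RatFunc.algebraMap_X]
        exact mul_mem (hconst (hφC c)) (pow_mem hXL n)
    rw [← RatFunc.num_div_denom r, map_div₀]
    exact div_mem (hpol _) (hpol _)
  have hL : ∀ x ∈ L, φ x ∈ L := by
    have : L ≤ L.comap φ := by
      rw [hLdef, Subfield.closure_le]
      rintro y (rfl | hy)
      · change φ (ι RatFunc.X) ∈ L
        rw [hφX]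
        exact hιL _
      · change φ y ∈ L
        rw [show φ y = y from hy]
        exact hconst hy
    exact this
  have hσι (r : RatFunc ℂ) : σ (ι r) ∈ ι.fieldRange := by
    rw [← RatFunc.num_div_denom r, map_div₀, map_div₀,
      RatFunc.map_algebraMap_eq_comp ι σ hσC _ hσX', RatFunc.map_algebraMap_eq_comp ι σ hσC _ hσX']
    exact div_mem ⟨_, rfl⟩ ⟨_, rfl⟩
  have hrange (n : ℕ) : (⇑σ)^[n] (ι a) ∈ ι.fieldRange := by
    induction n with
    | zero => exact ⟨a, rfl⟩
    | succ n ih =>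
      obtain ⟨r, hr⟩ := ih
      rw [Function.iterate_succ_apply', ← hr]
      exact hσι r
  have hA (n : ℕ) : (⇑σ)^[n] (ι a) ∈ L := by
    obtain ⟨r, hr⟩ := hrange n
    rw [← hr]
    exact hιL r
  have hne0 {x : F} (hx : x ≠ 0) (n : ℕ) : (⇑σ)^[n] x ≠ 0 := by
    rw [← RingHom.coe_pow]
    exact (map_ne_zero _).2 hx
  have hιa : ι a ≠ 0 := (map_ne_zero ι).2 ha
  have hφf (n : ℕ) : φ ((⇑σ)^[n] f) = (⇑σ)^[n] (ι a) * (⇑σ)^[n] f := by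
    have hc : Function.Commute φ σ := fun x => DFunLike.congr_fun hcomm x
    rw [hc.iterate_right n f, heq, ← RingHom.coe_pow, map_mul]
  constructor
  · intro h
    obtain ⟨t, ht, nv, hnv, c, hcL, hc0, hc⟩ := exists_prod_zpow_of_not_algebraicIndependent φ L hL
      _ _ (hne0 hf) hA (hne0 hιa) hφf h
    obtain ⟨r, hr⟩ : ∏ i : Fin t, ((⇑σ)^[(i : ℕ)] (ι a)) ^ nv i ∈ ι.fieldRange :=
      prod_mem fun i _ => zpow_mem (hrange i) _
    rw [← hr] at hc
    obtain ⟨b, hb, hb'⟩ := exists_ratFunc_eigenvector_of_mem_closure φ ι hφC _ hφX' hniter r hc0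
      hcL hc
    refine ⟨b, hb, t, ht, nv, hnv, ?_⟩
    rw [← hr, hb', mul_inv_cancel_right₀ ((map_ne_zero ι).2 hb)]
  · rintro ⟨b, hb, t, -, nv, hnv, h⟩
    have hιb : ι b ≠ 0 := (map_ne_zero ι).2 hb
    have hφb : φ (ι b) ≠ 0 := (map_ne_zero φ).2 hιb
    refine not_algebraicIndependent_of_prod_zpow_mem L _ (hne0 hf) t nv hnv ?_
    have hfix : φ ((∏ i : Fin t, ((⇑σ)^[(i : ℕ)] f) ^ nv i) / ι b) =
        (∏ i : Fin t, ((⇑σ)^[(i : ℕ)] f) ^ nv i) / ι b := by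
      simp only [map_div₀, map_prod, map_zpow₀, hφf, mul_zpow, Finset.prod_mul_distrib, h]
      field_simp
    have := L.mul_mem (hconst hfix) (hιL b)
    rwa [div_mul_cancel₀ _ hιb] at this
end
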